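/- arXiv:math/0703508 — 3 statements merged into one kernel-verified Lean document; each statement's English description precedes it below -/
import Mathlib

section
/- There exist a constant C and x₀ ≥ 2 such that for all x ≥ x₀, | Δ(x) − 1/√x | ≤ C/(√x·(log x)³). (That is, Δ(x) = 1/√x + O(1/(√x (log x)³)).) -/
open Filter

/-- `Δ(x) = ∑_{p ≤ x} log p / (p-1) - ∑_{n ≤ x} Λ(n)/n`. -/
noncomputable def Delta (x : ℝ) : ℝ :=
  (∑ p ∈ (Finset.range (⌊x⌋₊ + 1)).filter Nat.Prime, Real.log p / ((p : ℝ) - 1)) -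
    ∑ n ∈ Finset.Icc 1 ⌊x⌋₊, ArithmeticFunction.vonMangoldt n / n

/-- The entire function `(s - 1) ζ(s)`. -/
noncomputable def zetaSubOneMul : ℂ → ℂ :=
  Function.update (fun s ↦ (s - 1) * riemannZeta s) 1 1

lemma zetaSubOneMul_one : zetaSubOneMul 1 = 1 := by simp [zetaSubOneMul]

lemma zetaSubOneMul_of_ne {s : ℂ} (hs : s ≠ 1) :
    zetaSubOneMul s = (s - 1) * riemannZeta s := by
  simp [zetaSubOneMul, hs]

lemma differentiable_zetaSubOneMul : Differentiable ℂ zetaSubOneMul := by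
  intro s
  rcases ne_or_eq s 1 with hs | rfl
  · refine DifferentiableAt.congr_of_eventuallyEq (f := fun s ↦ (s - 1) * riemannZeta s) ?_ ?_
    · exact (by fun_prop : DifferentiableAt ℂ (fun s : ℂ ↦ s - 1) s).mul
        (differentiableAt_riemannZeta hs)
    · filter_upwards [eventually_ne_nhds hs] with t ht using zetaSubOneMul_of_ne ht
  · refine (Complex.analyticAt_of_differentiable_on_punctured_nhds_of_continuousAt
      ?_ ?_).differentiableAt
    · filter_upwards [self_mem_nhdsWithin] with t ht
      refine DifferentiableAt.congr_of_eventuallyEq (f := fun s ↦ (s - 1) * riemannZeta s) ?_ ?_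
      · exact (by fun_prop : DifferentiableAt ℂ (fun s : ℂ ↦ s - 1) t).mul
          (differentiableAt_riemannZeta ht)
      · filter_upwards [eventually_ne_nhds ht] with t ht using zetaSubOneMul_of_ne ht
    · rw [zetaSubOneMul, continuousAt_update_same]
      exact riemannZeta_residue_one

lemma zetaSubOneMul_ne_zero {s : ℂ} (hs : 1 ≤ s.re) : zetaSubOneMul s ≠ 0 := by
  rcases ne_or_eq s 1 with h | rfl
  · rw [zetaSubOneMul_of_ne h]
    exact mul_ne_zero (sub_ne_zero.mpr h) (riemannZeta_ne_zero_of_one_le_re hs)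
  · simp [zetaSubOneMul_one]

/-- `(s - 1)` times the difference between `(n + 1) ^ (-s)` and `∫ u in n+1..n+2, u ^ (-s)`. -/
noncomputable def zetaRemainderTerm (n : ℕ) (s : ℂ) : ℂ :=
  (s - 1) * ((n + 1 : ℝ) : ℂ) ^ (-s) + ((n + 2 : ℝ) : ℂ) ^ (1 - s) - ((n + 1 : ℝ) : ℂ) ^ (1 - s)

lemma differentiable_zetaRemainderTerm (n : ℕ) : Differentiable ℂ (zetaRemainderTerm n) := by
  have h1 : ((n + 1 : ℝ) : ℂ) ≠ 0 := by exact_mod_cast (by positivity : (n + 1 : ℝ) ≠ 0)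
  have h2 : ((n + 2 : ℝ) : ℂ) ≠ 0 := by exact_mod_cast (by positivity : (n + 2 : ℝ) ≠ 0)
  intro s
  unfold zetaRemainderTerm
  refine ((DifferentiableAt.mul (by fun_prop) ?_).add ?_).sub ?_ <;>
  exact DifferentiableAt.const_cpow (by fun_prop) (Or.inl (by assumption))

lemma norm_cpow_neg_sub_cpow_neg_le {m u θ : ℝ} (hm : 0 < m) (hu : u ∈ Set.Icc m (m + 1))
    (hθ : θ ∈ Set.Icc (0 : ℝ) 1) {s : ℂ} (hs : 0 < s.re) :
    ‖(u : ℂ) ^ (-s) - (m : ℂ) ^ (-s)‖ ≤ 2 * ‖s‖ ^ θ * m ^ (-s.re - θ) := by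
  have hs0 : s ≠ 0 := fun h ↦ by simp [h] at hs
  have hu0 : 0 < u := hm.trans_le hu.1
  have bound1 : ‖(u : ℂ) ^ (-s) - (m : ℂ) ^ (-s)‖ ≤ ‖s‖ * m ^ (-s.re - 1) := by
    have := norm_image_sub_le_of_norm_deriv_le_segment' (a := m) (b := m + 1)
      (f := fun v : ℝ ↦ (v : ℂ) ^ (-s)) (f' := fun v : ℝ ↦ -s * (v : ℂ) ^ (-s - 1))
      (C := ‖s‖ * m ^ (-s.re - 1))
      (fun v hv ↦ (hasDerivAt_ofReal_cpow_const (hm.trans_le hv.1).ne'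
        (neg_ne_zero.mpr hs0)).hasDerivWithinAt)
      (fun v hv ↦ by
        rw [norm_mul, norm_neg, Complex.norm_cpow_eq_rpow_re_of_pos (hm.trans_le hv.1)]
        gcongr
        simp only [Complex.sub_re, Complex.neg_re, Complex.one_re]
        exact Real.rpow_le_rpow_of_nonpos hm hv.1 (by linarith)) u hu
    refine this.trans (mul_le_of_le_one_right (by positivity) (by linarith [hu.2]))
  have bound2 : ‖(u : ℂ) ^ (-s) - (m : ℂ) ^ (-s)‖ ≤ 2 * m ^ (-s.re) := by
    refine (norm_sub_le _ _).trans ?_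
    rw [Complex.norm_cpow_eq_rpow_re_of_pos hm, Complex.norm_cpow_eq_rpow_re_of_pos hu0,
      Complex.neg_re]
    linarith [Real.rpow_le_rpow_of_nonpos hm hu.1 (by linarith : -s.re ≤ 0)]
  have key : ∀ a A B : ℝ, 0 ≤ a → 0 ≤ A → 0 ≤ B → a ≤ A → a ≤ B → a ≤ A ^ θ * B ^ (1 - θ) := by
    intro a A B ha hA hB h1 h2
    calc a = a ^ θ * a ^ (1 - θ) := by
            rw [← Real.rpow_add' ha (by simp)]; simp
      _ ≤ _ := by
        have := hθ.1
        have := hθ.2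
        gcongr
  refine (key _ _ _ (norm_nonneg _) (by positivity) (by positivity) bound1 bound2).trans ?_
  rw [Real.mul_rpow (by positivity) (by positivity), Real.mul_rpow (by positivity) (by positivity),
    ← Real.rpow_mul hm.le, ← Real.rpow_mul hm.le]
  have h2 : (2 : ℝ) ^ (1 - θ) ≤ 2 := by
    conv_rhs => rw [← Real.rpow_one 2]
    exact Real.rpow_le_rpow_of_exponent_le (by norm_num) (by linarith [hθ.1])
  calc ‖s‖ ^ θ * m ^ ((-s.re - 1) * θ) * (2 ^ (1 - θ) * m ^ (-s.re * (1 - θ)))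
      = 2 ^ (1 - θ) * ‖s‖ ^ θ * (m ^ ((-s.re - 1) * θ) * m ^ (-s.re * (1 - θ))) := by ring
    _ = 2 ^ (1 - θ) * ‖s‖ ^ θ * m ^ (-s.re - θ) := by
      rw [← Real.rpow_add hm]; ring_nf
    _ ≤ _ := by gcongr

lemma norm_zetaRemainderTerm_le (n : ℕ) {θ : ℝ} (hθ : θ ∈ Set.Icc (0 : ℝ) 1) {s : ℂ}
    (hs : 0 < s.re) :
    ‖zetaRemainderTerm n s‖ ≤ ‖s - 1‖ * (2 * ‖s‖ ^ θ * (n + 1 : ℝ) ^ (-s.re - θ)) := by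
  rcases eq_or_ne s 1 with rfl | h1
  · simp [zetaRemainderTerm]
  have hm : (0 : ℝ) < n + 1 := by positivity
  have := norm_image_sub_le_of_norm_deriv_le_segment' (a := (n + 1 : ℝ)) (b := n + 2)
      (f := fun v : ℝ ↦ (v : ℂ) ^ (1 - s) - (v : ℂ) * ((1 - s) * ((n + 1 : ℝ) : ℂ) ^ (-s)))
      (f' := fun v : ℝ ↦ (1 - s) * (v : ℂ) ^ (1 - s - 1)
        - 1 * ((1 - s) * ((n + 1 : ℝ) : ℂ) ^ (-s)))
      (C := ‖s - 1‖ * (2 * ‖s‖ ^ θ * (n + 1 : ℝ) ^ (-s.re - θ)))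
      (fun v hv ↦ ((hasDerivAt_ofReal_cpow_const (hm.trans_le hv.1).ne'
        (sub_ne_zero.mpr h1.symm)).sub
          (Complex.ofRealCLM.hasDerivAt.mul_const _)).hasDerivWithinAt)
      (fun v hv ↦ by
        rw [one_mul, ← mul_sub, norm_mul, norm_sub_rev 1 s, sub_sub_cancel_left]
        gcongr
        exact norm_cpow_neg_sub_cpow_neg_le hm ⟨hv.1, by linarith [hv.2]⟩ hθ hs)
      (n + 2) (by constructor <;> linarith)
  convert this using 1
  · congr 1
    simp only [zetaRemainderTerm]
    push_cast
    ring
  · ring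

lemma summable_nat_add_one_rpow {a : ℝ} (ha : a < -1) :
    Summable fun n : ℕ ↦ (n + 1 : ℝ) ^ a := by
  simpa using (summable_nat_add_iff 1).mpr (Real.summable_nat_rpow.mpr ha)

lemma hasSum_zetaRemainderTerm_of_one_lt_re {s : ℂ} (hs : 1 < s.re) :
    HasSum (fun n ↦ zetaRemainderTerm n s) (zetaSubOneMul s - 1) := by
  have hs1 : s ≠ 1 := fun h ↦ by simp [h] at hs
  have hsum : Summable (fun n ↦ zetaRemainderTerm n s) := by
    refine Summable.of_norm_bounded (g := fun n : ℕ ↦ ‖s - 1‖ *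
      (2 * ‖s‖ ^ (0 : ℝ) * (n + 1 : ℝ) ^ (-s.re - 0)))
      (((summable_nat_add_one_rpow (by linarith)).mul_left _).mul_left _)
      (fun n ↦ norm_zetaRemainderTerm_le n (by simp) (by linarith))
  rw [hsum.hasSum_iff_tendsto_nat]
  have h1 : Tendsto (fun N : ℕ ↦ ∑ n ∈ Finset.range N, 1 / ((n : ℂ) + 1) ^ s) atTop
      (nhds (riemannZeta s)) := by
    rw [zeta_eq_tsum_one_div_nat_add_one_cpow hs]
    refine (Summable.hasSum ?_).tendsto_sum_nat
    simpa using (summable_nat_add_iff 1).mpr (Complex.summable_one_div_nat_cpow.mpr hs)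
  have h2 : Tendsto (fun N : ℕ ↦ ((N + 1 : ℝ) : ℂ) ^ (1 - s)) atTop (nhds 0) := by
    rw [tendsto_zero_iff_norm_tendsto_zero]
    have : Tendsto (fun N : ℕ ↦ (N + 1 : ℝ) ^ (-(s.re - 1))) atTop (nhds 0) :=
      (tendsto_rpow_neg_atTop (by linarith)).comp
        (tendsto_atTop_add_const_right _ _ tendsto_natCast_atTop_atTop)
    refine this.congr fun N ↦ ?_
    rw [Complex.norm_cpow_eq_rpow_re_of_pos (by positivity)]
    simp
  have h3 := ((h1.const_mul (s - 1)).add h2).sub_const 1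
  rw [zetaSubOneMul_of_ne hs1]
  rw [add_zero] at h3
  refine h3.congr fun N ↦ ?_
  induction N with
  | zero => simp
  | succ N ih =>
    rw [Finset.sum_range_succ, Finset.sum_range_succ, ← ih]
    simp only [zetaRemainderTerm, Complex.cpow_neg]
    push_cast
    rw [add_assoc (N : ℂ) 1 1, one_add_one_eq_two]
    ring

lemma hasSum_zetaRemainderTerm {s : ℂ} (hs : 99 / 100 < s.re) :
    HasSum (fun n ↦ zetaRemainderTerm n s) (zetaSubOneMul s - 1) := by
  set R : ℝ := ‖s‖ + 3
  set V : Set ℂ := {z | 99 / 100 < z.re} ∩ Metric.ball 0 R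
  have hVo : IsOpen V := (isOpen_lt continuous_const Complex.continuous_re).inter Metric.isOpen_ball
  have hVc : IsPreconnected V :=
    ((convex_halfSpace_re_gt _).inter (convex_ball _ _)).isPreconnected
  set u : ℕ → ℝ := fun n ↦ (R + 1) * (2 * R ^ (1 / 50 : ℝ) * (n + 1 : ℝ) ^ (-101 / 100 : ℝ))
  have hu : Summable u := ((summable_nat_add_one_rpow (by norm_num)).mul_left _).mul_left _
  have hle : ∀ n, ∀ z ∈ V, ‖zetaRemainderTerm n z‖ ≤ u n := by
    rintro n z ⟨hz, hzR⟩
    simp only [Set.mem_ofPred_eq] at hz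
    rw [mem_ball_zero_iff] at hzR
    refine (norm_zetaRemainderTerm_le n (θ := 1 / 50) (by norm_num) (by linarith)).trans ?_
    have : ‖z - 1‖ ≤ R + 1 := (norm_sub_le _ _).trans (by simp; linarith)
    have : (1 : ℝ) ≤ n + 1 := by simp
    simp only [u]
    gcongr
    linarith
  have hd : DifferentiableOn ℂ (fun z ↦ ∑' n, zetaRemainderTerm n z) V :=
    Complex.differentiableOn_tsum_of_summable_norm hu
      (fun n ↦ (differentiable_zetaRemainderTerm n).differentiableOn) hVo hle
  have hd2 : DifferentiableOn ℂ (fun z ↦ zetaSubOneMul z - 1) V :=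
    (differentiable_zetaSubOneMul.sub_const 1).differentiableOn
  have h2 : (2 : ℂ) ∈ V := by
    refine ⟨by norm_num, ?_⟩
    rw [mem_ball_zero_iff]
    simp only [Complex.norm_ofNat, R]
    linarith [norm_nonneg s]
  have heq := (hd.analyticOnNhd hVo).eqOn_of_preconnected_of_eventuallyEq
    (hd2.analyticOnNhd hVo) hVc h2 (by
      filter_upwards [(isOpen_lt continuous_const Complex.continuous_re).mem_nhds
        (show (1 : ℝ) < (2 : ℂ).re by norm_num)] with z hz
      exact (hasSum_zetaRemainderTerm_of_one_lt_re hz).tsum_eq)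
  have hsV : s ∈ V := ⟨hs, by rw [mem_ball_zero_iff]; simp [R]⟩
  have := heq hsV
  simp only at this
  rw [← this]
  exact (Summable.of_norm_bounded hu fun n ↦ hle n s hsV).hasSum

lemma exists_norm_zetaSubOneMul_sub_one_le :
    ∃ C : ℝ, 0 < C ∧ ∀ s : ℂ, 99 / 100 < s.re →
      ‖zetaSubOneMul s - 1‖ ≤ C * ‖s - 1‖ * ‖s‖ ^ (1 / 50 : ℝ) := by
  have hsum := summable_nat_add_one_rpow (a := -101 / 100) (by norm_num)
  refine ⟨2 * ∑' n : ℕ, (n + 1 : ℝ) ^ (-101 / 100 : ℝ), ?_, fun s hs ↦ ?_⟩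
  · have := hsum.tsum_pos (fun n ↦ by positivity) 0 (by norm_num)
    positivity
  · have hs' := hasSum_zetaRemainderTerm hs
    rw [← hs'.tsum_eq]
    refine (tsum_of_norm_bounded (hsum.hasSum.mul_left (‖s - 1‖ * (2 * ‖s‖ ^ (1 / 50 : ℝ))))
      fun n ↦ (norm_zetaRemainderTerm_le n (θ := 1 / 50) (by norm_num)
        (by linarith)).trans ?_).trans_eq (by ring)
    have : (1 : ℝ) ≤ n + 1 := by simp
    rw [mul_assoc ‖s - 1‖]
    gcongr
    linarith

lemma exists_norm_riemannZeta_one_add_le :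
    ∃ C : ℝ, 0 < C ∧ ∀ x : ℝ, 0 < x → x ≤ 2 → ‖riemannZeta (1 + x)‖ ≤ C / x := by
  obtain ⟨C, hC, h⟩ := exists_norm_zetaSubOneMul_sub_one_le
  refine ⟨1 + 6 * C, by positivity, fun x hx hx2 ↦ ?_⟩
  have hne : (1 + x : ℂ) ≠ 1 := by simpa using hx.ne'
  have h1 := h (1 + x) (by simp; linarith)
  rw [zetaSubOneMul_of_ne hne, add_sub_cancel_left, Complex.norm_of_nonneg hx.le] at h1
  have h2 : ‖(1 + x : ℂ)‖ ^ (1 / 50 : ℝ) ≤ 3 := by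
    have : ‖(1 + x : ℂ)‖ ≤ 3 := (norm_add_le _ _).trans (by simp [abs_of_pos hx]; linarith)
    calc ‖(1 + x : ℂ)‖ ^ (1 / 50 : ℝ) ≤ 3 ^ (1 / 50 : ℝ) := by gcongr
      _ ≤ 3 ^ (1 : ℝ) := Real.rpow_le_rpow_of_exponent_le (by norm_num) (by norm_num)
      _ = 3 := by norm_num
  have h3 : C * x * ‖(1 + x : ℂ)‖ ^ (1 / 50 : ℝ) ≤ C * 2 * 3 := by gcongr
  rw [le_div_iff₀ hx]
  calc ‖riemannZeta (1 + x)‖ * x = ‖(x : ℂ) * riemannZeta (1 + x)‖ := by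
        rw [norm_mul, Complex.norm_of_nonneg hx.le, mul_comm]
    _ ≤ ‖(x : ℂ) * riemannZeta (1 + x) - 1‖ + ‖(1 : ℂ)‖ := by
        simpa using norm_add_le ((x : ℂ) * riemannZeta (1 + x) - 1) 1
    _ ≤ _ := by rw [norm_one]; linarith

/-- A small power of the height `|Im s|`. -/
noncomputable def heightRoot (s : ℂ) : ℝ := |s.im| ^ (1 / 200 : ℝ)

lemma heightRoot_pos {s : ℂ} (hs : s.im ≠ 0) : 0 < heightRoot s :=
  Real.rpow_pos_of_pos (abs_pos.mpr hs) _

lemma heightRoot_pow (s : ℂ) (k : ℕ) : heightRoot s ^ k = |s.im| ^ (k / 200 : ℝ) := by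
  rw [heightRoot, ← Real.rpow_natCast, ← Real.rpow_mul (abs_nonneg _)]
  ring_nf

lemma heightRoot_pow_le {s z : ℂ} (h : |z.im| ≤ 2 * |s.im|) {k : ℕ} (hk : k ≤ 200) :
    heightRoot z ^ k ≤ 2 * heightRoot s ^ k := by
  have hk' : (k / 200 : ℝ) ≤ 1 := by
    rw [div_le_one (by norm_num)]
    exact_mod_cast hk
  rw [heightRoot_pow, heightRoot_pow]
  calc |z.im| ^ (k / 200 : ℝ) ≤ (2 * |s.im|) ^ (k / 200 : ℝ) := by gcongr
    _ = 2 ^ (k / 200 : ℝ) * |s.im| ^ (k / 200 : ℝ) := by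
      rw [Real.mul_rpow (by norm_num) (abs_nonneg _)]
    _ ≤ 2 ^ (1 : ℝ) * |s.im| ^ (k / 200 : ℝ) := by
      gcongr
      norm_num
    _ = _ := by norm_num

lemma half_le_heightRoot {s : ℂ} (hs : 1 / 2 ≤ |s.im|) : 1 / 2 ≤ heightRoot s := by
  calc (1 / 2 : ℝ) = (1 / 2) ^ (1 : ℝ) := by norm_num
    _ ≤ (1 / 2) ^ (1 / 200 : ℝ) :=
      Real.rpow_le_rpow_of_exponent_ge (by norm_num) (by norm_num) (by norm_num)
    _ ≤ _ := by rw [heightRoot]; gcongr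

lemma exists_norm_riemannZeta_le :
    ∃ C : ℝ, 0 < C ∧ ∀ s : ℂ, 99 / 100 < s.re → s.re ≤ 4 → 1 / 2 ≤ |s.im| →
      ‖riemannZeta s‖ ≤ C * heightRoot s ^ 4 := by
  obtain ⟨C, hC, h⟩ := exists_norm_zetaSubOneMul_sub_one_le
  refine ⟨32 + 9 * C, by positivity, fun s hs hs4 him ↦ ?_⟩
  have hne : s ≠ 1 := fun h ↦ by norm_num [h] at him
  have h1 := h s hs
  rw [zetaSubOneMul_of_ne hne] at h1
  have hd : 0 < ‖s - 1‖ := norm_pos_iff.mpr (sub_ne_zero.mpr hne)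
  have hd2 : 1 / 2 ≤ ‖s - 1‖ := him.trans (by simpa using Complex.abs_im_le_norm (s - 1))
  have hpow : ‖s‖ ^ (1 / 50 : ℝ) ≤ 9 * heightRoot s ^ 4 := by
    have h9 : ‖s‖ ≤ 9 * |s.im| := by
      refine (Complex.norm_le_abs_re_add_abs_im s).trans ?_
      rw [abs_of_pos (by linarith : 0 < s.re)]
      linarith
    calc ‖s‖ ^ (1 / 50 : ℝ) ≤ (9 * |s.im|) ^ (1 / 50 : ℝ) := by gcongr
      _ = 9 ^ (1 / 50 : ℝ) * |s.im| ^ (1 / 50 : ℝ) := by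
        rw [Real.mul_rpow (by norm_num) (abs_nonneg _)]
      _ ≤ 9 ^ (1 : ℝ) * |s.im| ^ (1 / 50 : ℝ) := by
        gcongr
        all_goals norm_num
      _ = _ := by rw [heightRoot_pow]; norm_num
  have h4 : 1 / 16 ≤ heightRoot s ^ 4 := by
    calc (1 / 16 : ℝ) = (1 / 2) ^ 4 := by norm_num
      _ ≤ _ := by gcongr; exact half_le_heightRoot him
  have h5 : ‖s - 1‖ * ‖riemannZeta s‖ ≤ 1 + C * ‖s - 1‖ * (9 * heightRoot s ^ 4) := by
    calc ‖s - 1‖ * ‖riemannZeta s‖ ≤ ‖(s - 1) * riemannZeta s - 1‖ + ‖(1 : ℂ)‖ := by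
          rw [← norm_mul]
          simpa using norm_add_le ((s - 1) * riemannZeta s - 1) 1
      _ ≤ C * ‖s - 1‖ * ‖s‖ ^ (1 / 50 : ℝ) + 1 := by
          rw [norm_one]
          linarith
      _ ≤ _ := by
          rw [add_comm]
          gcongr
  refine le_of_mul_le_mul_left (h5.trans ?_) hd
  nlinarith [mul_le_mul hd2 h4 (by norm_num) hd.le]

lemma exists_norm_deriv_riemannZeta_le :
    ∃ C : ℝ, 0 < C ∧ ∀ s : ℂ, 199 / 200 ≤ s.re → s.re ≤ 3 → 3 / 4 ≤ |s.im| →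
      ‖deriv riemannZeta s‖ ≤ C * heightRoot s ^ 4 := by
  obtain ⟨C, hC, h⟩ := exists_norm_riemannZeta_le
  refine ⟨C * 2 / (1 / 400), by positivity, fun s hs hs3 him ↦ ?_⟩
  have hz : ∀ z ∈ Metric.closedBall s (1 / 400), |z.re - s.re| ≤ 1 / 400 ∧
      |z.im - s.im| ≤ 1 / 400 := by
    intro z hz
    rw [mem_closedBall_iff_norm] at hz
    exact ⟨by simpa using (Complex.abs_re_le_norm (z - s)).trans hz,
      by simpa using (Complex.abs_im_le_norm (z - s)).trans hz⟩
  have him2 : ∀ z ∈ Metric.closedBall s (1 / 400), 1 / 2 ≤ |z.im| ∧ |z.im| ≤ 2 * |s.im| := by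
    intro z hz'
    have h1 := abs_sub_abs_le_abs_sub s.im z.im
    have h2 := abs_sub_abs_le_abs_sub z.im s.im
    have h3 := (hz z hz').2
    rw [abs_sub_comm s.im] at h1
    constructor <;> linarith
  have := Complex.norm_deriv_le_of_forall_mem_sphere_norm_le (c := s) (R := 1 / 400)
    (C := C * (2 * heightRoot s ^ 4)) (by norm_num) (f := riemannZeta) ?_ ?_
  · convert this using 1
    ring
  · refine DifferentiableOn.diffContOnCl_ball (U := Metric.closedBall s (1 / 400)) ?_ subset_rfl
    intro z hz'
    refine (differentiableAt_riemannZeta ?_).differentiableWithinAt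
    rintro rfl
    norm_num at him2
    have := (him2 1 hz').1
    norm_num at this
  · intro z hz'
    have hz'' := Metric.sphere_subset_closedBall hz'
    have h1 := abs_le.mp (hz z hz'').1
    refine (h z (by linarith [h1.1]) (by linarith [h1.2]) (him2 z hz'').1).trans ?_
    gcongr
    exact heightRoot_pow_le (him2 z hz'').2 (by norm_num)

lemma one_le_norm_riemannZeta_product {x : ℝ} (hx : 0 < x) (y : ℝ) :
    1 ≤ ‖riemannZeta (1 + x)‖ ^ 3 * ‖riemannZeta (1 + x + Complex.I * y)‖ ^ 4 *
      ‖riemannZeta (1 + x + 2 * Complex.I * y)‖ := by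
  have := DirichletCharacter.norm_LFunction_product_ge_one (N := 1) (1 : DirichletCharacter ℂ 1)
    hx y
  simpa [DirichletCharacter.LFunctionTrivChar, DirichletCharacter.LFunction_modOne_eq] using this

/-- A lower bound for `ζ` slightly to the left of the line `Re s = 1`. -/
lemma exists_le_norm_riemannZeta :
    ∃ c δ : ℝ, 0 < c ∧ 0 < δ ∧ δ ≤ 1 / 1000 ∧ ∀ s : ℂ, 3 / 4 ≤ |s.im| → s.re ≤ 3 →
      1 - δ / heightRoot s ^ 20 ≤ s.re → c ≤ ‖riemannZeta s‖ * heightRoot s ^ 16 := by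
  obtain ⟨C₁, hC₁, h₁⟩ := exists_norm_riemannZeta_one_add_le
  obtain ⟨C₂, hC₂, h₂⟩ := exists_norm_riemannZeta_le
  obtain ⟨C₃, hC₃, h₃⟩ := exists_norm_deriv_riemannZeta_le
  set A : ℝ := 2 * C₁ ^ 3 * C₂
  have hA : 0 < A := by positivity
  set a : ℝ := 1 / (1 + A)
  have ha : 0 < a := by positivity
  have ha1 : a ≤ 1 := (div_le_one (by positivity)).mpr (by linarith)
  have haA : A * a ^ 4 ≤ 1 := by
    have : a ^ 4 ≤ a ^ 1 := pow_le_pow_of_le_one ha.le ha1 (by norm_num)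
    calc A * a ^ 4 ≤ A * a := by gcongr; simpa using this
      _ ≤ 1 := by
        rw [mul_one_div, div_le_one (by positivity)]
        linarith
  set κ : ℝ := min (1 / 10) (a / (4 * C₃))
  have hκ : 0 < κ := by positivity
  have hκ1 : κ ≤ 1 / 10 := min_le_left _ _
  have hκ2 : 2 * C₃ * κ ≤ a / 2 := by
    calc 2 * C₃ * κ ≤ 2 * C₃ * (a / (4 * C₃)) := by gcongr; exact min_le_right _ _
      _ = a / 2 := by field_simp; norm_num
  have hκ4 : κ ^ 4 ≤ (1 / 10) ^ 4 := by gcongr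
  -- the bound to the right of the line
  have right : ∀ s : ℂ, 3 / 4 ≤ |s.im| → s.re ≤ 3 → κ ^ 4 / heightRoot s ^ 20 ≤ s.re - 1 →
      a * κ ^ 3 ≤ ‖riemannZeta s‖ * heightRoot s ^ 16 := by
    intro s him hs3 hs
    have hu : 0 < heightRoot s := heightRoot_pos (abs_pos.mp (by linarith))
    set u := heightRoot s
    set y := s.re - 1
    have hy : 0 < y := lt_of_lt_of_le (by positivity) hs
    have hy2 : y ≤ 2 := by simp only [y]; linarith
    have prod := one_le_norm_riemannZeta_product hy s.im
    have e1 : (1 + (y : ℂ) + Complex.I * s.im) = s := by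
      apply Complex.ext <;> simp [y]
    have b1 := h₁ y hy hy2
    have b2 : ‖riemannZeta (1 + y + 2 * Complex.I * s.im)‖ ≤ C₂ * (2 * u ^ 4) := by
      have him' : (1 + (y : ℂ) + 2 * Complex.I * s.im).im = 2 * s.im := by simp
      have hre' : (1 + (y : ℂ) + 2 * Complex.I * s.im).re = s.re := by simp [y]
      have hab : |2 * s.im| = 2 * |s.im| := by rw [abs_mul]; norm_num
      refine (h₂ _ (by rw [hre']; linarith) (by rw [hre']; linarith)
        (by rw [him', hab]; linarith)).trans ?_
      gcongr
      exact heightRoot_pow_le (by rw [him', hab]) (by norm_num)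
    rw [e1] at prod
    have key : y ^ 3 ≤ A * (‖riemannZeta s‖ ^ 4 * u ^ 4) := by
      have : (1 : ℝ) ≤ (C₁ / y) ^ 3 * ‖riemannZeta s‖ ^ 4 * (C₂ * (2 * u ^ 4)) :=
        prod.trans (by gcongr)
      rw [div_pow, div_mul_eq_mul_div, div_mul_eq_mul_div, le_div_iff₀ (by positivity)] at this
      simp only [A]
      linarith
    refine le_of_pow_le_pow_left₀ (n := 4) (by norm_num) (by positivity) ?_
    have hx3 : κ ^ 12 ≤ y ^ 3 * u ^ 60 := by
      have : κ ^ 4 ≤ y * u ^ 20 := by rwa [div_le_iff₀ (by positivity)] at hs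
      calc κ ^ 12 = (κ ^ 4) ^ 3 := by ring
        _ ≤ (y * u ^ 20) ^ 3 := by gcongr
        _ = _ := by ring
    calc (a * κ ^ 3) ^ 4 = a ^ 4 * κ ^ 12 := by ring
      _ ≤ a ^ 4 * ((A * (‖riemannZeta s‖ ^ 4 * u ^ 4)) * u ^ 60) := by
        gcongr
        exact hx3.trans (by gcongr)
      _ = (A * a ^ 4) * (‖riemannZeta s‖ * u ^ 16) ^ 4 := by ring
      _ ≤ _ := mul_le_of_le_one_left (by positivity) haA
  refine ⟨a * κ ^ 3 / 2, κ ^ 4, by positivity, by positivity, by linarith, fun s him hs3 hs ↦ ?_⟩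
  have hu : 0 < heightRoot s := heightRoot_pos (abs_pos.mp (by linarith))
  have hu20 : 1 / 2 ≤ heightRoot s ^ 20 := by
    rw [heightRoot_pow]
    calc (1 / 2 : ℝ) ≤ (1 / 2) ^ ((20 : ℕ) / 200 : ℝ) := by
          conv_lhs => rw [← Real.rpow_one (1 / 2)]
          exact Real.rpow_le_rpow_of_exponent_ge (by norm_num) (by norm_num) (by norm_num)
      _ ≤ _ := by gcongr; linarith
  set x : ℝ := κ ^ 4 / heightRoot s ^ 20
  have hx : 0 < x := by positivity
  have hx1 : x ≤ 1 / 400 := by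
    rw [div_le_iff₀ (by positivity)]
    linarith
  rcases le_or_gt x (s.re - 1) with hc | hc
  · exact (half_le_self (by positivity)).trans (right s him hs3 hc)
  set w : ℂ := ⟨1 + x, s.im⟩
  have hw : heightRoot w = heightRoot s := rfl
  have b1 := right w him (by simp only [w]; linarith) (by rw [hw]; simp [w, x])
  rw [hw] at b1
  have b2 : ‖riemannZeta w - riemannZeta s‖ ≤ C₃ * heightRoot s ^ 4 * ‖w - s‖ := by
    have hcon : Convex ℝ (Set.Icc (199 / 200 : ℝ) 3 ×ℂ {s.im}) :=
      ((convex_Icc _ _).linear_preimage Complex.reLm).inter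
        ((convex_singleton _).linear_preimage Complex.imLm)
    refine hcon.norm_image_sub_le_of_norm_deriv_le (fun z hz ↦ ?_) (fun z hz ↦ ?_) ?_ ?_
    · rw [Complex.mem_reProdIm] at hz
      refine differentiableAt_riemannZeta ?_
      rintro rfl
      have := hz.2
      simp only [Complex.one_im, Set.mem_singleton_iff] at this
      norm_num [← this] at him
    · rw [Complex.mem_reProdIm] at hz
      have hzi : z.im = s.im := hz.2
      have := h₃ z hz.1.1 hz.1.2 (by rwa [hzi])
      rwa [heightRoot, hzi] at this
    · rw [Complex.mem_reProdIm]
      exact ⟨⟨by linarith, hs3⟩, rfl⟩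
    · rw [Complex.mem_reProdIm]
      exact ⟨⟨by simp only [w]; linarith, by simp only [w]; linarith⟩, rfl⟩
  have b3 : ‖w - s‖ ≤ 2 * x := by
    refine (Complex.norm_le_abs_re_add_abs_im _).trans ?_
    simp only [w, Complex.sub_re, Complex.sub_im, sub_self, abs_zero, add_zero]
    rw [abs_le]
    constructor <;> linarith
  have b4 : ‖riemannZeta w‖ ≤ ‖riemannZeta s‖ + C₃ * heightRoot s ^ 4 * (2 * x) := by
    have := norm_sub_norm_le (riemannZeta w) (riemannZeta s)
    have : C₃ * heightRoot s ^ 4 * ‖w - s‖ ≤ C₃ * heightRoot s ^ 4 * (2 * x) := by gcongr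
    linarith
  have b5 : a * κ ^ 3 ≤ ‖riemannZeta s‖ * heightRoot s ^ 16 + 2 * C₃ * κ * κ ^ 3 := by
    calc a * κ ^ 3 ≤ (‖riemannZeta s‖ + C₃ * heightRoot s ^ 4 * (2 * x)) * heightRoot s ^ 16 :=
          b1.trans (by gcongr)
      _ = _ := by
        simp only [x]
        field_simp
  have b6 : 2 * C₃ * κ * κ ^ 3 ≤ a / 2 * κ ^ 3 := by gcongr
  linarith

/-- The analytic continuation of `-ζ' / ζ - ζ`, which has a removable singularity at `1`. -/
noncomputable def negLogDerivZetaSubZeta (s : ℂ) : ℂ :=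
  -deriv zetaSubOneMul s / zetaSubOneMul s - dslope zetaSubOneMul 1 s

lemma negLogDerivZetaSubZeta_eq {s : ℂ} (h1 : s ≠ 1) (h0 : riemannZeta s ≠ 0) :
    negLogDerivZetaSubZeta s = -deriv riemannZeta s / riemannZeta s - riemannZeta s := by
  have hd : deriv zetaSubOneMul s = riemannZeta s + (s - 1) * deriv riemannZeta s := by
    have heq : zetaSubOneMul =ᶠ[nhds s] fun s ↦ (s - 1) * riemannZeta s := by
      filter_upwards [eventually_ne_nhds h1] with t ht using zetaSubOneMul_of_ne ht
    rw [heq.deriv_eq]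
    have := ((hasDerivAt_id s).sub_const 1).mul (differentiableAt_riemannZeta h1).hasDerivAt
    simpa [Pi.mul_def] using this.deriv
  have h1' : s - 1 ≠ 0 := sub_ne_zero.mpr h1
  rw [negLogDerivZetaSubZeta, dslope_of_ne _ h1, slope_def_field, hd, zetaSubOneMul_of_ne h1,
    zetaSubOneMul_one]
  field_simp
  ring

lemma analyticAt_negLogDerivZetaSubZeta {s : ℂ} (h : zetaSubOneMul s ≠ 0) :
    AnalyticAt ℂ negLogDerivZetaSubZeta s := by
  have hd : Differentiable ℂ (dslope zetaSubOneMul 1) := by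
    rw [← differentiableOn_univ]
    exact (Complex.differentiableOn_dslope Filter.univ_mem).mpr
      differentiable_zetaSubOneMul.differentiableOn
  have h1 := differentiable_zetaSubOneMul.analyticAt s
  exact (h1.deriv.neg.div h1 h).sub (hd.analyticAt s)

lemma exists_norm_iteratedDeriv_le_of_one_le_abs_im :
    ∃ K : ℝ, ∀ s : ℂ, 1 ≤ s.re → s.re ≤ 2 → 1 ≤ |s.im| →
      ‖iteratedDeriv 6 negLogDerivZetaSubZeta s‖ ≤ K * |s.im| ^ (7 / 10 : ℝ) := by
  obtain ⟨c, δ, hc, hδ, hδ1, hlow⟩ := exists_le_norm_riemannZeta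
  obtain ⟨C₂, hC₂, h₂⟩ := exists_norm_riemannZeta_le
  obtain ⟨C₃, hC₃, h₃⟩ := exists_norm_deriv_riemannZeta_le
  refine ⟨720 * (2 * (C₃ / c + C₂)) / (δ / 4) ^ 6, fun s hs hs2 him ↦ ?_⟩
  set u := heightRoot s
  have hu : 1 ≤ u := Real.one_le_rpow him (by norm_num)
  have hu20 : 1 ≤ u ^ 20 := one_le_pow₀ hu
  set r : ℝ := δ / 4 / u ^ 20
  have hr : 0 < r := by positivity
  have hr1 : r ≤ 1 / 1000 := by
    rw [div_le_iff₀ (by positivity)]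
    linarith
  have main : ∀ z ∈ Metric.closedBall s r, 3 / 4 ≤ |z.im| ∧ |z.im| ≤ 2 * |s.im| ∧
      199 / 200 ≤ z.re ∧ z.re ≤ 3 ∧ c ≤ ‖riemannZeta z‖ * heightRoot z ^ 16 := by
    intro z hz
    rw [mem_closedBall_iff_norm] at hz
    have hre : |z.re - s.re| ≤ r := by simpa using (Complex.abs_re_le_norm (z - s)).trans hz
    have him' : |z.im - s.im| ≤ r := by simpa using (Complex.abs_im_le_norm (z - s)).trans hz
    have h1 := abs_sub_abs_le_abs_sub s.im z.im
    have h2 := abs_sub_abs_le_abs_sub z.im s.im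
    rw [abs_sub_comm s.im] at h1
    have h3 := abs_le.mp hre
    have h4 : |z.im| ≤ 2 * |s.im| := by linarith
    have h5 : 3 / 4 ≤ |z.im| := by linarith
    have hv : 0 < heightRoot z := heightRoot_pos (abs_pos.mp (by linarith))
    refine ⟨h5, h4, by linarith [h3.1], by linarith [h3.2],
      hlow z h5 (by linarith [h3.2]) ?_⟩
    have : r ≤ δ / heightRoot z ^ 20 := by
      simp only [r]
      rw [div_div]
      gcongr
      linarith [heightRoot_pow_le h4 (k := 20) (by norm_num)]
    linarith [h3.1]
  have nz : ∀ z ∈ Metric.closedBall s r, z ≠ 1 ∧ riemannZeta z ≠ 0 := by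
    intro z hz
    obtain ⟨h1, -, -, -, h5⟩ := main z hz
    refine ⟨?_, ?_⟩
    · rintro rfl
      norm_num at h1
    · intro h
      rw [h] at h5
      norm_num at h5
      linarith
  have bound : ∀ z ∈ Metric.sphere s r,
      ‖negLogDerivZetaSubZeta z‖ ≤ 2 * (C₃ / c + C₂) * u ^ 20 := by
    intro z hz
    have hz' := Metric.sphere_subset_closedBall hz
    obtain ⟨h1, h2, h3, h4, h5⟩ := main z hz'
    obtain ⟨n1, n0⟩ := nz z hz'
    have hv : 0 < heightRoot z := heightRoot_pos (abs_pos.mp (by linarith))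
    have hζ : 0 < ‖riemannZeta z‖ := norm_pos_iff.mpr n0
    rw [negLogDerivZetaSubZeta_eq n1 n0]
    have q1 : ‖-deriv riemannZeta z / riemannZeta z‖ ≤ C₃ / c * (2 * u ^ 20) := by
      rw [norm_div, norm_neg, div_le_iff₀ hζ]
      calc ‖deriv riemannZeta z‖ ≤ C₃ / c * heightRoot z ^ 4 * c := by
            refine (h₃ z h3 h4 h1).trans_eq ?_
            field_simp
        _ ≤ C₃ / c * heightRoot z ^ 4 * (‖riemannZeta z‖ * heightRoot z ^ 16) := by gcongr
        _ = C₃ / c * heightRoot z ^ 20 * ‖riemannZeta z‖ := by ring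
        _ ≤ _ := by
          gcongr
          exact heightRoot_pow_le h2 (by norm_num)
    have q2 : ‖riemannZeta z‖ ≤ C₂ * (2 * u ^ 20) := by
      refine (h₂ z (by linarith) (by linarith) (by linarith)).trans ?_
      gcongr
      refine (heightRoot_pow_le h2 (by norm_num)).trans ?_
      gcongr
      norm_num
    refine (norm_sub_le _ _).trans ?_
    linarith
  have cauchy := Complex.norm_iteratedDeriv_le_of_forall_mem_sphere_norm_le 6 hr
    (DifferentiableOn.diffContOnCl_ball (U := Metric.closedBall s r) (fun z hz ↦ by
      obtain ⟨n1, n0⟩ := nz z hz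
      refine (analyticAt_negLogDerivZetaSubZeta ?_).differentiableAt.differentiableWithinAt
      rw [zetaSubOneMul_of_ne n1]
      exact mul_ne_zero (sub_ne_zero.mpr n1) n0) subset_rfl) bound
  refine cauchy.trans_eq ?_
  have hu140 : |s.im| ^ (7 / 10 : ℝ) = u ^ 140 := by
    rw [heightRoot_pow]; norm_num
  rw [hu140]
  simp only [r]
  norm_num [Nat.factorial]
  field_simp

lemma exists_norm_iteratedDeriv_negLogDerivZetaSubZeta_le :
    ∃ K : ℝ, 0 ≤ K ∧ ∀ s : ℂ, 1 ≤ s.re → s.re ≤ 2 →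
      ‖iteratedDeriv 6 negLogDerivZetaSubZeta s‖ ≤ K * (1 + |s.im|) ^ (7 / 10 : ℝ) := by
  obtain ⟨K₁, h₁⟩ := exists_norm_iteratedDeriv_le_of_one_le_abs_im
  have hcomp : IsCompact (Set.Icc (1 : ℝ) 2 ×ℂ Set.Icc (-1 : ℝ) 1) :=
    isCompact_Icc.reProdIm isCompact_Icc
  obtain ⟨K₂, h₂⟩ := hcomp.exists_bound_of_continuousOn
    (f := iteratedDeriv 6 negLogDerivZetaSubZeta) (fun z hz ↦ by
      rw [Complex.mem_reProdIm] at hz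
      rw [iteratedDeriv_eq_iterate]
      exact ((analyticAt_negLogDerivZetaSubZeta
        (zetaSubOneMul_ne_zero hz.1.1)).iterated_deriv 6).continuousAt.continuousWithinAt)
  refine ⟨max (max K₁ K₂) 0, le_max_right _ _, fun s hs hs2 ↦ ?_⟩
  rcases le_total 1 |s.im| with him | him
  · refine (h₁ s hs hs2 him).trans ?_
    gcongr
    · exact (le_max_left _ _).trans (le_max_left _ _)
    · linarith
  · refine (h₂ s ?_).trans (((le_max_right K₁ K₂).trans (le_max_left _ 0)).trans ?_)
    · rw [Complex.mem_reProdIm]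
      exact ⟨⟨hs, hs2⟩, abs_le.mp him⟩
    · refine le_mul_of_one_le_right (le_max_right _ _) (Real.one_le_rpow ?_ (by norm_num))
      simp

/-- The coefficients of the Dirichlet series of `-ζ'/ζ - ζ`. -/
noncomputable def vonMangoldtSubOne (n : ℕ) : ℂ := (ArithmeticFunction.vonMangoldt n : ℂ) - 1

lemma LSeriesSummable_vonMangoldtSubOne {s : ℂ} (hs : 1 < s.re) :
    LSeriesSummable vonMangoldtSubOne s :=
  (ArithmeticFunction.LSeriesSummable_vonMangoldt hs).sub (LSeriesSummable_one_iff.mpr hs)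

lemma LSeries_vonMangoldtSubOne {s : ℂ} (hs : 1 < s.re) :
    LSeries vonMangoldtSubOne s = negLogDerivZetaSubZeta s := by
  rw [negLogDerivZetaSubZeta_eq (by rintro rfl; simp at hs)
    (riemannZeta_ne_zero_of_one_lt_re hs),
    ← ArithmeticFunction.LSeries_vonMangoldt_eq_deriv_riemannZeta_div hs,
    ← LSeries_one_eq_riemannZeta hs]
  exact LSeries_sub (ArithmeticFunction.LSeriesSummable_vonMangoldt hs)
    (LSeriesSummable_one_iff.mpr hs)

lemma abscissaOfAbsConv_vonMangoldtSubOne_le :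
    LSeries.abscissaOfAbsConv vonMangoldtSubOne ≤ (1 : ℝ) :=
  LSeries.abscissaOfAbsConv_le_of_forall_lt_LSeriesSummable fun y hy ↦
    LSeriesSummable_vonMangoldtSubOne (by simpa using hy)

lemma abscissaOfAbsConv_vonMangoldtSubOne_lt {s : ℂ} (hs : 1 < s.re) :
    LSeries.abscissaOfAbsConv vonMangoldtSubOne < s.re :=
  abscissaOfAbsConv_vonMangoldtSubOne_le.trans_lt (by exact_mod_cast hs)

lemma exists_norm_LSeries_logMul_vonMangoldtSubOne_le : ∃ K : ℝ, 0 ≤ K ∧ ∀ s : ℂ,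
    1 < s.re → s.re ≤ 2 →
      ‖LSeries (LSeries.logMul^[6] vonMangoldtSubOne) s‖ ≤ K * (1 + |s.im|) ^ (7 / 10 : ℝ) := by
  obtain ⟨K, hK, h⟩ := exists_norm_iteratedDeriv_negLogDerivZetaSubZeta_le
  refine ⟨K, hK, fun s hs hs2 ↦ ?_⟩
  have h1 := LSeries_iteratedDeriv 6 (abscissaOfAbsConv_vonMangoldtSubOne_lt hs)
  have h2 : (LSeries vonMangoldtSubOne) =ᶠ[nhds s] negLogDerivZetaSubZeta := by
    filter_upwards [(isOpen_lt continuous_const Complex.continuous_re).mem_nhds hs] with z hz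
    exact LSeries_vonMangoldtSubOne hz
  rw [h2.iteratedDeriv_eq] at h1
  have h3 := h s hs.le hs2
  rw [h1] at h3
  simpa using h3

lemma LSeriesSummable_logMul_vonMangoldtSubOne {s : ℂ} (hs : 1 < s.re) :
    LSeriesSummable (LSeries.logMul^[6] vonMangoldtSubOne) s := by
  refine LSeriesSummable_of_abscissaOfAbsConv_lt_re ?_
  rw [LSeries.absicssaOfAbsConv_logPowMul]
  exact abscissaOfAbsConv_vonMangoldtSubOne_lt hs

lemma iterate_logMul_apply (f : ℕ → ℂ) (k n : ℕ) :
    (LSeries.logMul^[k] f) n = (Real.log n : ℂ) ^ k * f n := by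
  induction k generalizing n with
  | zero => simp
  | succ k ih =>
    rw [Function.iterate_succ_apply', LSeries.logMul, ih, Complex.natCast_log]
    ring

/-- The Cesàro kernel `(1 - x)₊`, written for use with Mellin transforms on `(0, ∞)`. -/
noncomputable def cesaroKernel (t : ℝ) : ℂ :=
  Set.indicator (Set.Ioc 0 1) (fun _ ↦ 1 : ℝ → ℂ) t -
    Set.indicator (Set.Ioc 0 1) (fun t ↦ (t : ℂ) ^ (1 : ℂ) : ℝ → ℂ) t

lemma cesaroKernel_of_pos {t : ℝ} (ht : 0 < t) : cesaroKernel t = ((max (1 - t) 0 : ℝ) : ℂ) := by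
  unfold cesaroKernel
  by_cases h : t ≤ 1
  · rw [Set.indicator_of_mem (by exact ⟨ht, h⟩), Set.indicator_of_mem (by exact ⟨ht, h⟩),
      max_eq_left (by linarith)]
    simp
  · rw [Set.indicator_of_notMem (by simp [h]), Set.indicator_of_notMem (by simp [h]),
      max_eq_right (by linarith)]
    simp

lemma continuousAt_cesaroKernel {t : ℝ} (ht : 0 < t) : ContinuousAt cesaroKernel t := by
  have : cesaroKernel =ᶠ[nhds t] fun u ↦ ((max (1 - u) 0 : ℝ) : ℂ) := by
    filter_upwards [lt_mem_nhds ht] with u hu using cesaroKernel_of_pos hu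
  rw [continuousAt_congr this]
  fun_prop

lemma hasMellin_cesaroKernel {s : ℂ} (hs : 0 < s.re) :
    HasMellin cesaroKernel s (1 / (s * (s + 1))) := by
  have h1 := hasMellin_one_Ioc hs
  have h2 := hasMellin_cpow_Ioc 1 (s := s) (by simpa using (by linarith : 0 < s.re + 1))
  have h3 := hasMellin_sub h1.1 h2.1
  rw [h1.2, h2.2] at h3
  have e : 1 / s - 1 / (s + 1) = 1 / (s * (s + 1)) := by
    have : s ≠ 0 := by rintro rfl; simp at hs
    have : s + 1 ≠ 0 := by
      intro h
      have := congrArg Complex.re h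
      simp at this; linarith
    field_simp
    ring
  rw [e] at h3
  exact h3

lemma norm_one_div_mul_add_one_le {σ : ℝ} (hσ : 1 ≤ σ) (y : ℝ) :
    ‖1 / (((σ : ℂ) + y * Complex.I) * ((σ : ℂ) + y * Complex.I + 1))‖ ≤
      2 * (1 + ‖y‖) ^ (-2 : ℝ) := by
  have h1 : (1 + |y|) ^ 2 / 2 ≤ ‖((σ : ℂ) + y * Complex.I) * ((σ : ℂ) + y * Complex.I + 1)‖ := by
    have a1 : 1 + y ^ 2 ≤ ‖(σ : ℂ) + y * Complex.I‖ ^ 2 := by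
      rw [Complex.sq_norm, Complex.normSq_apply]; simp; nlinarith
    have a2 : 1 + y ^ 2 ≤ ‖(σ : ℂ) + y * Complex.I + 1‖ ^ 2 := by
      rw [Complex.sq_norm, Complex.normSq_apply]; simp; nlinarith
    rw [norm_mul]
    have h3 : (1 + |y|) ^ 2 / 2 ≤ 1 + y ^ 2 := by
      rw [← sq_abs y]; nlinarith [sq_nonneg (1 - |y|)]
    refine h3.trans (abs_le_of_sq_le_sq' ?_ (by positivity)).2
    rw [mul_pow, sq (1 + y ^ 2)]
    exact mul_le_mul a1 a2 (by positivity) (by positivity)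
  rw [norm_div, norm_one, Real.rpow_neg (by positivity), Real.rpow_two, Real.norm_eq_abs]
  calc _ ≤ 1 / ((1 + |y|) ^ 2 / 2) := by gcongr
    _ = _ := by field_simp

lemma integrable_one_add_norm_rpow {r : ℝ} (hr : 1 < r) :
    MeasureTheory.Integrable (fun y : ℝ ↦ (1 + ‖y‖) ^ (-r)) :=
  integrable_one_add_norm (by simpa using hr)

lemma integral_cpow_mul_eq_cesaroKernel {σ x : ℝ} (hσ : 1 ≤ σ) (hx : 0 < x) :
    ∫ y : ℝ, (x : ℂ) ^ (-((σ : ℂ) + y * Complex.I)) *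
      (1 / (((σ : ℂ) + y * Complex.I) * ((σ : ℂ) + y * Complex.I + 1))) =
      2 * Real.pi * cesaroKernel x := by
  have hm (y : ℝ) := hasMellin_cesaroKernel (s := (σ : ℂ) + y * Complex.I) (by simp; linarith)
  have h := mellinInv_mellin_eq σ cesaroKernel hx (by simpa using (hm 0).1) ?_
    (continuousAt_cesaroKernel hx)
  · simp only [mellinInv, (hm _).2] at h
    rw [← h, Complex.real_smul, ← mul_assoc]
    have : 2 * (Real.pi : ℂ) * ((1 / (2 * Real.pi) : ℝ) : ℂ) = 1 := by
      push_cast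
      field_simp
    rw [this, one_mul]
    simp only [smul_eq_mul]
  · have : (fun y : ℝ ↦ mellin cesaroKernel ((σ : ℂ) + y * Complex.I)) = fun y : ℝ ↦
        (1 / (((σ : ℂ) + y * Complex.I) * ((σ : ℂ) + y * Complex.I + 1))) := by
      ext y; exact (hm y).2
    unfold Complex.VerticalIntegrable
    rw [this]
    refine ((integrable_one_add_norm_rpow one_lt_two).const_mul 2).mono' ?_
      (.of_forall fun y ↦ norm_one_div_mul_add_one_le hσ y)
    refine Measurable.aestronglyMeasurable ?_
    fun_prop

lemma norm_sum_mul_sub_le {b : ℕ → ℂ} (hb0 : b 0 = 0) {σ K r : ℝ} (hσ : 1 ≤ σ) (hK : 0 ≤ K)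
    (hr : r < 1)
    (hb : LSeriesSummable b σ)
    (hbK : ∀ y : ℝ, ‖LSeries b ((σ : ℂ) + y * Complex.I)‖ ≤ K * (1 + |y|) ^ r) {N : ℕ}
    (hN : 0 < N) :
    ‖∑ n ∈ Finset.range N, b n * ((N : ℂ) - n)‖ ≤
      K * (∫ y : ℝ, (1 + ‖y‖) ^ (-(2 - r))) * (N : ℝ) ^ σ * N := by
  have hNR : (0 : ℝ) < N := by exact_mod_cast hN
  have hNC : (N : ℂ) ≠ 0 := by exact_mod_cast hN.ne'
  let w : ℝ → ℂ := fun y ↦ 1 / (((σ : ℂ) + y * Complex.I) * ((σ : ℂ) + y * Complex.I + 1))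
  have hw (y : ℝ) : ‖w y‖ ≤ 2 * (1 + ‖y‖) ^ (-2 : ℝ) := norm_one_div_mul_add_one_le hσ y
  let F : ℕ → ℝ → ℂ := fun n y ↦
    LSeries.term b ((σ : ℂ) + y * Complex.I) n * ((N : ℂ) ^ ((σ : ℂ) + y * Complex.I) * w y)
  have hNn (y : ℝ) : ‖(N : ℂ) ^ ((σ : ℂ) + y * Complex.I)‖ = (N : ℝ) ^ σ := by
    rw [Complex.norm_natCast_cpow_of_pos hN]; simp
  have ht (n : ℕ) (y : ℝ) : ‖LSeries.term b ((σ : ℂ) + y * Complex.I) n‖ =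
      ‖LSeries.term b σ n‖ := by
    simp [LSeries.norm_term_eq]
  have hFn (n : ℕ) (y : ℝ) : ‖F n y‖ ≤
      ‖LSeries.term b σ n‖ * ((N : ℝ) ^ σ * (2 * (1 + ‖y‖) ^ (-2 : ℝ))) := by
    simp only [F, norm_mul, hNn, ht]
    gcongr
    exact hw y
  have hi := (integrable_one_add_norm_rpow one_lt_two).const_mul 2
  have hi' (n : ℕ) := (hi.const_mul ((N : ℝ) ^ σ)).const_mul ‖LSeries.term b σ n‖
  have hFi (n : ℕ) : MeasureTheory.Integrable (F n) := by
    refine (hi' n).mono' (Measurable.aestronglyMeasurable ?_) (.of_forall (hFn n))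
    simp only [F, w, LSeries.term_def]
    by_cases h : n = 0
    · simp [h]
    · simp only [h, if_false]
      fun_prop
  have hS := MeasureTheory.hasSum_integral_of_summable_integral_norm hFi ?_
  swap
  · refine Summable.of_nonneg_of_le (fun n ↦ by positivity) (fun n ↦
      MeasureTheory.integral_mono (hFi n).norm (hi' n) (hFn n)) ?_
    simp only [MeasureTheory.integral_const_mul]
    exact hb.norm.mul_right _
  have e1 (n : ℕ) : ∫ y, F n y = 2 * Real.pi * (if n < N then b n * ((N : ℂ) - n) / N else 0) := by
    rcases Nat.eq_zero_or_pos n with rfl | hn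
    · simp [F, hb0]
    have hnR : (0 : ℝ) < n := by exact_mod_cast hn
    have : F n = fun y : ℝ ↦ b n * (((n / N : ℝ) : ℂ) ^ (-((σ : ℂ) + y * Complex.I)) * w y) := by
      ext y
      simp only [F, LSeries.term_of_ne_zero hn.ne']
      rw [Complex.ofReal_div, Complex.div_cpow_ofReal_nonneg hnR.le hNR.le, Complex.cpow_neg,
        Complex.cpow_neg]
      push_cast
      field_simp
    rw [this, MeasureTheory.integral_const_mul,
      integral_cpow_mul_eq_cesaroKernel hσ (by positivity), cesaroKernel_of_pos (by positivity)]
    split_ifs with h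
    · rw [max_eq_left (by rw [sub_nonneg, div_le_one hNR]; exact_mod_cast h.le)]
      push_cast
      field_simp
    · rw [max_eq_right (by rw [sub_nonpos, one_le_div hNR]; exact_mod_cast not_lt.mp h)]
      simp
  have e2 : ∑' n, ∫ y, F n y = 2 * Real.pi / N * ∑ n ∈ Finset.range N, b n * ((N : ℂ) - n) := by
    rw [tsum_eq_sum (s := Finset.range N), Finset.mul_sum]
    · refine Finset.sum_congr rfl fun n hn ↦ ?_
      rw [e1, if_pos (Finset.mem_range.mp hn)]
      ring
    · intro n hn
      rw [e1, if_neg (by simpa using hn)]; simp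
  have e3 : ‖∫ y, ∑' n, F n y‖ ≤
      ∫ y : ℝ, (K * (N : ℝ) ^ σ * 2) * (1 + ‖y‖) ^ (-(2 - r)) := by
    refine MeasureTheory.norm_integral_le_of_norm_le
      ((integrable_one_add_norm_rpow (by linarith)).const_mul _) (.of_forall fun y ↦ ?_)
    simp only [F]
    rw [tsum_mul_right, norm_mul, norm_mul, hNn]
    calc _ ≤ (K * (1 + |y|) ^ r) * ((N : ℝ) ^ σ * (2 * (1 + ‖y‖) ^ (-2 : ℝ))) := by
          gcongr
          · exact hbK y
          · exact hw y
      _ = (K * (N : ℝ) ^ σ * 2) * ((1 + ‖y‖) ^ r * (1 + ‖y‖) ^ (-2 : ℝ)) := by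
          rw [Real.norm_eq_abs]; ring
      _ = _ := by rw [← Real.rpow_add (by positivity)]; congr 2; ring
  rw [← hS.tsum_eq, e2, MeasureTheory.integral_const_mul, norm_mul] at e3
  have e4 : ‖(2 * Real.pi / N : ℂ)‖ = 2 * Real.pi / N := by
    simp [abs_of_pos Real.pi_pos]
  rw [e4] at e3
  set A := ‖∑ n ∈ Finset.range N, b n * ((N : ℂ) - n)‖
  have hpi : 1 ≤ Real.pi := by linarith [Real.pi_gt_three]
  calc A = 1 * A := (one_mul _).symm
    _ ≤ Real.pi * A := by gcongr
    _ = (2 * Real.pi / N * A) * N / 2 := by field_simp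
    _ ≤ (K * (N : ℝ) ^ σ * 2 * ∫ y : ℝ, (1 + ‖y‖) ^ (-(2 - r))) * N / 2 := by gcongr
    _ = _ := by ring

/-- Cesàro-smoothed prime number theorem with six logarithmic weights. -/
lemma exists_abs_sum_vonMangoldt_sub_one_mul_le : ∃ K : ℝ, 0 ≤ K ∧ ∀ N : ℕ,
    |∑ n ∈ Finset.range N, (ArithmeticFunction.vonMangoldt n - 1) * Real.log n ^ 6 *
      ((N : ℝ) - n)| ≤ K * (N : ℝ) ^ 2 := by
  obtain ⟨K, hK, h⟩ := exists_norm_LSeries_logMul_vonMangoldtSubOne_le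
  set I := ∫ y : ℝ, (1 + ‖y‖) ^ (-(2 - 7 / 10 : ℝ))
  have hI : 0 ≤ I := MeasureTheory.integral_nonneg fun y ↦ by positivity
  refine ⟨K * I * Real.exp 1, by positivity, fun N ↦ ?_⟩
  rcases lt_or_ge N 3 with hN | hN
  · have : ∑ n ∈ Finset.range N, (ArithmeticFunction.vonMangoldt n - 1) * Real.log n ^ 6 *
        ((N : ℝ) - n) = 0 := by
      refine Finset.sum_eq_zero fun n hn ↦ ?_
      have : n < 2 := by have := Finset.mem_range.mp hn; omega
      interval_cases n <;> simp
    rw [this, abs_zero]; positivity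
  have hNR : (3 : ℝ) ≤ N := by exact_mod_cast hN
  have hlog : 1 ≤ Real.log N := by
    rw [Real.le_log_iff_exp_le (by positivity)]
    linarith [Real.exp_one_lt_d9]
  set σ := 1 + 1 / Real.log N with hσ
  have hσ1 : 1 < σ := by have : 0 < 1 / Real.log N := by positivity
                         linarith
  have hσ2 : σ ≤ 2 := by
    have : 1 / Real.log N ≤ 1 := by rw [div_le_one (by positivity)]; exact hlog
    linarith
  have key := norm_sum_mul_sub_le (b := LSeries.logMul^[6] vonMangoldtSubOne) (σ := σ) (K := K)
    (r := 7 / 10)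
    (by rw [iterate_logMul_apply]; simp) hσ1.le hK (by norm_num)
    (LSeriesSummable_logMul_vonMangoldtSubOne (by simpa using hσ1))
    (fun y ↦ by simpa using h (σ + y * Complex.I) (by simpa using hσ1) (by simpa using hσ2))
    (N := N) (by omega)
  have hpow : (N : ℝ) ^ σ = Real.exp 1 * N := by
    rw [hσ, Real.rpow_add (by positivity), Real.rpow_one, Real.rpow_def_of_pos (by positivity),
      mul_one_div_cancel (by positivity), mul_comm]
  rw [hpow] at key
  have e : ∑ n ∈ Finset.range N, (LSeries.logMul^[6] vonMangoldtSubOne) n * ((N : ℂ) - n) =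
      ((∑ n ∈ Finset.range N, (ArithmeticFunction.vonMangoldt n - 1) * Real.log n ^ 6 *
      ((N : ℝ) - n) : ℝ) : ℂ) := by
    push_cast
    refine Finset.sum_congr rfl fun n _ ↦ ?_
    rw [iterate_logMul_apply, vonMangoldtSubOne]
    push_cast
    ring
  rw [e, Complex.norm_real, Real.norm_eq_abs] at key
  calc _ ≤ _ := key
    _ = _ := by ring

lemma Real.log_pow_le_mul_rpow {x : ℝ} (hx : 1 ≤ x) (k m : ℕ) (hk : k ≠ 0) (hm : m ≠ 0) :
    Real.log x ^ k ≤ (k * m : ℝ) ^ k * x ^ (1 / m : ℝ) := by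
  have hk' : (0 : ℝ) < k := by positivity
  have hm' : (0 : ℝ) < m := by positivity
  have h := Real.log_le_rpow_div (x := x) (by linarith) (ε := 1 / (k * m)) (by positivity)
  calc Real.log x ^ k ≤ (x ^ (1 / (k * m : ℝ)) / (1 / (k * m))) ^ k := by
        gcongr
        exact Real.log_nonneg hx
    _ = (k * m : ℝ) ^ k * (x ^ (1 / (k * m : ℝ))) ^ k := by
        rw [div_div_eq_mul_div, div_one, mul_pow]; ring
    _ = _ := by
        rw [← Real.rpow_mul_natCast (by linarith)]
        congr 2
        field_simp

lemma one_lt_log_natCast {N : ℕ} (hN : 3 ≤ N) : 1 < Real.log N := by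
  have : (3 : ℝ) ≤ N := by exact_mod_cast hN
  rw [Real.lt_log_iff_exp_lt (by positivity)]
  linarith [Real.exp_one_lt_d9]

lemma mul_sum_range_le_of_neg_le {b : ℕ → ℝ} {L : ℝ} (hL : 0 ≤ L) {N h : ℕ}
    (hb : ∀ n < N + h, -L ≤ b n) :
    h * ∑ n ∈ Finset.range N, b n ≤
      ∑ n ∈ Finset.range (N + h), b n * (((N + h : ℕ) : ℝ) - n) -
        ∑ n ∈ Finset.range N, b n * ((N : ℝ) - n) + L * h ^ 2 := by
  rw [← Finset.sum_range_add_sum_Ico _ (Nat.le_add_right N h)]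
  have h1 : ∑ n ∈ Finset.range N, b n * (((N + h : ℕ) : ℝ) - n) -
      ∑ n ∈ Finset.range N, b n * ((N : ℝ) - n) = h * ∑ n ∈ Finset.range N, b n := by
    rw [← Finset.sum_sub_distrib, Finset.mul_sum]
    refine Finset.sum_congr rfl fun n _ ↦ ?_
    push_cast; ring
  have h2 : ∑ n ∈ Finset.Ico N (N + h), -(L * h) ≤
      ∑ n ∈ Finset.Ico N (N + h), b n * (((N + h : ℕ) : ℝ) - n) := by
    refine Finset.sum_le_sum fun n hn ↦ ?_
    obtain ⟨hn1, hn2⟩ := Finset.mem_Ico.mp hn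
    have e1 : (N : ℝ) ≤ n := by exact_mod_cast hn1
    have e2 : (n : ℝ) ≤ ((N + h : ℕ) : ℝ) := by exact_mod_cast hn2.le
    have e3 : ((N + h : ℕ) : ℝ) = N + h := by push_cast; ring
    have := hb n hn2
    nlinarith
  simp only [Finset.sum_const, Nat.card_Ico, Nat.add_sub_cancel_left, nsmul_eq_mul] at h2
  linarith

lemma le_mul_sum_range_of_neg_le {b : ℕ → ℝ} {L : ℝ} (hL : 0 ≤ L) {N h : ℕ}
    (hb : ∀ n < N + h, -L ≤ b n) :
    ∑ n ∈ Finset.range (N + h), b n * (((N + h : ℕ) : ℝ) - n) -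
        ∑ n ∈ Finset.range N, b n * ((N : ℝ) - n) ≤
      h * ∑ n ∈ Finset.range (N + h), b n + L * h ^ 2 := by
  rw [← Finset.sum_range_add_sum_Ico _ (Nat.le_add_right N h),
    ← Finset.sum_range_add_sum_Ico b (Nat.le_add_right N h)]
  have h1 : ∑ n ∈ Finset.range N, b n * (((N + h : ℕ) : ℝ) - n) -
      ∑ n ∈ Finset.range N, b n * ((N : ℝ) - n) = h * ∑ n ∈ Finset.range N, b n := by
    rw [← Finset.sum_sub_distrib, Finset.mul_sum]
    refine Finset.sum_congr rfl fun n _ ↦ ?_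
    push_cast; ring
  have h2 : ∑ n ∈ Finset.Ico N (N + h), b n * (((N + h : ℕ) : ℝ) - n) ≤
      ∑ n ∈ Finset.Ico N (N + h), (h * b n + L * h) := by
    refine Finset.sum_le_sum fun n hn ↦ ?_
    obtain ⟨hn1, hn2⟩ := Finset.mem_Ico.mp hn
    have e1 : (N : ℝ) ≤ n := by exact_mod_cast hn1
    have e2 : (n : ℝ) ≤ ((N + h : ℕ) : ℝ) := by exact_mod_cast hn2.le
    have e3 : ((N + h : ℕ) : ℝ) = N + h := by push_cast; ring
    have := hb n hn2
    nlinarith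
  rw [Finset.sum_add_distrib, ← Finset.mul_sum] at h2
  simp only [Finset.sum_const, Nat.card_Ico, Nat.add_sub_cancel_left, nsmul_eq_mul] at h2
  linarith

lemma exists_abs_sum_vonMangoldt_sub_one_mul_log_pow_le : ∃ C : ℝ, 0 ≤ C ∧ ∀ N : ℕ, 3 ≤ N →
    |∑ n ∈ Finset.range N, (ArithmeticFunction.vonMangoldt n - 1) * Real.log n ^ 6| ≤
      C * N * Real.log N ^ 3 := by
  obtain ⟨K, hK, hE⟩ := exists_abs_sum_vonMangoldt_sub_one_mul_le
  refine ⟨9 * K + K + 64 + 64 * 27, by positivity, fun N hN ↦ ?_⟩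
  set b : ℕ → ℝ := fun n ↦ (ArithmeticFunction.vonMangoldt n - 1) * Real.log n ^ 6 with hb
  have hNR : (3 : ℝ) ≤ N := by exact_mod_cast hN
  set l := Real.log N with hl
  have hl1 : 1 < l := one_lt_log_natCast hN
  have hl3 : 1 < l ^ 3 := one_lt_pow₀ hl1 (by norm_num)
  set L : ℝ := 64 * l ^ 6 with hLdef
  have hL : 0 ≤ L := by positivity
  have hbL (n : ℕ) (hn : n < 2 * N) : -L ≤ b n := by
    have hlog : Real.log n ≤ 2 * l := by
      rcases Nat.eq_zero_or_pos n with rfl | hn0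
      · simp; linarith
      have hn0' : (0 : ℝ) < n := by exact_mod_cast hn0
      have : (n : ℝ) ≤ (N : ℝ) ^ 2 := by
        have : (n : ℝ) ≤ 2 * N := by exact_mod_cast hn.le
        nlinarith
      calc Real.log n ≤ Real.log ((N : ℝ) ^ 2) := Real.log_le_log hn0' this
        _ = 2 * l := by rw [Real.log_pow, ← hl]; norm_num
    have h0 : 0 ≤ Real.log n := Real.log_natCast_nonneg n
    have h6 : Real.log n ^ 6 ≤ L := by
      calc _ ≤ (2 * l) ^ 6 := by gcongr
        _ = L := by rw [hLdef]; ring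
    have hv : 0 ≤ ArithmeticFunction.vonMangoldt n * Real.log n ^ 6 :=
      mul_nonneg ArithmeticFunction.vonMangoldt_nonneg (by positivity)
    simp only [hb]
    linarith
  set h := ⌊(N : ℝ) / l ^ 3⌋₊ + 1 with hh
  have hq0 : (0 : ℝ) ≤ N / l ^ 3 := by positivity
  have hh1 : (N : ℝ) / l ^ 3 < h := by rw [hh]; push_cast; exact Nat.lt_floor_add_one _
  have hh2 : (h : ℝ) ≤ N / l ^ 3 + 1 := by
    rw [hh]; push_cast; gcongr; exact Nat.floor_le hq0
  have hhN : h ≤ N := by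
    have : ⌊(N : ℝ) / l ^ 3⌋₊ < N := by
      rw [Nat.floor_lt hq0, div_lt_iff₀ (by positivity)]
      nlinarith
    omega
  have hh0 : (0 : ℝ) < h := by rw [hh]; positivity
  have hhNR : (h : ℝ) ≤ N := by exact_mod_cast hhN
  have up := mul_sum_range_le_of_neg_le hL (b := b) (N := N) (h := h)
    (fun n hn ↦ hbL n (by omega))
  have lo := le_mul_sum_range_of_neg_le hL (b := b) (N := N - h) (h := h)
    (fun n hn ↦ hbL n (by omega))
  rw [Nat.sub_add_cancel hhN] at lo
  replace hE : ∀ N : ℕ, |∑ n ∈ Finset.range N, b n * ((N : ℝ) - n)| ≤ K * (N : ℝ) ^ 2 := hE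
  have E1 := abs_le.mp (hE (N + h))
  have E2 := abs_le.mp (hE N)
  have E3 := abs_le.mp (hE (N - h))
  have F1 : K * ((N + h : ℕ) : ℝ) ^ 2 ≤ 9 * K * (N : ℝ) ^ 2 := by
    have : ((N + h : ℕ) : ℝ) ^ 2 ≤ (3 * N) ^ 2 := by
      gcongr; push_cast; linarith
    nlinarith
  have F3 : K * ((N - h : ℕ) : ℝ) ^ 2 ≤ K * (N : ℝ) ^ 2 := by
    gcongr; exact_mod_cast Nat.sub_le _ _
  set D := ∑ n ∈ Finset.range N, b n with hD
  have hKN : 0 ≤ K * (N : ℝ) ^ 2 := by positivity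
  have hDh : |D| * h ≤ 10 * K * (N : ℝ) ^ 2 + L * h ^ 2 := by
    rw [← abs_of_pos hh0, ← abs_mul, abs_of_pos hh0, abs_le]
    constructor <;> linarith [E1.1, E1.2, E2.1, E2.2, E3.1, E3.2]
  have hl6 : l ^ 3 ≤ 27 * N := by
    have := Real.log_pow_le_mul_rpow (x := N) (by linarith) 3 1 (by norm_num) (by norm_num)
    norm_num at this
    exact this
  have hD1 : |D| ≤ 10 * K * (N * l ^ 3) + L * h := by
    have e : (N : ℝ) ≤ h * l ^ 3 := by
      rw [div_lt_iff₀ (by positivity)] at hh1; exact hh1.le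
    have : |D| * h ≤ (10 * K * (N * l ^ 3) + L * h) * h := by
      calc _ ≤ _ := hDh
        _ = 10 * K * N * N + L * h ^ 2 := by ring
        _ ≤ 10 * K * N * (h * l ^ 3) + L * h ^ 2 := by gcongr
        _ = _ := by ring
    exact le_of_mul_le_mul_right this hh0
  calc |D| ≤ _ := hD1
    _ ≤ 10 * K * (N * l ^ 3) + L * (N / l ^ 3 + 1) := by gcongr
    _ = 10 * K * (N * l ^ 3) + 64 * (N * l ^ 3) + 64 * l ^ 3 * l ^ 3 := by
        rw [hLdef]; field_simp; ring
    _ ≤ 10 * K * (N * l ^ 3) + 64 * (N * l ^ 3) + 64 * (27 * N) * l ^ 3 := by gcongr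
    _ = _ := by ring

/-- The indicator-weighted sequence `1_P(n) log n - 1`. -/
noncomputable def primeLogSubOne (n : ℕ) : ℝ := (if n.Prime then Real.log n else 0) - 1

lemma exists_abs_sum_primeLogSubOne_mul_log_pow_le : ∃ C : ℝ, 0 ≤ C ∧ ∀ N : ℕ, 3 ≤ N →
    |∑ n ∈ Finset.range N, primeLogSubOne n * Real.log n ^ 6| ≤ C * N * Real.log N ^ 3 := by
  obtain ⟨C, hC, h⟩ := exists_abs_sum_vonMangoldt_sub_one_mul_log_pow_le
  refine ⟨C + 2 * 8 ^ 4, by positivity, fun N hN ↦ ?_⟩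
  have hNR : (3 : ℝ) ≤ N := by exact_mod_cast hN
  have hlog := one_lt_log_natCast hN
  have key : |∑ n ∈ Finset.range N, (ArithmeticFunction.vonMangoldt n - 1) * Real.log n ^ 6 -
      ∑ n ∈ Finset.range N, primeLogSubOne n * Real.log n ^ 6| ≤
      2 * 8 ^ 4 * N * Real.log N ^ 3 := by
    have e : ∑ n ∈ Finset.range N, (ArithmeticFunction.vonMangoldt n - 1) * Real.log n ^ 6 -
        ∑ n ∈ Finset.range N, primeLogSubOne n * Real.log n ^ 6 =
        ∑ n ∈ Finset.range N with ¬ n.Prime,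
          ArithmeticFunction.vonMangoldt n * Real.log n ^ 6 := by
      rw [Finset.sum_filter, ← Finset.sum_sub_distrib]
      refine Finset.sum_congr rfl fun n _ ↦ ?_
      by_cases hp : n.Prime
      · simp [primeLogSubOne, hp, ArithmeticFunction.vonMangoldt_apply_prime hp]
      · simp [primeLogSubOne, hp]
        ring
    rw [e, abs_of_nonneg (Finset.sum_nonneg fun n _ ↦
      mul_nonneg ArithmeticFunction.vonMangoldt_nonneg (by positivity))]
    have hψ := Chebyshev.psi_sub_theta_le (x := N) (by linarith)
    rw [Chebyshev.psi_sub_theta_eq_sum_not_prime, Nat.floor_natCast] at hψ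
    have hl4 := Real.log_pow_le_mul_rpow (x := N) (by linarith) 4 2 (by norm_num) (by norm_num)
    simp only [Nat.cast_ofNat, ← Real.sqrt_eq_rpow] at hl4
    norm_num at hl4
    calc _ ≤ ∑ n ∈ Finset.range N with ¬ n.Prime,
          ArithmeticFunction.vonMangoldt n * Real.log N ^ 6 := by
          refine Finset.sum_le_sum fun n hn ↦ ?_
          rcases Nat.eq_zero_or_pos n with rfl | hn0
          · simp
          have hnN : n ≤ N := by
            simp only [Finset.mem_filter, Finset.mem_range] at hn
            exact hn.1.le
          have := ArithmeticFunction.vonMangoldt_nonneg (n := n)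
          gcongr
      _ = (∑ n ∈ Finset.range N with ¬ n.Prime, ArithmeticFunction.vonMangoldt n) *
          Real.log N ^ 6 := by rw [Finset.sum_mul]
      _ ≤ (∑ n ∈ Finset.Ioc 0 N with ¬ n.Prime, ArithmeticFunction.vonMangoldt n) *
          Real.log N ^ 6 := by
          refine mul_le_mul_of_nonneg_right ?_ (by positivity)
          rw [Finset.sum_filter, Finset.sum_filter, Finset.range_eq_Ico,
            Finset.sum_eq_sum_Ico_succ_bot (by omega)]
          simp only [ArithmeticFunction.map_zero, ite_self, zero_add]
          refine Finset.sum_le_sum_of_subset_of_nonneg ?_ fun n _ _ ↦ ?_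
          · intro n hn
            simp only [Finset.mem_Ico, Finset.mem_Ioc] at hn ⊢
            omega
          · split_ifs
            · exact le_rfl
            · exact ArithmeticFunction.vonMangoldt_nonneg
      _ ≤ (2 * √N * Real.log N) * Real.log N ^ 6 := by gcongr
      _ = 2 * √N * Real.log N ^ 3 * Real.log N ^ 4 := by ring
      _ ≤ 2 * √N * Real.log N ^ 3 * (4096 * √N) := by gcongr
      _ = 2 * 4096 * (√N * √N) * Real.log N ^ 3 := by ring
      _ = _ := by rw [Real.mul_self_sqrt (by linarith)]; norm_num
  have h1 := h N hN
  rw [abs_le] at h1 key ⊢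
  constructor <;> linarith [h1.1, h1.2, key.1, key.2]

lemma abs_sum_Ico_mul_le {b g B : ℕ → ℝ} {M : ℕ}
    (hb : ∀ n, M ≤ n → |∑ k ∈ Finset.range n, b k| ≤ B n)
    (hg0 : ∀ n, M ≤ n → 0 ≤ g n) (hg : ∀ n, M ≤ n → g (n + 1) ≤ g n) {X : ℕ} (hX : M ≤ X) :
    |∑ n ∈ Finset.Ico M X, b n * g n| ≤
      2 * B M * g M + ∑ n ∈ Finset.Ico M X, (B (n + 1) - B n) * g n := by
  set D : ℕ → ℝ := fun n ↦ ∑ k ∈ Finset.range n, b k with hD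
  suffices h : |∑ n ∈ Finset.Ico M X, b n * g n - D X * g X| + B X * g X ≤
      2 * B M * g M + ∑ n ∈ Finset.Ico M X, (B (n + 1) - B n) * g n by
    have h1 : |D X * g X| ≤ B X * g X := by
      rw [abs_mul, abs_of_nonneg (hg0 X hX)]
      exact mul_le_mul_of_nonneg_right (hb X hX) (hg0 X hX)
    have h2 := abs_sub_abs_le_abs_sub (∑ n ∈ Finset.Ico M X, b n * g n) (D X * g X)
    linarith
  induction X, hX using Nat.le_induction with
  | base =>
    simp only [Finset.Ico_self, Finset.sum_empty, zero_sub, abs_neg, add_zero]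
    rw [abs_mul, abs_of_nonneg (hg0 M le_rfl)]
    have := mul_le_mul_of_nonneg_right (hb M le_rfl) (hg0 M le_rfl)
    linarith
  | succ X hX ih =>
    rw [Finset.sum_Ico_succ_top hX, Finset.sum_Ico_succ_top hX]
    have e : ∑ n ∈ Finset.Ico M X, b n * g n + b X * g X - D (X + 1) * g (X + 1) =
        (∑ n ∈ Finset.Ico M X, b n * g n - D X * g X) + D (X + 1) * (g X - g (X + 1)) := by
      simp only [hD, Finset.sum_range_succ]
      ring
    have h1 : |D (X + 1) * (g X - g (X + 1))| ≤ B (X + 1) * (g X - g (X + 1)) := by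
      rw [abs_mul, abs_of_nonneg (sub_nonneg.mpr (hg X hX))]
      exact mul_le_mul_of_nonneg_right (hb _ (by omega)) (sub_nonneg.mpr (hg X hX))
    rw [e]
    have h2 := abs_add_le (∑ n ∈ Finset.Ico M X, b n * g n - D X * g X)
      (D (X + 1) * (g X - g (X + 1)))
    linarith

lemma sum_Ico_inv_sq_le {M X : ℕ} (hM : 1 ≤ M) (hX : M ≤ X) :
    ∑ n ∈ Finset.Ico M X, 1 / (n : ℝ) ^ 2 ≤ 2 / (M : ℝ) - 2 / X := by
  induction X, hX using Nat.le_induction with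
  | base => simp
  | succ X hX ih =>
    rw [Finset.sum_Ico_succ_top hX]
    have hX0 : (1 : ℝ) ≤ X := by exact_mod_cast hM.trans hX
    have : 1 / (X : ℝ) ^ 2 ≤ 2 / X - 2 / ((X + 1 : ℕ) : ℝ) := by
      push_cast
      rw [div_sub_div _ _ (by positivity) (by positivity), div_le_div_iff₀ (by positivity)
        (by positivity)]
      nlinarith
    linarith

lemma succ_mul_log_succ_pow_sub_le {n : ℕ} (hn : 3 ≤ n) :
    ((n + 1 : ℕ) : ℝ) * Real.log ((n + 1 : ℕ) : ℝ) ^ 3 - n * Real.log n ^ 3 ≤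
      15 * Real.log n ^ 3 := by
  have hnR : (3 : ℝ) ≤ n := by exact_mod_cast hn
  have hl := one_lt_log_natCast hn
  set l := Real.log n
  have h1 : Real.log ((n + 1 : ℕ) : ℝ) ≤ l + 1 / n := by
    have e : ((n + 1 : ℕ) : ℝ) = n * (1 + 1 / n) := by push_cast; field_simp
    rw [e, Real.log_mul (by positivity) (by positivity)]
    have := Real.log_le_sub_one_of_pos (x := 1 + 1 / (n : ℝ)) (by positivity)
    linarith
  have hu0 : 0 < 1 / (n : ℝ) := by positivity
  have hu1 : 1 / (n : ℝ) ≤ 1 := by rw [div_le_one (by positivity)]; linarith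
  have hnu : (n : ℝ) * (1 / n) = 1 := by field_simp
  have h0 : 0 ≤ Real.log ((n + 1 : ℕ) : ℝ) := Real.log_natCast_nonneg _
  set u := 1 / (n : ℝ)
  have h2 : Real.log ((n + 1 : ℕ) : ℝ) ^ 3 ≤ l ^ 3 + 7 * l ^ 3 * u := by
    calc _ ≤ (l + u) ^ 3 := by gcongr
      _ = l ^ 3 + (3 * l ^ 2 * 1 + 3 * l * 1 * u + u * u) * u := by ring
      _ ≤ l ^ 3 + (3 * l ^ 2 * l + 3 * l * (l * l) * 1 + 1 * 1) * u := by
          gcongr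
          nlinarith
      _ ≤ l ^ 3 + 7 * l ^ 3 * u := by
          have : 1 ≤ l ^ 3 := one_le_pow₀ hl.le
          nlinarith
  have hl3 : 0 < l ^ 3 := by positivity
  calc _ ≤ ((n + 1 : ℕ) : ℝ) * (l ^ 3 + 7 * l ^ 3 * u) - n * l ^ 3 := by gcongr
    _ = l ^ 3 + 7 * l ^ 3 * (n * u) + 7 * l ^ 3 * u := by push_cast; ring
    _ ≤ l ^ 3 + 7 * l ^ 3 * 1 + 7 * l ^ 3 * 1 := by rw [hnu]; gcongr
    _ = _ := by ring

lemma exists_abs_sum_primeLogSubOne_div_sq_le : ∃ C : ℝ, 0 ≤ C ∧ ∀ M X : ℕ, 3 ≤ M → M ≤ X →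
    |∑ n ∈ Finset.Ico M X, primeLogSubOne n / (n : ℝ) ^ 2| ≤ C / (M * Real.log M ^ 3) := by
  obtain ⟨C, hC, h⟩ := exists_abs_sum_primeLogSubOne_mul_log_pow_le
  refine ⟨32 * C, by positivity, fun M X hM hX ↦ ?_⟩
  have hMR : (3 : ℝ) ≤ M := by exact_mod_cast hM
  have hlM := one_lt_log_natCast hM
  have key := abs_sum_Ico_mul_le (b := fun n ↦ primeLogSubOne n * Real.log n ^ 6)
    (g := fun n ↦ 1 / ((n : ℝ) ^ 2 * Real.log n ^ 6)) (B := fun n ↦ C * n * Real.log n ^ 3)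
    (M := M) (fun n hn ↦ h n (hM.trans hn)) (fun n hn ↦ by positivity) ?_ hX
  swap
  · intro n hn
    have := one_lt_log_natCast (hM.trans hn)
    have hn0 : (0 : ℝ) < n := by exact_mod_cast (by omega : 0 < n)
    gcongr <;> simp
  have e : ∑ n ∈ Finset.Ico M X, primeLogSubOne n / (n : ℝ) ^ 2 =
      ∑ n ∈ Finset.Ico M X, primeLogSubOne n * Real.log n ^ 6 *
        (1 / ((n : ℝ) ^ 2 * Real.log n ^ 6)) := by
    refine Finset.sum_congr rfl fun n hn ↦ ?_
    have hn' := (Finset.mem_Ico.mp hn).1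
    have := one_lt_log_natCast (hM.trans hn')
    have hn0 : (0 : ℝ) < n := by exact_mod_cast (by omega : 0 < n)
    field_simp
  rw [e]
  refine key.trans ?_
  have h2 : ∑ n ∈ Finset.Ico M X, (C * ((n + 1 : ℕ) : ℝ) * Real.log ((n + 1 : ℕ) : ℝ) ^ 3 -
      C * n * Real.log n ^ 3) * (1 / ((n : ℝ) ^ 2 * Real.log n ^ 6)) ≤
      ∑ n ∈ Finset.Ico M X, (15 * C / Real.log M ^ 3) * (1 / (n : ℝ) ^ 2) := by
    refine Finset.sum_le_sum fun n hn ↦ ?_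
    have hn' := (Finset.mem_Ico.mp hn).1
    have hln := one_lt_log_natCast (hM.trans hn')
    have hn0 : (0 : ℝ) < n := by exact_mod_cast (by omega : 0 < n)
    have hmono : Real.log M ≤ Real.log n :=
      Real.log_le_log (by positivity) (by exact_mod_cast hn')
    calc _ = C * (((n + 1 : ℕ) : ℝ) * Real.log ((n + 1 : ℕ) : ℝ) ^ 3 - n * Real.log n ^ 3) *
          (1 / ((n : ℝ) ^ 2 * Real.log n ^ 6)) := by ring
      _ ≤ C * (15 * Real.log n ^ 3) * (1 / ((n : ℝ) ^ 2 * Real.log n ^ 6)) := by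
          gcongr
          exact succ_mul_log_succ_pow_sub_le (hM.trans hn')
      _ = (15 * C / Real.log n ^ 3) * (1 / (n : ℝ) ^ 2) := by field_simp
      _ ≤ _ := by gcongr
  rw [← Finset.mul_sum] at h2
  have h3 := sum_Ico_inv_sq_le (by omega : 1 ≤ M) hX
  have h4 : ∑ n ∈ Finset.Ico M X, 1 / (n : ℝ) ^ 2 ≤ 2 / (M : ℝ) := by
    have : (0 : ℝ) ≤ 2 / X := by positivity
    linarith
  calc _ ≤ 2 * (C * M * Real.log M ^ 3) * (1 / ((M : ℝ) ^ 2 * Real.log M ^ 6)) +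
        (15 * C / Real.log M ^ 3) * (2 / M) := by
        gcongr
        exact h2.trans (by gcongr)
    _ = _ := by field_simp; ring

lemma sum_vonMangoldt_div_eq (N : ℕ) :
    ∑ n ∈ Finset.Icc 1 N, ArithmeticFunction.vonMangoldt n / n =
      ∑ p ∈ (Finset.range (N + 1)).filter Nat.Prime,
        ∑ k ∈ Finset.Icc 1 (Nat.log p N), Real.log p / (p : ℝ) ^ k := calc
  _ = ∑ m ∈ ((Finset.range (N + 1)).filter Nat.Prime).biUnion
      fun p ↦ Finset.image (p ^ ·) (Finset.Icc 1 (Nat.log p N)),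
        ArithmeticFunction.vonMangoldt m / (m : ℝ) := by
    refine (Finset.sum_subset (fun q hq ↦ ?_) fun x hx ↦ ?_).symm
    · simp only [Finset.mem_biUnion, Finset.mem_filter, Finset.mem_Icc, Finset.mem_image,
        Finset.mem_range] at hq ⊢
      obtain ⟨p, ⟨hpN, hp⟩, k, ⟨_, hk⟩, rfl⟩ := hq
      have := hp.pos
      exact ⟨Nat.one_le_pow _ _ hp.pos, Nat.pow_le_of_le_log (by omega) hk⟩
    · intro h
      rw [div_eq_zero_iff]
      left
      revert h
      simp only [Finset.mem_biUnion, Finset.mem_filter, Finset.mem_image, not_exists, not_and,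
        Finset.mem_Icc, and_imp, Finset.mem_range,
        ArithmeticFunction.vonMangoldt_eq_zero_iff, isPrimePow_nat_iff]
      contrapose!
      rintro ⟨p, k, hp, hk, rfl⟩
      simp only [Finset.mem_Icc] at hx
      have hpn : p ≤ N := (Nat.le_of_dvd (by lia) (dvd_pow_self p hk.ne')).trans hx.2
      exact ⟨p, by omega, hp, k, by omega, Nat.le_log_of_pow_le hp.one_lt hx.2, rfl⟩
  _ = ∑ p ∈ (Finset.range (N + 1)).filter Nat.Prime,
      ∑ q ∈ Finset.image (fun k ↦ p ^ k) (Finset.Icc 1 (Nat.log p N)),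
        ArithmeticFunction.vonMangoldt q / (q : ℝ) := by
    rw [Finset.sum_biUnion]
    rw [Finset.pairwiseDisjoint_iff]
    grind [Nat.Prime.pow_inj']
  _ = _ := by
    refine Finset.sum_congr rfl fun p hp ↦ ?_
    have hp' : p.Prime := (Finset.mem_filter.mp hp).2
    rw [Finset.sum_image fun a _ b _ hab ↦ Nat.pow_right_injective hp'.two_le hab]
    refine Finset.sum_congr rfl fun k hk ↦ ?_
    have hk' := (Finset.mem_Icc.mp hk).1
    rw [ArithmeticFunction.vonMangoldt_apply_pow (by omega),
      ArithmeticFunction.vonMangoldt_apply_prime hp']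
    push_cast
    rfl

lemma div_sub_one_sub_sum_div_pow {p : ℝ} (hp : 1 < p) (c : ℝ) (K : ℕ) :
    c / (p - 1) - ∑ k ∈ Finset.Icc 1 K, c / p ^ k = c / (p ^ K * (p - 1)) := by
  have h : p - 1 ≠ 0 := by linarith
  induction K with
  | zero => simp
  | succ K ih =>
    rw [Finset.sum_Icc_succ_top (by omega), ← sub_sub, ih]
    field_simp
    ring

lemma Delta_eq_sum (x : ℝ) :
    Delta x = ∑ p ∈ (Finset.range (⌊x⌋₊ + 1)).filter Nat.Prime,
      Real.log p / ((p : ℝ) ^ Nat.log p ⌊x⌋₊ * (p - 1)) := by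
  rw [Delta, sum_vonMangoldt_div_eq, ← Finset.sum_sub_distrib]
  refine Finset.sum_congr rfl fun p hp ↦ ?_
  exact div_sub_one_sub_sum_div_pow (by exact_mod_cast (Finset.mem_filter.mp hp).2.one_lt) _ _

lemma log_div_le_of_le {p X Z : ℝ} (hp : 1 ≤ p) (hX : 0 < X) (hXZ : X ≤ Z) (hpZ : p ^ 3 ≤ Z) :
    2 * Real.log p / Z ≤ 20 * p ^ (-(11 / 10) : ℝ) * X ^ (-(3 / 5) : ℝ) := by
  have hp0 : 0 < p := by linarith
  have hZ0 : 0 < Z := by linarith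
  have hZ : X ^ (3 / 5 : ℝ) * p ^ (6 / 5 : ℝ) ≤ Z := by
    calc _ ≤ Z ^ (3 / 5 : ℝ) * (p ^ 3) ^ (2 / 5 : ℝ) := by
          rw [← Real.rpow_natCast_mul hp0.le]
          norm_num
          gcongr
      _ ≤ Z ^ (3 / 5 : ℝ) * Z ^ (2 / 5 : ℝ) := by gcongr
      _ = Z := by rw [← Real.rpow_add hZ0]; norm_num
  have hlog : Real.log p ≤ 10 * p ^ (1 / 10 : ℝ) := by
    have := Real.log_pow_le_mul_rpow hp 1 10 (by norm_num) (by norm_num)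
    norm_num at this ⊢
    exact this
  calc _ ≤ 2 * (10 * p ^ (1 / 10 : ℝ)) / (X ^ (3 / 5 : ℝ) * p ^ (6 / 5 : ℝ)) := by
        gcongr
    _ = 20 * (p ^ (1 / 10 : ℝ) * p ^ (-(6 / 5) : ℝ)) * X ^ (-(3 / 5) : ℝ) := by
        rw [Real.rpow_neg hp0.le, Real.rpow_neg hX.le]
        field_simp
        norm_num
    _ = _ := by rw [← Real.rpow_add hp0]; norm_num

lemma abs_log_div_sub_le {p X : ℕ} (hp : p.Prime) (hpX : p ≤ X) :
    |Real.log p / ((p : ℝ) ^ Nat.log p X * (p - 1)) -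
      (if X < p ^ 2 then Real.log p / (p : ℝ) ^ 2 else 0)| ≤
      20 * (p : ℝ) ^ (-(11 / 10) : ℝ) * (X : ℝ) ^ (-(3 / 5) : ℝ) := by
  have hp2 : (2 : ℝ) ≤ p := by exact_mod_cast hp.two_le
  have hX0 : 0 < X := hp.pos.trans_le hpX
  have hX : (0 : ℝ) < X := by exact_mod_cast hX0
  have hlog : 0 ≤ Real.log p := Real.log_natCast_nonneg p
  have hp1 : (p : ℝ) / 2 ≤ p - 1 := by linarith
  split_ifs with h
  · have hK : Nat.log p X = 1 := by
      rw [Nat.log_eq_iff (by omega)]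
      simpa using ⟨hpX, h⟩
    have e : Real.log p / ((p : ℝ) ^ 1 * (p - 1)) - Real.log p / (p : ℝ) ^ 2 =
        Real.log p / ((p : ℝ) ^ 2 * (p - 1)) := by
      have : (p : ℝ) - 1 ≠ 0 := by linarith
      field_simp
      ring
    rw [hK, e, abs_of_nonneg (div_nonneg hlog (mul_nonneg (by positivity) (by linarith)))]
    refine le_trans ?_ (log_div_le_of_le (by linarith) hX (Z := (p : ℝ) ^ 3) ?_ le_rfl)
    · calc _ ≤ Real.log p / ((p : ℝ) ^ 2 * (p / 2)) := by gcongr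
        _ = _ := by field_simp
    · have : X ≤ p ^ 3 := h.le.trans (Nat.pow_le_pow_right hp.pos (by norm_num))
      exact_mod_cast this
  · have hK : 2 ≤ Nat.log p X := Nat.le_log_of_pow_le hp.one_lt (not_lt.mp h)
    rw [sub_zero, abs_of_nonneg (div_nonneg hlog (mul_nonneg (by positivity) (by linarith)))]
    refine le_trans ?_ (log_div_le_of_le (by linarith) hX
      (Z := (p : ℝ) ^ (Nat.log p X + 1)) ?_ ?_)
    · calc _ ≤ Real.log p / ((p : ℝ) ^ Nat.log p X * (p / 2)) := by gcongr
        _ = _ := by rw [pow_succ]; field_simp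
    · exact_mod_cast (Nat.lt_pow_succ_log_self hp.one_lt X).le
    · exact pow_le_pow_right₀ (by linarith) (by omega)

lemma exists_abs_Delta_sub_sum_le : ∃ S : ℝ, 0 ≤ S ∧ ∀ x : ℝ, 1 ≤ x →
    |Delta x - ∑ n ∈ Finset.Ico (Nat.sqrt ⌊x⌋₊ + 1) (⌊x⌋₊ + 1),
      (primeLogSubOne n + 1) / (n : ℝ) ^ 2| ≤ S * (⌊x⌋₊ : ℝ) ^ (-(3 / 5) : ℝ) := by
  have hs : Summable fun n : ℕ ↦ (n : ℝ) ^ (-(11 / 10) : ℝ) :=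
    Real.summable_nat_rpow.mpr (by norm_num)
  refine ⟨20 * ∑' n : ℕ, (n : ℝ) ^ (-(11 / 10) : ℝ),
    mul_nonneg (by norm_num) (tsum_nonneg fun n ↦ by positivity), fun x hx ↦ ?_⟩
  set X := ⌊x⌋₊
  have e : ∑ n ∈ Finset.Ico (Nat.sqrt X + 1) (X + 1), (primeLogSubOne n + 1) / (n : ℝ) ^ 2 =
      ∑ p ∈ (Finset.range (X + 1)).filter Nat.Prime,
        (if X < p ^ 2 then Real.log p / (p : ℝ) ^ 2 else 0) := by
    rw [Finset.sum_filter, ← Finset.sum_range_add_sum_Ico _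
      (Nat.succ_le_succ (Nat.sqrt_le_self X))]
    rw [Finset.sum_eq_zero (s := Finset.range _), zero_add]
    · refine Finset.sum_congr rfl fun n hn ↦ ?_
      have : X < n ^ 2 := by
        rw [sq, ← Nat.sqrt_lt]
        exact (Finset.mem_Ico.mp hn).1
      by_cases hp : n.Prime <;> simp [primeLogSubOne, hp, this]
    · intro n hn
      have : ¬ X < n ^ 2 := by
        rw [sq, ← Nat.sqrt_lt]
        have := Finset.mem_range.mp hn
        omega
      simp [this]
  rw [Delta_eq_sum, e, ← Finset.sum_sub_distrib]
  calc _ ≤ ∑ p ∈ (Finset.range (X + 1)).filter Nat.Prime,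
        20 * (p : ℝ) ^ (-(11 / 10) : ℝ) * (X : ℝ) ^ (-(3 / 5) : ℝ) := by
        refine (Finset.abs_sum_le_sum_abs _ _).trans (Finset.sum_le_sum fun p hp ↦ ?_)
        obtain ⟨h1, h2⟩ := Finset.mem_filter.mp hp
        exact abs_log_div_sub_le h2 (by have := Finset.mem_range.mp h1; omega)
    _ = 20 * (∑ p ∈ (Finset.range (X + 1)).filter Nat.Prime, (p : ℝ) ^ (-(11 / 10) : ℝ)) *
        (X : ℝ) ^ (-(3 / 5) : ℝ) := by rw [Finset.mul_sum, Finset.sum_mul]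
    _ ≤ _ := by
        gcongr
        exact hs.sum_le_tsum _ fun n _ ↦ by positivity

lemma abs_sum_Ico_inv_sq_sub_le {x : ℝ} (hx : 4 ≤ x) :
    |∑ n ∈ Finset.Ico (Nat.sqrt ⌊x⌋₊ + 1) (⌊x⌋₊ + 1), 1 / (n : ℝ) ^ 2 - 1 / √x| ≤ 5 / x := by
  set X := ⌊x⌋₊ with hX
  set M := Nat.sqrt X with hM
  have hX4 : 4 ≤ X := Nat.le_floor (by exact_mod_cast hx)
  have hM2 : 2 ≤ M := Nat.le_sqrt.mpr (by omega)
  have hMX : M ≤ X := Nat.sqrt_le_self X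
  have hMR : (2 : ℝ) ≤ M := by exact_mod_cast hM2
  have h1 : (M : ℝ) ≤ √x := by
    refine Real.le_sqrt_of_sq_le ?_
    calc (M : ℝ) ^ 2 = ((M * M : ℕ) : ℝ) := by push_cast; ring
      _ ≤ X := by exact_mod_cast Nat.sqrt_le X
      _ ≤ x := Nat.floor_le (by linarith)
  have hx1 : x ≤ ((X + 1 : ℕ) : ℝ) := by push_cast; exact (Nat.lt_floor_add_one x).le
  have h2 : √x ≤ M + 1 := by
    refine Real.sqrt_le_iff.mpr ⟨by positivity, ?_⟩
    calc x ≤ ((X + 1 : ℕ) : ℝ) := hx1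
      _ ≤ (((M + 1) * (M + 1) : ℕ) : ℝ) := by exact_mod_cast Nat.lt_succ_sqrt X
      _ = _ := by push_cast; ring
  have hsum (Y : ℕ) (hY : M ≤ Y) :
      1 / ((M : ℝ) + 1) - 1 / ((Y : ℝ) + 1) ≤
        ∑ n ∈ Finset.Ico (M + 1) (Y + 1), 1 / (n : ℝ) ^ 2 ∧
      ∑ n ∈ Finset.Ico (M + 1) (Y + 1), 1 / (n : ℝ) ^ 2 ≤ 1 / (M : ℝ) - 1 / Y := by
    induction Y, hY using Nat.le_induction with
    | base => simp
    | succ Y hY ih =>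
      have hY0 : (2 : ℝ) ≤ Y := by exact_mod_cast hM2.trans hY
      rw [Finset.sum_Ico_succ_top (by omega)]
      push_cast
      have a1 : 1 / ((Y : ℝ) + 1) - 1 / ((Y : ℝ) + 1 + 1) ≤ 1 / ((Y : ℝ) + 1) ^ 2 := by
        rw [div_sub_div _ _ (by positivity) (by positivity), div_le_div_iff₀ (by positivity)
          (by positivity)]
        nlinarith
      have a2 : 1 / ((Y : ℝ) + 1) ^ 2 ≤ 1 / (Y : ℝ) - 1 / ((Y : ℝ) + 1) := by
        rw [div_sub_div _ _ (by positivity) (by positivity), div_le_div_iff₀ (by positivity)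
          (by positivity)]
        nlinarith
      constructor <;> linarith [ih.1, ih.2]
  obtain ⟨l, u⟩ := hsum X hMX
  have hs0 : 0 < √x := Real.sqrt_pos.mpr (by linarith)
  have b1 : 1 / ((M : ℝ) + 1) ≤ 1 / √x := one_div_le_one_div_of_le hs0 h2
  have b2 : 1 / √x ≤ 1 / (M : ℝ) := one_div_le_one_div_of_le (by linarith) h1
  have b3 : 1 / (M : ℝ) - 1 / ((M : ℝ) + 1) ≤ 4 / x := by
    rw [div_sub_div _ _ (by positivity) (by positivity), div_le_div_iff₀ (by positivity)
      (by linarith)]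
    have : x ≤ (M + 1) ^ 2 := by
      calc x = √x ^ 2 := (Real.sq_sqrt (by linarith)).symm
        _ ≤ _ := by gcongr
    nlinarith
  have b4 : 1 / ((X : ℝ) + 1) ≤ 1 / x :=
    one_div_le_one_div_of_le (by linarith) (by exact_mod_cast hx1)
  have b5 : (0 : ℝ) ≤ 1 / X := by positivity
  have b7 : 0 ≤ 1 / x := by positivity
  have b6 : 5 / x = 4 / x + 1 / x := by ring
  rw [abs_le]
  constructor <;> linarith

lemma rpow_neg_three_fifths_le {x : ℝ} (hx : 1 < x) :
    x ^ (-(3 / 5) : ℝ) ≤ 27000 / (√x * Real.log x ^ 3) := by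
  have hx0 : 0 < x := by linarith
  have hl : 0 < Real.log x := Real.log_pos hx
  have h := Real.log_pow_le_mul_rpow hx.le 3 10 (by norm_num) (by norm_num)
  norm_num at h
  rw [le_div_iff₀ (by positivity)]
  calc _ ≤ x ^ (-(3 / 5) : ℝ) * (√x * (27000 * x ^ (1 / 10 : ℝ))) := by gcongr
    _ = 27000 * (x ^ (-(3 / 5) : ℝ) * x ^ (1 / 2 : ℝ) * x ^ (1 / 10 : ℝ)) := by
        rw [Real.sqrt_eq_rpow]; ring
    _ = 27000 := by
        rw [← Real.rpow_add hx0, ← Real.rpow_add hx0]; norm_num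

/-- `Δ(x) = 1/√x + O(1/(√x (log x)^3))`. -/
theorem Delta_asymp :
    ∃ C x₀ : ℝ, 2 ≤ x₀ ∧ ∀ x : ℝ, x₀ ≤ x →
      |Delta x - 1 / Real.sqrt x| ≤ C / (Real.sqrt x * (Real.log x) ^ 3) := by
  obtain ⟨S, hS, h1⟩ := exists_abs_Delta_sub_sum_le
  obtain ⟨C, hC, h2⟩ := exists_abs_sum_primeLogSubOne_div_sq_le
  refine ⟨(2 * S + 5) * 27000 + 8 * C, 16, by norm_num, fun x hx ↦ ?_⟩
  set X := ⌊x⌋₊ with hX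
  set M := Nat.sqrt X with hM
  have hx0 : 0 < x := by linarith
  have hs0 : 0 < √x := Real.sqrt_pos.mpr hx0
  have hl : 0 < Real.log x := Real.log_pos (by linarith)
  have hX16 : 16 ≤ X := Nat.le_floor (by exact_mod_cast hx)
  have hM4 : 4 ≤ M := Nat.le_sqrt.mpr (by omega)
  have hMX : M ≤ X := Nat.sqrt_le_self X
  have hsM : √x ≤ ((M + 1 : ℕ) : ℝ) := by
    refine Real.sqrt_le_iff.mpr ⟨by positivity, ?_⟩
    calc x ≤ ((X + 1 : ℕ) : ℝ) := by push_cast; exact (Nat.lt_floor_add_one x).le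
      _ ≤ (((M + 1) * (M + 1) : ℕ) : ℝ) := by exact_mod_cast Nat.lt_succ_sqrt X
      _ = _ := by push_cast; ring
  have k1 : |Delta x - ∑ n ∈ Finset.Ico (M + 1) (X + 1), (primeLogSubOne n + 1) / (n : ℝ) ^ 2| ≤
      2 * S * x ^ (-(3 / 5) : ℝ) := by
    refine (h1 x (by linarith)).trans ?_
    have hxX : x / 2 ≤ X := by
      have := Nat.lt_floor_add_one x
      have : (16 : ℝ) ≤ X := by exact_mod_cast hX16
      linarith
    have h2 : (2 : ℝ) ^ (3 / 5 : ℝ) ≤ 2 := by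
      calc (2 : ℝ) ^ (3 / 5 : ℝ) ≤ 2 ^ (1 : ℝ) := by gcongr <;> norm_num
        _ = 2 := Real.rpow_one 2
    calc S * (X : ℝ) ^ (-(3 / 5) : ℝ) ≤ S * (x / 2) ^ (-(3 / 5) : ℝ) := by
          refine mul_le_mul_of_nonneg_left ?_ hS
          exact Real.rpow_le_rpow_of_nonpos (by positivity) hxX (by norm_num)
      _ = S * (2 ^ (3 / 5 : ℝ)) * x ^ (-(3 / 5) : ℝ) := by
          rw [Real.div_rpow hx0.le (by norm_num), Real.rpow_neg (x := 2) (by norm_num)]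
          field_simp
      _ ≤ S * 2 * x ^ (-(3 / 5) : ℝ) := by gcongr
      _ = _ := by ring
  have k2 : |∑ n ∈ Finset.Ico (M + 1) (X + 1), primeLogSubOne n / (n : ℝ) ^ 2| ≤
      8 * C / (√x * Real.log x ^ 3) := by
    refine (h2 (M + 1) (X + 1) (by omega) (by omega)).trans ?_
    have hlog : Real.log x / 2 ≤ Real.log ((M + 1 : ℕ) : ℝ) := by
      rw [← Real.log_sqrt hx0.le]
      exact Real.log_le_log hs0 hsM
    calc _ ≤ C / (√x * (Real.log x / 2) ^ 3) := by gcongr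
      _ = _ := by field_simp; norm_num
  have k3 := abs_sum_Ico_inv_sq_sub_le (x := x) (by linarith)
  simp only [← hX, ← hM] at k3
  have k4 : 5 / x ≤ 5 * x ^ (-(3 / 5) : ℝ) := by
    rw [div_eq_mul_inv, ← Real.rpow_neg_one]
    gcongr
    · linarith
    · norm_num
  have k5 := rpow_neg_three_fifths_le (x := x) (by linarith)
  have e : ∑ n ∈ Finset.Ico (M + 1) (X + 1), (primeLogSubOne n + 1) / (n : ℝ) ^ 2 =
      ∑ n ∈ Finset.Ico (M + 1) (X + 1), primeLogSubOne n / (n : ℝ) ^ 2 +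
      ∑ n ∈ Finset.Ico (M + 1) (X + 1), 1 / (n : ℝ) ^ 2 := by
    rw [← Finset.sum_add_distrib]
    exact Finset.sum_congr rfl fun n _ ↦ add_div _ _ _
  rw [e] at k1
  have k6 : ((2 * S + 5) * 27000 + 8 * C) / (√x * Real.log x ^ 3) =
      (2 * S + 5) * (27000 / (√x * Real.log x ^ 3)) + 8 * C / (√x * Real.log x ^ 3) := by
    ring
  rw [k6]
  have k7 : (2 * S + 5) * x ^ (-(3 / 5) : ℝ) ≤
      (2 * S + 5) * (27000 / (√x * Real.log x ^ 3)) := by gcongr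
  rw [abs_le] at k1 k2 k3 ⊢
  constructor <;> linarith [k1.1, k1.2, k2.1, k2.2, k3.1, k3.2]
end

section
/- For all x ≥ 2, Σ_{n ≤ x} Λ(n)/(n·log n) = log log x + γ + R(x)/log x − ∫_x^∞ R(t)/(t·(log t)²) dt, where the improper integral converges absolutely. -/
open Filter

/-- `R(x) = ∑_{n ≤ x} Λ(n)/n - log x + γ`. -/
noncomputable def Rfun (x : ℝ) : ℝ :=
  (∑ n ∈ Finset.Icc 1 ⌊x⌋₊, ArithmeticFunction.vonMangoldt n / n) -
    Real.log x + Real.eulerMascheroniConstant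

open MeasureTheory ArithmeticFunction Topology

theorem sum_vonMangoldt_mul_div (N : ℕ) :
    ∑ n ∈ Finset.Ioc 0 N, vonMangoldt n * ((N / n : ℕ) : ℝ) = Real.log (N.factorial) := by
  rw [← sum_Ioc_mul_zeta_eq_sum, vonMangoldt_mul_zeta]
  induction N with
  | zero => simp
  | succ n ih =>
    rw [← Finset.insert_Ioc_right_eq_Ioc_add_one (Nat.zero_le n), Finset.sum_insert (by simp), ih,
      Nat.factorial_succ, Nat.cast_mul, Real.log_mul (by positivity) (by positivity), log_apply]

/-- Mertens' first theorem. -/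
theorem exists_abs_sum_vonMangoldt_div_sub_log_le :
    ∃ C, ∀ t : ℝ, 1 ≤ t →
      |∑ n ∈ Finset.Icc 1 ⌊t⌋₊, vonMangoldt n / n - Real.log t| ≤ C := by
  refine ⟨Real.log 4 + 4, fun t ht ↦ ?_⟩
  set N := ⌊t⌋₊
  have hN1 : 1 ≤ N := (Nat.one_le_floor_iff _).mpr ht
  have hN1' : (1 : ℝ) ≤ N := by exact_mod_cast hN1
  have hN0 : (0 : ℝ) < N := by linarith
  have hNt : (N : ℝ) ≤ t := Nat.floor_le (by linarith)
  have htN : t < N + 1 := Nat.lt_floor_add_one t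
  have hI : Finset.Icc 1 N = Finset.Ioc 0 N := by ext; simp [Nat.succ_le_iff]
  rw [hI]
  set S := ∑ n ∈ Finset.Ioc 0 N, vonMangoldt n / n with hS
  have hfac := sum_vonMangoldt_mul_div N
  have h1 : Real.log N.factorial ≤ N * S := by
    rw [← hfac, hS, Finset.mul_sum]
    refine Finset.sum_le_sum fun n hn ↦ ?_
    have : vonMangoldt n * ((N / n : ℕ) : ℝ) ≤ vonMangoldt n * ((N : ℝ) / n) :=
      mul_le_mul_of_nonneg_left Nat.cast_div_le vonMangoldt_nonneg
    exact this.trans_eq (by ring)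
  have h2 : N * S ≤ Real.log N.factorial + Chebyshev.psi N := by
    rw [← hfac, hS, Finset.mul_sum, Chebyshev.psi, Nat.floor_natCast, ← Finset.sum_add_distrib]
    refine Finset.sum_le_sum fun n hn ↦ ?_
    have hfl : (N : ℝ) / n ≤ ((N / n : ℕ) : ℝ) + 1 := by
      rw [← Nat.floor_div_eq_div (K := ℝ)]
      exact (Nat.lt_floor_add_one _).le
    have := mul_le_mul_of_nonneg_left hfl (vonMangoldt_nonneg (n := n))
    calc (N : ℝ) * (vonMangoldt n / n) = vonMangoldt n * ((N : ℝ) / n) := by ring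
      _ ≤ _ := this
      _ = _ := by ring
  have h3 : Chebyshev.psi N ≤ (Real.log 4 + 4) * N := Chebyshev.psi_le_const_mul_self hN0.le
  have h4 : Real.log N.factorial ≤ N * Real.log N := by
    rw [← Real.log_pow]
    exact Real.log_le_log (by positivity) (by exact_mod_cast Nat.factorial_le_pow N)
  have h5 : N * Real.log N - N ≤ Real.log N.factorial := by
    have := Stirling.le_log_factorial_stirling (n := N) (by omega)
    have h6 : 0 ≤ Real.log (2 * Real.pi) := Real.log_nonneg (by nlinarith [Real.pi_gt_three])
    have h7 : 0 ≤ Real.log N := Real.log_nonneg hN1'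
    linarith
  have h8 : S ≤ Real.log N + (Real.log 4 + 4) := by
    refine le_of_mul_le_mul_left ?_ hN0
    linarith
  have h9 : Real.log N - 1 ≤ S := by
    refine le_of_mul_le_mul_left ?_ hN0
    linarith
  have h10 : Real.log N ≤ Real.log t := Real.log_le_log hN0 hNt
  have h11 : Real.log t ≤ Real.log 2 + Real.log N := by
    rw [← Real.log_mul (by norm_num) hN0.ne']
    exact Real.log_le_log (by linarith) (by linarith)
  have h12 : Real.log 2 ≤ Real.log 4 := Real.log_le_log (by norm_num) (by norm_num)
  rw [abs_le]
  constructor <;> linarith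

theorem measurable_Rfun : Measurable Rfun := by
  unfold Rfun
  have : Measurable fun t : ℝ ↦ ∑ n ∈ Finset.Icc 1 ⌊t⌋₊, vonMangoldt n / n :=
    (measurable_from_nat (f := fun N ↦ ∑ n ∈ Finset.Icc 1 N, vonMangoldt n / n)).comp
      Nat.measurable_floor
  exact (this.sub Real.measurable_log).add_const _

theorem exists_abs_Rfun_le : ∃ C, ∀ t : ℝ, 1 ≤ t → |Rfun t| ≤ C := by
  obtain ⟨C, hC⟩ := exists_abs_sum_vonMangoldt_div_sub_log_le
  exact ⟨C + |Real.eulerMascheroniConstant|, fun t ht ↦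
    (abs_add_le _ _).trans (add_le_add_left (hC t ht) _)⟩

theorem integrableOn_Rfun_div {x : ℝ} (hx : 1 < x) :
    IntegrableOn (fun t : ℝ ↦ Rfun t / (t * Real.log t ^ 2)) (Set.Ioi x) := by
  obtain ⟨C, hC⟩ := exists_abs_Rfun_le
  refine Integrable.mono' ((integrableOn_inv_div_log_sq_Ioi hx).const_mul C)
    (measurable_Rfun.div (measurable_id.mul (Real.measurable_log.pow_const 2))).aestronglyMeasurable
    ((ae_restrict_iff' measurableSet_Ioi).mpr (ae_of_all _ fun t ht ↦ ?_))
  have ht1 : 1 < t := hx.trans ht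
  have h0 : 0 ≤ t * Real.log t ^ 2 := by positivity
  rw [Real.norm_eq_abs, abs_div, abs_of_nonneg h0]
  calc |Rfun t| / (t * Real.log t ^ 2) ≤ C / (t * Real.log t ^ 2) :=
        div_le_div_of_nonneg_right (hC t ht1.le) h0
    _ = _ := by simp [field]

theorem sum_vonMangoldt_div_log_eq_add_intervalIntegral {x : ℝ} (hx : 2 ≤ x) :
    ∑ n ∈ Finset.Icc 2 ⌊x⌋₊, vonMangoldt n / (n * Real.log n) =
      Real.log (Real.log x) + Rfun x / Real.log x +
        (1 - Real.log (Real.log 2) - Real.eulerMascheroniConstant / Real.log 2 +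
          ∫ t in (2 : ℝ)..x, Rfun t / (t * Real.log t ^ 2)) := by
  have hlog : ∀ t ∈ Set.Icc 2 x, t ≠ 0 ∧ Real.log t ≠ 0 := fun t ht ↦
    ⟨by linarith [ht.1], (Real.log_pos (by linarith [ht.1])).ne'⟩
  have hIcc : ∀ m : ℕ, ∑ n ∈ Finset.Icc 0 m, vonMangoldt n / (n : ℝ) =
      ∑ n ∈ Finset.Icc 1 m, vonMangoldt n / (n : ℝ) := fun m ↦ by
    refine (Finset.sum_subset (Finset.Icc_subset_Icc_left zero_le_one) fun n hn hn' ↦ ?_).symm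
    have : n = 0 := by simp at hn hn'; omega
    simp [this]
  have habel := sum_mul_eq_sub_integral_mul₁ (fun n ↦ vonMangoldt n / (n : ℝ))
    (f := fun t ↦ (Real.log t)⁻¹) (by simp) (by simp) x
    (fun t ht ↦ by obtain ⟨_, _⟩ := hlog t ht; fun_prop)
    (ContinuousOn.integrableOn_Icc fun t ht ↦ ContinuousWithinAt.congr
      (by
        obtain ⟨h0, h1⟩ := hlog t ht
        have h2 : Real.log t ^ 2 ≠ 0 := pow_ne_zero 2 h1
        exact ContinuousAt.continuousWithinAt
          (f := fun t : ℝ ↦ -t⁻¹ / Real.log t ^ 2) (by fun_prop))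
      (fun _ _ ↦ Real.deriv_inv_log_apply) Real.deriv_inv_log_apply)
  have hL : ∑ n ∈ Finset.Icc 2 ⌊x⌋₊, vonMangoldt n / (n * Real.log n) =
      ∑ n ∈ Finset.Icc 0 ⌊x⌋₊, (Real.log n)⁻¹ * (vonMangoldt n / n) := by
    rw [← Finset.sum_subset (Finset.Icc_subset_Icc_left (Nat.zero_le 2)) (fun n hn hn' ↦ ?_)]
    · exact Finset.sum_congr rfl fun n _ ↦ by ring
    · have : n = 0 ∨ n = 1 := by simp at hn hn'; omega
      rcases this with rfl | rfl <;> simp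
  have hG : ∀ t ∈ Set.uIcc 2 x, HasDerivAt
      (fun t ↦ Real.log (Real.log t) + Real.eulerMascheroniConstant * (Real.log t)⁻¹)
      (t⁻¹ / Real.log t + Real.eulerMascheroniConstant * (-t⁻¹ / Real.log t ^ 2)) t := by
    intro t ht
    rw [Set.uIcc_of_le hx] at ht
    obtain ⟨h0, h1⟩ := hlog t ht
    exact ((Real.hasDerivAt_log h0).log h1).add
      (((Real.hasDerivAt_log h0).inv h1).const_mul _)
  have hGint : IntervalIntegrable (fun t : ℝ ↦ t⁻¹ / Real.log t +
      Real.eulerMascheroniConstant * (-t⁻¹ / Real.log t ^ 2)) volume 2 x := by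
    refine ContinuousOn.intervalIntegrable fun t ht ↦ ContinuousAt.continuousWithinAt ?_
    rw [Set.uIcc_of_le hx] at ht
    obtain ⟨h0, h1⟩ := hlog t ht
    have h2 : Real.log t ^ 2 ≠ 0 := pow_ne_zero 2 h1
    fun_prop
  have hFint : IntervalIntegrable (fun t : ℝ ↦ Rfun t / (t * Real.log t ^ 2)) volume 2 x :=
    (intervalIntegrable_iff_integrableOn_Ioc_of_le hx).mpr
      ((integrableOn_Rfun_div one_lt_two).mono_set Set.Ioc_subset_Ioi_self)
  have hsplit : ∫ t in Set.Ioc 2 x, deriv (fun t ↦ (Real.log t)⁻¹) t *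
        ∑ n ∈ Finset.Icc 0 ⌊t⌋₊, vonMangoldt n / (n : ℝ) =
      -((∫ t in (2 : ℝ)..x, Rfun t / (t * Real.log t ^ 2)) +
        ∫ t in (2 : ℝ)..x, (t⁻¹ / Real.log t +
          Real.eulerMascheroniConstant * (-t⁻¹ / Real.log t ^ 2))) := by
    rw [← intervalIntegral.integral_add hFint hGint, ← intervalIntegral.integral_neg,
      ← intervalIntegral.integral_of_le hx]
    refine intervalIntegral.integral_congr fun t ht ↦ ?_
    rw [Set.uIcc_of_le hx] at ht
    obtain ⟨h0, h1⟩ := hlog t ht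
    simp only [hIcc, Real.deriv_inv_log_apply, Rfun]
    field_simp
    ring
  rw [hL, habel, hsplit, intervalIntegral.integral_eq_sub_of_hasDerivAt hG hGint, hIcc]
  have h1 := (hlog x ⟨hx, le_rfl⟩).2
  have h2 := (hlog 2 ⟨le_rfl, hx⟩).2
  simp only [Rfun]
  field_simp
  ring

theorem tendsto_sum_vonMangoldt_div_log_sub_log_log :
    Tendsto (fun x : ℝ ↦ ∑ n ∈ Finset.Icc 2 ⌊x⌋₊, vonMangoldt n / (n * Real.log n) -
        Real.log (Real.log x)) atTop
      (𝓝 (1 - Real.log (Real.log 2) - Real.eulerMascheroniConstant / Real.log 2 +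
        ∫ t in Set.Ioi (2 : ℝ), Rfun t / (t * Real.log t ^ 2))) := by
  have hR : Tendsto (fun x ↦ Rfun x / Real.log x) atTop (𝓝 0) := by
    obtain ⟨C, hC⟩ := exists_abs_Rfun_le
    have hbd : IsBoundedUnder (· ≤ ·) atTop (norm ∘ Rfun) := isBoundedUnder_of_eventually_le
      (a := C) ((eventually_ge_atTop 1).mono fun t ht ↦ hC t ht)
    simpa [div_eq_inv_mul] using
      Real.tendsto_log_atTop.inv_tendsto_atTop.zero_mul_isBoundedUnder_le hbd
  have hI := intervalIntegral_tendsto_integral_Ioi 2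
    (integrableOn_Rfun_div one_lt_two) tendsto_id
  have := hR.add (hI.const_add (1 - Real.log (Real.log 2) -
    Real.eulerMascheroniConstant / Real.log 2))
  rw [zero_add] at this
  refine this.congr' ((eventually_ge_atTop 2).mono fun x hx ↦ ?_)
  simp only [sum_vonMangoldt_div_log_eq_add_intervalIntegral hx, id]
  ring

theorem hasSum_primes_prod_nat {f : ℕ → ℝ} {a : ℝ} (hf : Function.support f ⊆ {n | IsPrimePow n})
    (ha : HasSum f a) : HasSum (fun q : Nat.Primes × ℕ ↦ f ((q.1 : ℕ) ^ (q.2 + 1))) a :=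
  Nat.Primes.prodNatEquiv.hasSum_iff.mpr ((hasSum_subtype_iff_of_support_subset hf).mpr ha)

/-- `log ζ(s) = ∑ Λ(n) / log n * n⁻ˢ` for real `s > 1`. -/
theorem hasSum_vonMangoldt_div_log_mul_rpow {s : ℝ} (hs : 1 < s) :
    HasSum (fun n : ℕ ↦ vonMangoldt n / Real.log n * (n : ℝ) ^ (-s))
      (Real.log (∑' n : ℕ, 1 / (n : ℝ) ^ s)) := by
  have hbase : Summable fun n : ℕ ↦ (n : ℝ) ^ (-s) := Real.summable_nat_rpow.mpr (by linarith)
  have hterm_nonneg (n : ℕ) : 0 ≤ vonMangoldt n / Real.log n * (n : ℝ) ^ (-s) :=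
    mul_nonneg (div_nonneg vonMangoldt_nonneg (Real.log_natCast_nonneg n)) (by positivity)
  have hsum : Summable fun n : ℕ ↦ vonMangoldt n / Real.log n * (n : ℝ) ^ (-s) :=
    hbase.of_nonneg_of_le hterm_nonneg fun n ↦ mul_le_of_le_one_left (by positivity)
      (div_le_one_of_le₀ vonMangoldt_le_log (Real.log_natCast_nonneg n))
  have hsupp : Function.support (fun n : ℕ ↦ vonMangoldt n / Real.log n * (n : ℝ) ^ (-s)) ⊆
      {n | IsPrimePow n} := by
    intro n hn
    by_contra h
    exact hn (by simp [vonMangoldt_eq_zero_iff.mpr h])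
  have hlt (p : Nat.Primes) : ((p : ℕ) : ℝ) ^ (-s) < 1 :=
    Real.rpow_lt_one_of_one_lt_of_neg (by exact_mod_cast p.prop.one_lt) (by linarith)
  have hpos (p : Nat.Primes) : 0 < ((p : ℕ) : ℝ) ^ (-s) :=
    Real.rpow_pos_of_pos (by exact_mod_cast p.prop.pos) _
  have hprod : HasSum (fun q : Nat.Primes × ℕ ↦ (((q.1 : ℕ) : ℝ) ^ (-s)) ^ (q.2 + 1) / (q.2 + 1))
      (∑' n : ℕ, vonMangoldt n / Real.log n * (n : ℝ) ^ (-s)) := by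
    refine (hasSum_primes_prod_nat hsupp hsum.hasSum).congr_fun ?_
    rintro ⟨p, k⟩
    have hlog : Real.log (p : ℕ) ≠ 0 := (Real.log_pos (by exact_mod_cast p.prop.one_lt)).ne'
    have hk : (k : ℝ) + 1 ≠ 0 := by positivity
    simp only [vonMangoldt_apply_pow k.succ_ne_zero, vonMangoldt_apply_prime p.prop, Nat.cast_pow,
      Real.log_pow, Nat.cast_add, Nat.cast_one]
    rw [← Real.rpow_natCast, ← Real.rpow_natCast, ← Real.rpow_mul (by positivity),
      ← Real.rpow_mul (by positivity), mul_comm (-s)]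
    field_simp
  have hfib (p : Nat.Primes) : HasSum (fun k : ℕ ↦ (((p : ℕ) : ℝ) ^ (-s)) ^ (k + 1) / (k + 1))
      (-Real.log (1 - ((p : ℕ) : ℝ) ^ (-s))) :=
    Real.hasSum_pow_div_log_of_abs_lt_one (by rw [abs_of_pos (hpos p)]; exact hlt p)
  have hprimes := HasSum.prod_fiberwise hprod hfib
  have hs' : 1 < (s : ℂ).re := by simpa
  have heuler := riemannZeta_eulerProduct_exp_log hs'
  rw [zeta_eq_tsum_one_div_nat_cpow hs'] at heuler
  have hlhs : ∑' p : Nat.Primes, -Complex.log (1 - (p : ℂ) ^ (-(s : ℂ))) =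
      ((∑' n : ℕ, vonMangoldt n / Real.log n * (n : ℝ) ^ (-s) : ℝ) : ℂ) := by
    rw [← hprimes.tsum_eq, Complex.ofReal_tsum]
    refine tsum_congr fun p ↦ ?_
    rw [Complex.ofReal_neg, Complex.ofReal_log (by linarith [hlt p]), Complex.ofReal_sub,
      Complex.ofReal_cpow (by positivity)]
    simp
  have hrhs : ∑' n : ℕ, 1 / (n : ℂ) ^ (s : ℂ) = ((∑' n : ℕ, 1 / (n : ℝ) ^ s : ℝ) : ℂ) := by
    rw [Complex.ofReal_tsum]
    refine tsum_congr fun n ↦ ?_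
    rw [Complex.ofReal_div, Complex.ofReal_cpow (by positivity)]
    simp
  rw [hlhs, hrhs, ← Complex.ofReal_exp, Complex.ofReal_inj] at heuler
  rw [← heuler, Real.log_exp]
  exact hsum.hasSum

/-- Abelian theorem for the Laplace transform. -/
theorem tendsto_mul_integral_mul_exp_neg {f : ℝ → ℝ} {L C : ℝ} (hf : Measurable f)
    (hC : ∀ v, 0 < v → |f v| ≤ C) (hL : Tendsto f atTop (𝓝 L)) :
    Tendsto (fun δ : ℝ ↦ δ * ∫ v in Set.Ioi 0, f v * Real.exp (-δ * v)) (𝓝[>] 0) (𝓝 L) := by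
  have hlim : Tendsto (fun δ : ℝ ↦ ∫ u in Set.Ioi 0, f (δ⁻¹ * u) * Real.exp (-u)) (𝓝[>] 0)
      (𝓝 (∫ u in Set.Ioi 0, L * Real.exp (-u))) := by
    refine tendsto_integral_filter_of_dominated_convergence (fun u ↦ C * Real.exp (-u)) ?_ ?_
      ((integrableOn_exp_neg_Ioi 0).const_mul C) ?_
    · exact Eventually.of_forall fun δ ↦ ((hf.comp (measurable_const_mul _)).mul
        (Real.measurable_exp.comp measurable_neg)).aestronglyMeasurable
    · filter_upwards [self_mem_nhdsWithin] with δ hδ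
      refine (ae_restrict_iff' measurableSet_Ioi).mpr (ae_of_all _ fun u hu ↦ ?_)
      rw [norm_mul, Real.norm_eq_abs, Real.norm_of_nonneg (Real.exp_pos _).le]
      exact mul_le_mul_of_nonneg_right (hC _ (mul_pos (inv_pos.mpr hδ) hu)) (Real.exp_pos _).le
    · refine (ae_restrict_iff' measurableSet_Ioi).mpr (ae_of_all _ fun u hu ↦ ?_)
      exact (hL.comp (tendsto_inv_nhdsGT_zero.atTop_mul_const hu)).mul_const _
  rw [integral_const_mul, integral_exp_neg_Ioi_zero, mul_one] at hlim
  refine hlim.congr' ?_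
  filter_upwards [self_mem_nhdsWithin] with δ hδ
  have hδ' : δ ≠ 0 := (Set.mem_Ioi.mp hδ).ne'
  have := integral_comp_mul_left_Ioi (fun u ↦ f (δ⁻¹ * u) * Real.exp (-u)) 0 hδ
  simp only [inv_mul_cancel_left₀ hδ', mul_zero, smul_eq_mul] at this
  simp only [neg_mul]
  rw [this, mul_inv_cancel_left₀ hδ']

/-- The Laplace transform of a step function with jumps `c i` at `τ i`. -/
theorem hasSum_mul_exp_neg_mul {ι : Type*} [Countable ι] {c τ : ι → ℝ} {δ : ℝ} (hδ : 0 < δ)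
    (hτ : ∀ i, 0 ≤ τ i) (hc : Summable fun i ↦ |c i| * Real.exp (-δ * τ i)) :
    HasSum (fun i ↦ c i * Real.exp (-δ * τ i))
      (δ * ∫ v in Set.Ioi 0, (∑' i, if τ i ≤ v then c i else 0) * Real.exp (-δ * v)) := by
  have hind (i : ι) (a : ℝ) (v : ℝ) : (if τ i ≤ v then a else 0) * Real.exp (-δ * v) =
      (Set.Ici (τ i)).indicator (fun v ↦ a * Real.exp (-δ * v)) v := by
    by_cases h : τ i ≤ v <;> simp [h]
  have hintegrable (i : ι) (a : ℝ) :
      Integrable (fun v ↦ (if τ i ≤ v then a else 0) * Real.exp (-δ * v))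
        (volume.restrict (Set.Ioi 0)) := by
    simp only [hind]
    refine Integrable.indicator ?_ measurableSet_Ici
    exact (integrableOn_exp_mul_Ioi (neg_neg_of_pos hδ) 0).const_mul a
  have hval (i : ι) (a : ℝ) :
      ∫ v in Set.Ioi 0, (if τ i ≤ v then a else 0) * Real.exp (-δ * v) =
        δ⁻¹ * (a * Real.exp (-δ * τ i)) := by
    simp only [hind]
    rw [← integral_Ici_eq_integral_Ioi, setIntegral_indicator measurableSet_Ici, Set.Ici_inter_Ici,
      sup_of_le_right (hτ i), integral_Ici_eq_integral_Ioi, integral_const_mul,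
      integral_exp_mul_Ioi (neg_neg_of_pos hδ)]
    field_simp
  have h := hasSum_integral_of_summable_integral_norm (fun i ↦ hintegrable i (c i)) (by
    have hnorm (i : ι) (v : ℝ) : ‖(if τ i ≤ v then c i else 0) * Real.exp (-δ * v)‖ =
        (if τ i ≤ v then |c i| else 0) * Real.exp (-δ * v) := by
      split_ifs <;> simp
    simp only [hnorm, hval]
    exact hc.mul_left _)
  simp only [hval, tsum_mul_right] at h
  simpa [mul_inv_cancel_left₀ hδ.ne'] using h.mul_left δ

theorem tendsto_harmonic_floor_sub_log :
    Tendsto (fun v : ℝ ↦ (harmonic ⌊v⌋₊ : ℝ) - Real.log v) atTop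
      (𝓝 Real.eulerMascheroniConstant) := by
  have h1 := Real.tendsto_harmonic_sub_log.comp (tendsto_nat_floor_atTop (α := ℝ))
  have h2 := (tendsto_nat_floor_div_atTop (R := ℝ)).log one_ne_zero
  rw [Real.log_one] at h2
  have h3 := h1.add h2
  rw [add_zero] at h3
  refine h3.congr' ((eventually_ge_atTop 1).mono fun v hv ↦ ?_)
  have hfl : (⌊v⌋₊ : ℝ) ≠ 0 := by
    exact_mod_cast (Nat.one_le_floor_iff v).mpr hv |>.trans_lt' zero_lt_one |>.ne'
  rw [Function.comp_apply, Real.log_div hfl (by positivity)]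
  ring

theorem hasSum_ite_vonMangoldt_div_log (v : ℝ) :
    HasSum (fun n : ℕ ↦ if Real.log n ≤ v then vonMangoldt n / (n * Real.log n) else 0)
      (∑ n ∈ Finset.Icc 2 ⌊Real.exp v⌋₊, vonMangoldt n / (n * Real.log n)) := by
  have hmem (n : ℕ) (hn : 2 ≤ n) : n ∈ Finset.Icc 2 ⌊Real.exp v⌋₊ ↔ Real.log n ≤ v := by
    rw [Finset.mem_Icc, Nat.le_floor_iff (Real.exp_pos v).le,
      Real.log_le_iff_le_exp (by exact_mod_cast (by omega : 0 < n))]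
    exact and_iff_right hn
  have := hasSum_sum_of_ne_finset_zero (L := .unconditional ℕ)
    (s := Finset.Icc 2 ⌊Real.exp v⌋₊)
    (f := fun n : ℕ ↦ if Real.log n ≤ v then vonMangoldt n / (n * Real.log n) else 0)
    fun n hn ↦ by
      rcases Nat.lt_or_ge n 2 with h | h
      · interval_cases n <;> simp
      · exact if_neg (mt (hmem n h).mpr hn)
  convert! this using 1
  exact Finset.sum_congr rfl fun n hn ↦
    (if_pos ((hmem n (Finset.mem_Icc.mp hn).1).mp hn)).symm

theorem hasSum_ite_neg_inv {v : ℝ} (hv : 0 ≤ v) :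
    HasSum (fun k : ℕ ↦ if (k : ℝ) ≤ v then -(k : ℝ)⁻¹ else 0) (-(harmonic ⌊v⌋₊ : ℝ)) := by
  have := hasSum_sum_of_ne_finset_zero (L := .unconditional ℕ) (s := Finset.Icc 1 ⌊v⌋₊)
    (f := fun k : ℕ ↦ if (k : ℝ) ≤ v then -(k : ℝ)⁻¹ else 0)
    fun k hk ↦ by
      rcases Nat.eq_zero_or_pos k with rfl | h
      · simp
      · rw [Finset.mem_Icc, Nat.le_floor_iff hv] at hk
        exact if_neg fun h' ↦ hk ⟨h, h'⟩
  convert! this using 1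
  rw [harmonic_eq_sum_Icc]
  push_cast
  rw [← Finset.sum_neg_distrib]
  refine Finset.sum_congr rfl fun k hk ↦ ?_
  rw [Finset.mem_Icc, Nat.le_floor_iff hv] at hk
  rw [if_pos hk.2]

theorem hasSum_inv_mul_exp_neg {δ : ℝ} (hδ : 0 < δ) :
    HasSum (fun k : ℕ ↦ (k : ℝ)⁻¹ * Real.exp (-δ * k)) (-Real.log (1 - Real.exp (-δ))) := by
  have h := Real.hasSum_pow_div_log_of_abs_lt_one (x := Real.exp (-δ))
    (by rw [abs_of_pos (Real.exp_pos _)]; exact Real.exp_lt_one_iff.mpr (by linarith))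
  rw [← add_zero (-Real.log _)]
  convert! (hasSum_nat_add_iff (f := fun k : ℕ ↦ (k : ℝ)⁻¹ * Real.exp (-δ * k)) 1).mp
    (h.congr_fun fun k ↦ ?_) using 2
  · simp
  · rw [← Real.exp_nat_mul, mul_comm (-δ), div_eq_inv_mul]
    push_cast
    rfl

theorem mul_integral_vonMangoldt_sub_harmonic {δ : ℝ} (hδ : 0 < δ) :
    δ * ∫ v in Set.Ioi 0, (∑ n ∈ Finset.Icc 2 ⌊Real.exp v⌋₊, vonMangoldt n / (n * Real.log n) -
        harmonic ⌊v⌋₊) * Real.exp (-δ * v) =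
      Real.log (∑' n : ℕ, 1 / (n : ℝ) ^ (1 + δ)) + Real.log (1 - Real.exp (-δ)) := by
  set c : ℕ ⊕ ℕ → ℝ :=
    Sum.elim (fun n ↦ vonMangoldt n / (n * Real.log n)) (fun k ↦ -(k : ℝ)⁻¹) with hc
  set τ : ℕ ⊕ ℕ → ℝ := Sum.elim (fun n ↦ Real.log n) (fun k ↦ (k : ℝ)) with hτ
  have hterm (n : ℕ) : vonMangoldt n / (n * Real.log n) * Real.exp (-δ * Real.log n) =
      vonMangoldt n / Real.log n * (n : ℝ) ^ (-(1 + δ)) := by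
    rcases Nat.eq_zero_or_pos n with rfl | hn
    · simp
    · have hn' : (0 : ℝ) < n := by exact_mod_cast hn
      rw [neg_add, Real.rpow_add hn', Real.rpow_neg_one, Real.rpow_def_of_pos hn' (-δ),
        mul_comm (Real.log n) (-δ)]
      ring
  have hΛ : HasSum (fun n : ℕ ↦ vonMangoldt n / (n * Real.log n) * Real.exp (-δ * Real.log n))
      (Real.log (∑' n : ℕ, 1 / (n : ℝ) ^ (1 + δ))) := by
    simp only [hterm]
    exact hasSum_vonMangoldt_div_log_mul_rpow (by linarith)
  have hH := hasSum_inv_mul_exp_neg hδ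
  have hsum : HasSum (fun i ↦ c i * Real.exp (-δ * τ i))
      (Real.log (∑' n : ℕ, 1 / (n : ℝ) ^ (1 + δ)) + Real.log (1 - Real.exp (-δ))) := by
    refine HasSum.sum hΛ ?_
    convert! hH.neg using 1
    · ext k
      simp [hc, hτ]
    · simp
  have hτ0 (i : ℕ ⊕ ℕ) : 0 ≤ τ i := by
    rcases i with n | k
    · exact Real.log_natCast_nonneg n
    · exact Nat.cast_nonneg k
  have habs : Summable fun i ↦ |c i| * Real.exp (-δ * τ i) := by
    simpa only [Real.norm_eq_abs, abs_mul, Real.abs_exp] using hsum.summable.norm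
  rw [← (hasSum_mul_exp_neg_mul hδ hτ0 habs).unique hsum]
  congr 1
  refine setIntegral_congr_fun measurableSet_Ioi fun v hv ↦ ?_
  have h := HasSum.sum (f := fun i ↦ if τ i ≤ v then c i else 0)
    (hasSum_ite_vonMangoldt_div_log v) (hasSum_ite_neg_inv (le_of_lt hv))
  simp only [h.tsum_eq, sub_eq_add_neg]

theorem tendsto_log_zeta_add_log_one_sub_exp_neg :
    Tendsto (fun δ : ℝ ↦ Real.log (∑' n : ℕ, 1 / (n : ℝ) ^ (1 + δ)) +
      Real.log (1 - Real.exp (-δ))) (𝓝[>] 0) (𝓝 0) := by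
  have hshift : Tendsto (fun δ : ℝ ↦ 1 + δ) (𝓝[>] 0) (𝓝[>] 1) := by
    refine tendsto_nhdsWithin_iff.mpr ⟨?_, ?_⟩
    · exact tendsto_nhdsWithin_of_tendsto_nhds
        (Continuous.tendsto' (by fun_prop) _ _ (add_zero 1))
    · filter_upwards [self_mem_nhdsWithin] with δ hδ
      simpa using hδ
  have hζ := tendsto_sub_mul_tsum_nat_rpow.comp hshift
  have hexp : Tendsto (fun δ : ℝ ↦ (1 - Real.exp (-δ)) / δ) (𝓝[>] 0) (𝓝 1) := by
    have hd : HasDerivAt (fun δ : ℝ ↦ -Real.exp (-δ)) 1 0 := by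
      simpa using! ((hasDerivAt_neg (0 : ℝ)).exp).neg
    refine ((hasDerivAt_iff_tendsto_slope_zero.mp hd).mono_left
      (nhdsWithin_mono 0 fun δ hδ ↦ ne_of_gt hδ)).congr fun δ ↦ ?_
    simp
    ring
  have h := (hζ.log one_ne_zero).add (hexp.log one_ne_zero)
  simp only [Real.log_one, add_zero, Function.comp_apply, add_sub_cancel_left] at h
  have hne : ∀ᶠ δ in 𝓝[>] (0 : ℝ), δ * ∑' n : ℕ, 1 / (n : ℝ) ^ (1 + δ) ≠ 0 := by
    simpa using hζ.eventually_ne one_ne_zero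
  refine h.congr' ?_
  filter_upwards [self_mem_nhdsWithin, hne] with δ hδ hδne
  have hδ0 : (0 : ℝ) < δ := hδ
  have hpos : 0 < 1 - Real.exp (-δ) := by
    linarith [Real.exp_lt_one_iff.mpr (show -δ < 0 by linarith)]
  rw [Real.log_mul hδ0.ne' (right_ne_zero_of_mul hδne), Real.log_div hpos.ne' hδ0.ne']
  ring

theorem exists_abs_le_of_monotone_sub_monotone {f g : ℝ → ℝ} {L : ℝ} (hf : Monotone f)
    (hg : Monotone g) (hL : Tendsto (fun v ↦ f v - g v) atTop (𝓝 L)) :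
    ∃ C, ∀ v, 0 < v → |f v - g v| ≤ C := by
  obtain ⟨V, hV⟩ := eventually_atTop.mp (hL.abs.eventually_le_const (lt_add_one |L|))
  refine ⟨max (|L| + 1) (max (f V - g 0) (g V - f 0)), fun v hv ↦ ?_⟩
  rcases le_total V v with h | h
  · exact (hV v h).trans (le_max_left _ _)
  · refine le_max_of_le_right (abs_le'.mpr ⟨le_max_of_le_left ?_, le_max_of_le_right ?_⟩)
    · linarith [hf h, hg hv.le]
    · linarith [hg h, hf hv.le]

/-- The constant in Mertens' second theorem for the von Mangoldt function. -/
theorem integral_Rfun_div_eq :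
    1 - Real.log (Real.log 2) - Real.eulerMascheroniConstant / Real.log 2 +
      ∫ t in Set.Ioi (2 : ℝ), Rfun t / (t * Real.log t ^ 2) = Real.eulerMascheroniConstant := by
  set K := 1 - Real.log (Real.log 2) - Real.eulerMascheroniConstant / Real.log 2 +
      ∫ t in Set.Ioi (2 : ℝ), Rfun t / (t * Real.log t ^ 2)
  set A : ℝ → ℝ := fun v ↦
    ∑ n ∈ Finset.Icc 2 ⌊Real.exp v⌋₊, vonMangoldt n / (n * Real.log n) with hA
  set H : ℝ → ℝ := fun v ↦ (harmonic ⌊v⌋₊ : ℝ) with hH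
  have hAmono : Monotone A := fun u v huv ↦ Finset.sum_le_sum_of_subset_of_nonneg
    (Finset.Icc_subset_Icc_right (Nat.floor_mono (Real.exp_le_exp.mpr huv))) fun n _ _ ↦
      div_nonneg vonMangoldt_nonneg (mul_nonneg n.cast_nonneg (Real.log_natCast_nonneg n))
  have hHmono : Monotone H := fun u v huv ↦ by
    simp only [hH, harmonic_eq_sum_Icc]
    push_cast
    exact Finset.sum_le_sum_of_subset_of_nonneg
      (Finset.Icc_subset_Icc_right (Nat.floor_mono huv)) fun n _ _ ↦ by positivity
  have hlim : Tendsto (fun v ↦ A v - H v) atTop (𝓝 (K - Real.eulerMascheroniConstant)) := by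
    refine ((tendsto_sum_vonMangoldt_div_log_sub_log_log.comp Real.tendsto_exp_atTop).sub
      tendsto_harmonic_floor_sub_log).congr fun v ↦ ?_
    simp only [Function.comp_apply, Real.log_exp, hA, hH]
    ring
  obtain ⟨C, hC⟩ := exists_abs_le_of_monotone_sub_monotone hAmono hHmono hlim
  have h1 := tendsto_mul_integral_mul_exp_neg (hAmono.measurable.sub hHmono.measurable) hC hlim
  have h2 := tendsto_log_zeta_add_log_one_sub_exp_neg.congr' (by
    filter_upwards [self_mem_nhdsWithin] with δ hδ
    exact (mul_integral_vonMangoldt_sub_harmonic hδ).symm)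
  exact sub_eq_zero.mp (tendsto_nhds_unique h1 h2)

/-- For `x ≥ 2`, `∑_{n ≤ x} Λ(n)/(n log n) = log log x + γ + R(x)/log x
- ∫_x^∞ R(t)/(t (log t)^2) dt`, the improper integral converging absolutely. -/
theorem sum_vonMangoldt_div_log (x : ℝ) (hx : 2 ≤ x) :
    MeasureTheory.IntegrableOn (fun t : ℝ => Rfun t / (t * (Real.log t) ^ 2))
      (Set.Ioi x) ∧
    ∑ n ∈ Finset.Icc 2 ⌊x⌋₊, ArithmeticFunction.vonMangoldt n / (n * Real.log n) =
      Real.log (Real.log x) + Real.eulerMascheroniConstant + Rfun x / Real.log x -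
        ∫ t in Set.Ioi x, Rfun t / (t * (Real.log t) ^ 2) := by
  have hintegrable : IntegrableOn (fun t : ℝ ↦ Rfun t / (t * Real.log t ^ 2)) (Set.Ioi x) :=
    integrableOn_Rfun_div (by linarith)
  refine ⟨hintegrable, ?_⟩
  have hadd := intervalIntegral.integral_interval_add_Ioi (integrableOn_Rfun_div one_lt_two) hintegrable
  rw [sum_vonMangoldt_div_log_eq_add_intervalIntegral hx]
  linarith [integral_Rfun_div_eq]
end

section
/- γ_r → e^{−γ} as r → ∞. -/
open Filter

/-- Generalized Euler constant for a finite set of primes `P`: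
`γ(P) = ∏_{p∈P}(1 - 1/p) * (γ + ∑_{p∈P} log p / (p-1))`. -/
noncomputable def gammaP (P : Finset ℕ) : ℝ :=
  (∏ p ∈ P, (1 - 1 / (p : ℝ))) *
    (Real.eulerMascheroniConstant + ∑ p ∈ P, Real.log p / ((p : ℝ) - 1))

/-- `γ_r = γ({p_1, …, p_r})`, the generalized Euler constant for the first `r` primes. -/
noncomputable def gammaR (r : ℕ) : ℝ :=
  gammaP ((Finset.range r).image (Nat.nth Nat.Prime))

/-- `log n / (n - 1)` if `n` is prime, and `0` otherwise. -/
noncomputable def primeLogWeight (n : ℕ) : ℝ :=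
  if n.Prime then Real.log n / ((n : ℝ) - 1) else 0

/-- `-log (1 - 1 / n)` if `n` is prime, and `0` otherwise. -/
noncomputable def eulerFactorLog (n : ℕ) : ℝ :=
  if n.Prime then -Real.log (1 - 1 / (n : ℝ)) else 0

theorem primeLogWeight_nonneg (n : ℕ) : 0 ≤ primeLogWeight n := by
  unfold primeLogWeight
  split_ifs with h
  · have : (1 : ℝ) ≤ n := mod_cast h.one_le
    exact div_nonneg (Real.log_nonneg this) (by linarith)
  · rfl

theorem sum_range_primeLogWeight (n : ℕ) :
    ∑ k ∈ Finset.range (n + 1), primeLogWeight k =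
      ∑ p ∈ n.primesLE, Real.log p / ((p : ℝ) - 1) := by
  rw [Nat.primesLE, Nat.primesBelow, Finset.sum_filter]
  rfl

theorem log_factorial_eq_sum_primesLE (n : ℕ) :
    Real.log n.factorial = ∑ p ∈ n.primesLE, (n.factorial.factorization p : ℝ) * Real.log p := by
  rw [Real.log_nat_eq_sum_factorization, Finsupp.sum]
  refine Finset.sum_subset (fun p hp ↦ ?_) fun p _ hp ↦ ?_
  · rw [Nat.support_factorization, Nat.mem_primeFactors] at hp
    rw [Nat.mem_primesLE]
    exact ⟨(hp.1.dvd_factorial).1 hp.2.1, hp.1⟩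
  · rw [Finsupp.notMem_support_iff.1 hp]
    simp

theorem log_sub_one_le_sum_primeLogWeight {n : ℕ} (hn : n ≠ 0) :
    Real.log n - 1 ≤ ∑ k ∈ Finset.range (n + 1), primeLogWeight k := by
  have hn0 : (0 : ℝ) < n := by positivity
  have h1 : Real.log n.factorial ≤ n * ∑ k ∈ Finset.range (n + 1), primeLogWeight k := by
    rw [log_factorial_eq_sum_primesLE, sum_range_primeLogWeight, Finset.mul_sum]
    refine Finset.sum_le_sum fun p hp ↦ ?_
    have hp := (Nat.mem_primesLE.1 hp).2
    have hp1 : (1 : ℝ) < p := mod_cast hp.one_lt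
    have h2 : (n.factorial.factorization p : ℝ) ≤ n / ((p : ℝ) - 1) := by
      have := Nat.factorization_factorial_le_div_pred hp n
      calc (n.factorial.factorization p : ℝ) ≤ ((n / (p - 1) : ℕ) : ℝ) := mod_cast this
        _ ≤ n / ((p - 1 : ℕ) : ℝ) := Nat.cast_div_le
        _ = _ := by rw [Nat.cast_sub hp.one_le, Nat.cast_one]
    calc _ ≤ n / ((p : ℝ) - 1) * Real.log p := by
          gcongr
      _ = _ := by ring
  have h2 := Stirling.le_log_factorial_stirling hn
  have h3 : 0 ≤ Real.log n := Real.log_nonneg (mod_cast Nat.one_le_iff_ne_zero.2 hn)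
  have h4 : 0 ≤ Real.log (2 * Real.pi) := Real.log_nonneg (by linarith [Real.pi_gt_three])
  refine le_of_mul_le_mul_left ?_ hn0
  linarith

theorem log_div_sub_one_sub_le {p : ℕ} (hp : 2 ≤ p) :
    Real.log p / ((p : ℝ) - 1) - Real.log p / p ≤ 4 * (1 / (p : ℝ) ^ (3 / 2 : ℝ)) := by
  have hp' : (2 : ℝ) ≤ p := mod_cast hp
  have h0 : (0 : ℝ) < p := by linarith
  have h1 : (0 : ℝ) < (p : ℝ) - 1 := by linarith
  have hlog : Real.log p ≤ 2 * (p : ℝ) ^ (1 / 2 : ℝ) := by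
    have := Real.log_le_rpow_div h0.le (show (0 : ℝ) < 1 / 2 by norm_num)
    linarith
  have hsq : (p : ℝ) ^ (1 / 2 : ℝ) * (p : ℝ) ^ (3 / 2 : ℝ) = p * p := by
    rw [← Real.rpow_add h0]; norm_num; ring
  have h3 : (0 : ℝ) < (p : ℝ) ^ (3 / 2 : ℝ) := by positivity
  calc _ = Real.log p * (1 / ((p - 1) * p)) := by field_simp; ring
    _ ≤ 2 * (p : ℝ) ^ (1 / 2 : ℝ) * (2 / (p * p)) := by
        gcongr ?_ * ?_
        rw [div_le_div_iff₀ (by positivity) (by positivity)]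
        nlinarith
    _ = 4 * ((p : ℝ) ^ (1 / 2 : ℝ) / (p * p)) := by ring
    _ = _ := by rw [← hsq]; field_simp

theorem exists_sum_primeLogWeight_le :
    ∃ K : ℝ, ∀ n : ℕ, n ≠ 0 →
      ∑ k ∈ Finset.range (n + 1), primeLogWeight k ≤ Real.log n + K := by
  have hs : Summable fun n : ℕ ↦ 4 * (1 / (n : ℝ) ^ (3 / 2 : ℝ)) :=
    (Real.summable_one_div_nat_rpow.2 (by norm_num)).mul_left _
  refine ⟨Real.log 4 + ∑' n : ℕ, 4 * (1 / (n : ℝ) ^ (3 / 2 : ℝ)), fun n hn ↦ ?_⟩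
  have hn0 : (0 : ℝ) < n := by positivity
  have h1 : ∑ p ∈ n.primesLE, (Real.log p / ((p : ℝ) - 1) - Real.log p / p) ≤
      ∑' n : ℕ, 4 * (1 / (n : ℝ) ^ (3 / 2 : ℝ)) :=
    (Finset.sum_le_sum fun p hp ↦
      log_div_sub_one_sub_le (Nat.mem_primesLE.1 hp).2.two_le).trans
      (hs.sum_le_tsum _ fun _ _ ↦ by positivity)
  have h2 : n * ∑ p ∈ n.primesLE, Real.log p / p - Chebyshev.theta n ≤
      Real.log n.factorial := by
    rw [log_factorial_eq_sum_primesLE, Chebyshev.theta_eq_sum_primesLE_log, Finset.mul_sum,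
      ← Finset.sum_sub_distrib]
    refine Finset.sum_le_sum fun p hp ↦ ?_
    obtain ⟨hpn, hp⟩ := Nat.mem_primesLE.1 hp
    have h3 : ((n / p : ℕ) : ℝ) ≤ n.factorial.factorization p := by
      rw [Nat.factorization_factorial hp (Nat.lt_add_one _)]
      have : n / p ^ 1 ≤ ∑ i ∈ Finset.Ico 1 (Nat.log p n + 1), n / p ^ i :=
        Finset.single_le_sum (f := fun i ↦ n / p ^ i) (fun _ _ ↦ Nat.zero_le _)
          (Finset.mem_Ico.2 ⟨le_rfl, Nat.lt_succ_of_le (Nat.log_pos hp.one_lt hpn)⟩)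
      rw [pow_one] at this
      exact_mod_cast this
    have h4 : (n : ℝ) / p < (n / p : ℕ) + 1 := by
      rw [← Nat.floor_div_eq_div (K := ℝ)]
      exact Nat.lt_floor_add_one _
    have h5 : 0 ≤ Real.log p := Real.log_nonneg (mod_cast hp.one_le)
    calc _ = (n / p - 1) * Real.log p := by ring
      _ ≤ _ := by gcongr; linarith
  have h3 : Real.log n.factorial ≤ n * Real.log n := by
    rw [← Real.log_pow]
    exact Real.log_le_log (by positivity) (mod_cast Nat.factorial_le_pow n)
  have h4 := Chebyshev.theta_le_log4_mul_x hn0.le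
  have h5 : ∑ p ∈ n.primesLE, Real.log p / p ≤ Real.log n + Real.log 4 := by
    refine le_of_mul_le_mul_left ?_ hn0
    linarith
  rw [Finset.sum_sub_distrib] at h1
  rw [sum_range_primeLogWeight]
  linarith

theorem exists_abs_sum_primeLogWeight_sub_log_le :
    ∃ K : ℝ, 0 ≤ K ∧ ∀ n : ℕ, 2 ≤ n →
      |∑ k ∈ Finset.range n, primeLogWeight k - Real.log n| ≤ K ∧
      |∑ k ∈ Finset.range (n + 1), primeLogWeight k - Real.log n| ≤ K := by
  obtain ⟨K, hK⟩ := exists_sum_primeLogWeight_le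
  refine ⟨max K 2, by positivity, fun n hn ↦ ?_⟩
  obtain ⟨m, rfl⟩ : ∃ m, n = m + 1 := ⟨n - 1, by omega⟩
  have hm : m ≠ 0 := by omega
  have hm1 : (1 : ℝ) ≤ m := mod_cast Nat.one_le_iff_ne_zero.2 hm
  have h1 := log_sub_one_le_sum_primeLogWeight hm
  have h2 := log_sub_one_le_sum_primeLogWeight (Nat.succ_ne_zero m)
  have h3 := hK m hm
  have h4 := hK _ (Nat.succ_ne_zero m)
  have h5 : Real.log m ≤ Real.log (m + 1 : ℕ) :=
    Real.log_le_log (by linarith) (by push_cast; linarith)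
  have h6 : Real.log (m + 1 : ℕ) ≤ Real.log m + 1 := by
    have h7 : Real.log (m + 1 : ℕ) ≤ Real.log (2 * m) :=
      Real.log_le_log (by positivity) (by push_cast; linarith)
    rw [Real.log_mul two_ne_zero (by linarith)] at h7
    linarith [Real.log_two_lt_d9]
  have h8 := le_max_left K 2
  have h9 := le_max_right K 2
  refine ⟨abs_le.2 ⟨?_, ?_⟩, abs_le.2 ⟨?_, ?_⟩⟩ <;> simp only [Nat.succ_eq_add_one] at * <;> linarith

theorem sum_primeLogWeight_pos {n : ℕ} (hn : 3 ≤ n) :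
    0 < ∑ k ∈ Finset.range n, primeLogWeight k := by
  refine Finset.sum_pos' (fun k _ ↦ primeLogWeight_nonneg k) ⟨2, Finset.mem_range.2 hn, ?_⟩
  rw [primeLogWeight, if_pos Nat.prime_two]
  norm_num [Real.log_pos]

theorem eulerFactorLog_mem_Icc {n : ℕ} (hn : 3 ≤ n) :
    primeLogWeight n / Real.log n - 2 * (1 / (n : ℝ) ^ 2) ≤ eulerFactorLog n ∧
      eulerFactorLog n ≤ primeLogWeight n / Real.log n := by
  have hn' : (3 : ℝ) ≤ n := mod_cast hn
  have h0 : (0 : ℝ) < n := by linarith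
  have h1 : (0 : ℝ) < (n : ℝ) - 1 := by linarith
  have hlog : 0 < Real.log n := Real.log_pos (by linarith)
  unfold primeLogWeight eulerFactorLog
  split_ifs with h
  · have h2 : Real.log n / ((n : ℝ) - 1) / Real.log n = 1 / ((n : ℝ) - 1) := by field_simp
    have h3 : (0 : ℝ) < 1 - 1 / n := by
      rw [one_sub_div h0.ne']; positivity
    rw [h2]
    constructor
    · have h4 := Real.log_le_sub_one_of_pos h3
      have h5 : 1 / ((n : ℝ) - 1) - 2 * (1 / (n : ℝ) ^ 2) ≤ 1 / n := by
        have : 1 / (n : ℝ) - (1 / ((n : ℝ) - 1) - 2 * (1 / (n : ℝ) ^ 2))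
            = (n - 2) / (n ^ 2 * (n - 1)) := by field_simp; ring
        have h6 : (0 : ℝ) ≤ (n - 2) / (n ^ 2 * (n - 1)) :=
          div_nonneg (by linarith) (by positivity)
        linarith
      linarith
    · have h4 := Real.one_sub_inv_le_log_of_pos h3
      have h5 : 1 - (1 - 1 / (n : ℝ))⁻¹ = - (1 / ((n : ℝ) - 1)) := by
        rw [one_sub_div h0.ne', inv_div]; field_simp; ring
      linarith
  · simp

theorem exists_tendsto_sum_eulerFactorLog_sub_log :
    ∃ D : ℝ, Tendsto (fun n ↦ ∑ k ∈ Finset.range n, eulerFactorLog k -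
      Real.log (∑ k ∈ Finset.range n, primeLogWeight k)) atTop (nhds D) := by
  obtain ⟨K, hK0, hK⟩ := exists_abs_sum_primeLogWeight_sub_log_le
  set S : ℕ → ℝ := fun n ↦ ∑ k ∈ Finset.range n, primeLogWeight k with hS
  set P : ℕ → ℝ := fun n ↦ ∑ k ∈ Finset.range n, eulerFactorLog k with hP
  have hSpos (n : ℕ) : 0 < S (n + 3) := sum_primeLogWeight_pos (by omega)
  have hSmono (n : ℕ) : S n ≤ S (n + 1) := by
    simp only [hS, Finset.sum_range_succ]
    linarith [primeLogWeight_nonneg n]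
  have htel : Summable fun n ↦ (1 / S (n + 3) - 1 / S (n + 4)) := by
    refine summable_of_sum_range_le (c := 1 / S 3) (fun n ↦ ?_) fun n ↦ ?_
    · exact sub_nonneg.2 (one_div_le_one_div_of_le (hSpos n) (hSmono _))
    · rw [Finset.sum_range_sub' (fun n ↦ 1 / S (n + 3))]
      have := hSpos n
      have : 0 ≤ 1 / S (n + 3) := by positivity
      simpa using this
  have hsq : Summable fun n : ℕ ↦ 2 * (1 / ((n + 3 : ℕ) : ℝ) ^ 2) :=
    ((summable_nat_add_iff 3).2 (Real.summable_one_div_nat_pow.2 one_lt_two)).mul_left 2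
  have hcau : CauchySeq fun n ↦ P (n + 3) - Real.log (S (n + 3)) := by
    refine cauchySeq_of_dist_le_of_summable _ (fun n ↦ ?_) ((htel.mul_left (K * (K + 1))).add hsq)
    set N := n + 3 with hN
    obtain ⟨ha1, ha2⟩ := eulerFactorLog_mem_Icc (n := N) (by omega)
    obtain ⟨hs1, hs2⟩ := hK N (by omega)
    have hL : 1 ≤ Real.log N := by
      rw [Real.le_log_iff_exp_le (by positivity)]
      have : (3 : ℝ) ≤ N := mod_cast (show 3 ≤ N by omega)
      linarith [Real.exp_one_lt_d9]
    have hw := primeLogWeight_nonneg N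
    have hp1 : 0 < S N := hSpos n
    have hp2 : 0 < S (N + 1) := hSpos (n + 1)
    have hS1 : S (N + 1) = S N + primeLogWeight N := Finset.sum_range_succ _ _
    have hP1 : P (N + 1) = P N + eulerFactorLog N := Finset.sum_range_succ _ _
    change |S N - Real.log N| ≤ K at hs1
    change |S (N + 1) - Real.log N| ≤ K at hs2
    set w := primeLogWeight N
    set L := Real.log N
    have hlog1 : Real.log (S (N + 1)) - Real.log (S N) ≤ w / S N := by
      rw [← Real.log_div hp2.ne' hp1.ne']
      have := Real.log_le_sub_one_of_pos (div_pos hp2 hp1)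
      have h : S (N + 1) / S N - 1 = w / S N := by rw [hS1]; field_simp; ring
      linarith
    have hlog2 : w / S (N + 1) ≤ Real.log (S (N + 1)) - Real.log (S N) := by
      rw [← Real.log_div hp2.ne' hp1.ne']
      have := Real.one_sub_inv_le_log_of_pos (div_pos hp2 hp1)
      have h : 1 - (S (N + 1) / S N)⁻¹ = w / S (N + 1) := by
        rw [inv_div, one_sub_div hp2.ne', hS1]; ring
      linarith
    rw [abs_le] at hs1 hs2
    have key (x y : ℝ) (hx : 0 < x) (hy : 0 < y) (hyL : y ≤ (K + 1) * L) (hd : |x - L| ≤ K) :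
        |w / L - w / x| ≤ K * (K + 1) * (w / (x * y)) := by
      have h : w / L - w / x = w * (x - L) / (L * x) := by field_simp
      rw [h, abs_div, abs_mul, abs_of_nonneg hw, abs_of_pos (by positivity : 0 < L * x)]
      calc w * |x - L| / (L * x) ≤ w * K / (y / (K + 1) * x) := by
            gcongr
            rw [div_le_iff₀ (by positivity)]; linarith
        _ = _ := by field_simp
    have htw : 1 / S N - 1 / S (N + 1) = w / (S N * S (N + 1)) := by
      field_simp; linarith
    have hk1 := key (S N) (S (N + 1)) hp1 hp2 (by nlinarith) (abs_le.2 hs1)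
    have hk2 := key (S (N + 1)) (S N) hp2 hp1 (by nlinarith) (abs_le.2 hs2)
    rw [mul_comm (S (N + 1))] at hk2
    rw [abs_le] at hk1 hk2
    have hsq0 : 0 ≤ 2 * (1 / (N : ℝ) ^ 2) := by positivity
    rw [show n.succ + 3 = N + 1 by omega, show n + 4 = N + 1 by omega, Real.dist_eq, hP1, htw,
      abs_le]
    constructor <;> linarith
  obtain ⟨D, hD⟩ := cauchySeq_tendsto_of_complete hcau
  exact ⟨D, (tendsto_add_atTop_iff_nat 3).1 hD⟩

theorem tendsto_log_natCast : Tendsto (fun n : ℕ ↦ Real.log n) atTop atTop :=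
  Real.tendsto_log_atTop.comp tendsto_natCast_atTop_atTop

theorem tendsto_sum_primeLogWeight_div_log :
    Tendsto (fun n : ℕ ↦ (∑ k ∈ Finset.range n, primeLogWeight k) / Real.log n)
      atTop (nhds 1) := by
  obtain ⟨K, hK0, hK⟩ := exists_abs_sum_primeLogWeight_sub_log_le
  rw [tendsto_iff_norm_sub_tendsto_zero]
  refine squeeze_zero' (.of_forall fun _ ↦ norm_nonneg _) ?_
    (tendsto_log_natCast.const_div_atTop K)
  filter_upwards [eventually_ge_atTop 2] with n hn
  have hlog : 0 < Real.log n := Real.log_pos (mod_cast hn)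
  rw [div_sub_one hlog.ne', norm_div, Real.norm_eq_abs, Real.norm_of_nonneg hlog.le]
  gcongr
  exact (hK n hn).1

theorem tendsto_sum_primeLogWeight :
    Tendsto (fun n : ℕ ↦ ∑ k ∈ Finset.range n, primeLogWeight k) atTop atTop := by
  refine (tendsto_sum_primeLogWeight_div_log.pos_mul_atTop one_pos tendsto_log_natCast).congr' ?_
  filter_upwards [eventually_ge_atTop 2] with n hn
  have hlog : 0 < Real.log n := Real.log_pos (mod_cast hn)
  field_simp

theorem tendsto_sum_eulerFactorLog_sub_log_log {D : ℝ}
    (hD : Tendsto (fun n ↦ ∑ k ∈ Finset.range n, eulerFactorLog k -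
      Real.log (∑ k ∈ Finset.range n, primeLogWeight k)) atTop (nhds D)) :
    Tendsto (fun n : ℕ ↦ ∑ k ∈ Finset.range n, eulerFactorLog k - Real.log (Real.log n))
      atTop (nhds D) := by
  have h := hD.add (tendsto_sum_primeLogWeight_div_log.log one_ne_zero)
  rw [Real.log_one, add_zero] at h
  refine h.congr' ?_
  filter_upwards [eventually_ge_atTop 3] with n hn
  have hlog : 0 < Real.log n := Real.log_pos (mod_cast (show 1 < n by omega))
  rw [Real.log_div (sum_primeLogWeight_pos hn).ne' hlog.ne']
  ring

open MeasureTheory in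
theorem hasSum_mul_exp_neg_sub {c d l m : ℕ → ℝ} {f h : ℝ → ℝ}
    (hl : ∀ n, 0 ≤ l n) (hm : ∀ n, 0 ≤ m n)
    (hc : Summable fun n ↦ |c n| * Real.exp (-l n))
    (hd : Summable fun n ↦ |d n| * Real.exp (-m n))
    (hf : ∀ v, 0 < v → HasSum (fun n ↦ if l n ≤ v then c n else 0) (f v))
    (hh : ∀ v, 0 < v → HasSum (fun n ↦ if m n ≤ v then d n else 0) (h v)) :
    HasSum (fun n ↦ c n * Real.exp (-l n) - d n * Real.exp (-m n))
      (∫ v in Set.Ioi 0, (f v - h v) * Real.exp (-v)) := by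
  let e (a b : ℝ) : ℝ → ℝ := (Set.Ici b).indicator fun v ↦ a * Real.exp (-v)
  have hint (a : ℝ) : IntegrableOn (fun v ↦ a * Real.exp (-v)) (Set.Ioi 0) :=
    (integrableOn_exp_neg_Ioi 0).const_mul a
  have he (a b : ℝ) : IntegrableOn (e a b) (Set.Ioi 0) := (hint a).indicator measurableSet_Ici
  have heval (a b : ℝ) (hb : 0 ≤ b) : ∫ v in Set.Ioi 0, e a b v = a * Real.exp (-b) := by
    rw [setIntegral_congr_set (Ioi_ae_eq_Ici (a := (0 : ℝ))),
      setIntegral_indicator measurableSet_Ici, Set.Ici_inter_Ici, sup_eq_right.2 hb,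
      integral_Ici_eq_integral_Ioi, integral_const_mul, integral_exp_neg_Ioi]
  have hnorm (a b v : ℝ) : ‖e a b v‖ = e |a| b v := by
    simp only [e, Set.indicator_apply]
    split_ifs <;> simp
  let F (n : ℕ) (v : ℝ) : ℝ := e (c n) (l n) v - e (d n) (m n) v
  have hF (n : ℕ) : IntegrableOn (F n) (Set.Ioi 0) := (he _ _).sub (he _ _)
  have hsum : Summable fun n ↦ ∫ v in Set.Ioi 0, ‖F n v‖ := by
    refine Summable.of_nonneg_of_le (fun n ↦ integral_nonneg fun _ ↦ norm_nonneg _) (fun n ↦ ?_)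
      (hc.add hd)
    rw [← heval _ _ (hl n), ← heval _ _ (hm n), ← integral_add (he _ _) (he _ _)]
    refine integral_mono (hF n).norm ((he _ _).add (he _ _)) fun v ↦ ?_
    simpa only [hnorm] using norm_sub_le (e (c n) (l n) v) (e (d n) (m n) v)
  have H := hasSum_integral_of_summable_integral_norm hF hsum
  have hterm (n : ℕ) : ∫ v in Set.Ioi 0, F n v =
      c n * Real.exp (-l n) - d n * Real.exp (-m n) := by
    rw [integral_sub (he _ _) (he _ _), heval _ _ (hl n), heval _ _ (hm n)]
  have htsum : ∫ v in Set.Ioi 0, ∑' n, F n v =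
      ∫ v in Set.Ioi 0, (f v - h v) * Real.exp (-v) := by
    refine setIntegral_congr_fun measurableSet_Ioi fun v hv ↦ ?_
    have := ((hf v hv).sub (hh v hv)).mul_right (Real.exp (-v))
    refine Eq.trans (tsum_congr fun n ↦ ?_) this.tsum_eq
    simp only [F, e, Set.indicator_apply, Set.mem_Ici]
    split_ifs <;> ring
  simpa only [hterm, htsum] using H

open MeasureTheory in
theorem tendsto_integral_comp_div_mul_exp_neg {g : ℝ → ℝ} {E B : ℝ} (hg : Measurable g)
    (hB : ∀ u, 0 ≤ u → |g u| ≤ B) (hE : Tendsto g atTop (nhds E)) :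
    Tendsto (fun s ↦ ∫ v in Set.Ioi 0, g (v / s) * Real.exp (-v))
      (nhdsWithin 0 (Set.Ioi 0)) (nhds E) := by
  have hlim : nhds E = nhds (∫ v in Set.Ioi (0 : ℝ), E * Real.exp (-v)) := by
    rw [integral_const_mul, integral_exp_neg_Ioi_zero, mul_one]
  rw [hlim]
  refine tendsto_integral_filter_of_dominated_convergence (fun v ↦ B * Real.exp (-v)) ?_ ?_
    ((integrableOn_exp_neg_Ioi 0).const_mul B) ?_
  · refine .of_forall fun s ↦ Measurable.aestronglyMeasurable ?_
    fun_prop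
  · filter_upwards [self_mem_nhdsWithin] with s hs
    refine (ae_restrict_iff' measurableSet_Ioi).2 (.of_forall fun v hv ↦ ?_)
    rw [norm_mul, Real.norm_eq_abs, Real.norm_of_nonneg (Real.exp_nonneg _)]
    gcongr
    exact hB _ (div_nonneg (Set.mem_Ioi.1 hv).le (Set.mem_Ioi.1 hs).le)
  · refine (ae_restrict_iff' measurableSet_Ioi).2 (.of_forall fun v hv ↦ ?_)
    refine Tendsto.mul_const _ (hE.comp ?_)
    exact (tendsto_inv_nhdsGT_zero.const_mul_atTop (Set.mem_Ioi.1 hv)).congr fun s ↦ by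
      rw [div_eq_mul_inv]

theorem eulerFactorLog_nonneg (n : ℕ) : 0 ≤ eulerFactorLog n := by
  unfold eulerFactorLog
  split_ifs with h
  · have h1 : (1 : ℝ) ≤ n := mod_cast h.one_le
    have h2 : 1 / (n : ℝ) ≤ 1 := by rw [div_le_one (by linarith)]; exact h1
    have h3 : 0 ≤ 1 / (n : ℝ) := by positivity
    exact neg_nonneg.2 (Real.log_nonpos (by linarith) (by linarith))
  · rfl

theorem neg_log_one_sub_mem_Icc {x : ℝ} (hx : x ≤ 1 / 2) :
    x ≤ -Real.log (1 - x) ∧ -Real.log (1 - x) ≤ x + 2 * x ^ 2 := by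
  have h1 : 0 < 1 - x := by linarith
  have h2 := Real.log_le_sub_one_of_pos h1
  have h3 := Real.one_sub_inv_le_log_of_pos h1
  refine ⟨by linarith, ?_⟩
  have h4 : (1 - x)⁻¹ ≤ 1 + x + 2 * x ^ 2 := by
    rw [inv_le_iff_one_le_mul₀ h1]
    nlinarith [mul_nonneg (sq_nonneg x) (by linarith : 0 ≤ 1 - 2 * x)]
  linarith

/-- The logarithm of the Euler factor of `ζ (1 + s)` at `n` if `n` is prime, and `0` otherwise. -/
noncomputable def zetaFactorLog (s : ℝ) (n : ℕ) : ℝ :=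
  if n.Prime then -Real.log (1 - Real.exp (-(s * Real.log n)) * (1 / (n : ℝ))) else 0

theorem exp_neg_mul_log_mul_one_div {n : ℕ} (hn : n ≠ 0) (s : ℝ) :
    Real.exp (-(s * Real.log n)) * (1 / (n : ℝ)) = (n : ℝ) ^ (-(1 + s)) := by
  have hn0 : (0 : ℝ) < n := by positivity
  rw [neg_add, Real.rpow_add hn0, Real.rpow_neg_one, Real.rpow_def_of_pos hn0]
  ring_nf

theorem exp_neg_mul_log_le_one {s : ℝ} (hs : 0 ≤ s) (n : ℕ) :
    Real.exp (-(s * Real.log n)) ≤ 1 :=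
  Real.exp_le_one_iff.2 (neg_nonpos.2 (mul_nonneg hs (Real.log_natCast_nonneg n)))

theorem exp_neg_mul_log_mul_one_div_le_half {s : ℝ} (hs : 0 ≤ s) {n : ℕ} (hn : 2 ≤ n) :
    Real.exp (-(s * Real.log n)) * (1 / (n : ℝ)) ≤ 1 / 2 := by
  have hn' : (2 : ℝ) ≤ n := mod_cast hn
  calc _ ≤ 1 * (1 / 2 : ℝ) := by
        gcongr
        exact exp_neg_mul_log_le_one hs n
    _ = _ := one_mul _

theorem summable_exp_neg_mul_log_mul_one_div {s : ℝ} (hs : 0 < s) :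
    Summable fun n : ℕ ↦ Real.exp (-(s * Real.log n)) * (1 / (n : ℝ)) := by
  refine (Real.summable_nat_rpow (p := -(1 + s)).2 (by linarith)).congr fun n ↦ ?_
  rcases eq_or_ne n 0 with rfl | hn
  · rw [Nat.cast_zero, Real.zero_rpow (by linarith), div_zero, mul_zero]
  · rw [exp_neg_mul_log_mul_one_div hn]

theorem zetaFactorLog_mem_Icc {s : ℝ} (hs : 0 ≤ s) (n : ℕ) :
    0 ≤ zetaFactorLog s n ∧
      zetaFactorLog s n ≤ 2 * (Real.exp (-(s * Real.log n)) * (1 / (n : ℝ))) := by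
  unfold zetaFactorLog
  split_ifs with h
  · have h0 : 0 ≤ Real.exp (-(s * Real.log n)) * (1 / (n : ℝ)) := by positivity
    have h1 := exp_neg_mul_log_mul_one_div_le_half hs h.two_le
    have h2 := neg_log_one_sub_mem_Icc h1
    exact ⟨h0.trans h2.1, by nlinarith⟩
  · exact ⟨le_rfl, by positivity⟩

theorem summable_zetaFactorLog {s : ℝ} (hs : 0 < s) : Summable (zetaFactorLog s) :=
  .of_nonneg_of_le (fun n ↦ (zetaFactorLog_mem_Icc hs.le n).1)
    (fun n ↦ (zetaFactorLog_mem_Icc hs.le n).2)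
    ((summable_exp_neg_mul_log_mul_one_div hs).mul_left 2)

theorem zetaFactorLog_zero (n : ℕ) : zetaFactorLog 0 n = eulerFactorLog n := by
  simp [zetaFactorLog, eulerFactorLog]

theorem exp_tsum_zetaFactorLog {s : ℝ} (hs : 0 < s) :
    Real.exp (∑' n, zetaFactorLog s n) = ∑' n : ℕ, 1 / (n : ℝ) ^ (1 + s) := by
  let f : ℕ →*₀ ℝ :=
    { toFun n := (n : ℝ) ^ (-(1 + s))
      map_zero' := by rw [Nat.cast_zero, Real.zero_rpow (by linarith)]
      map_one' := by simp
      map_mul' m n := by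
        rw [Nat.cast_mul, Real.mul_rpow (Nat.cast_nonneg m) (Nat.cast_nonneg n)] }
  have hsum : Summable fun n ↦ ‖f n‖ := (Real.summable_nat_rpow.2 (by linarith)).norm
  have h1 := EulerProduct.eulerProduct_completely_multiplicative_hasProd hsum
  have hlog (p : Nat.Primes) : Real.log ((1 - f p)⁻¹) = zetaFactorLog s p := by
    rw [zetaFactorLog, if_pos p.2, exp_neg_mul_log_mul_one_div p.2.ne_zero, Real.log_inv]
    rfl
  have hpos (p : Nat.Primes) : 0 < (1 - f p)⁻¹ := by
    have := exp_neg_mul_log_mul_one_div_le_half hs.le p.2.two_le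
    rw [exp_neg_mul_log_mul_one_div p.2.ne_zero] at this
    change f p ≤ 1 / 2 at this
    exact inv_pos.2 (by linarith)
  have hS : HasSum (fun p : Nat.Primes ↦ zetaFactorLog s p) (∑' n, zetaFactorLog s n) := by
    refine (hasSum_subtype_iff_of_support_subset (s := {p | Nat.Prime p}) fun n hn ↦ ?_).2
      (summable_zetaFactorLog hs).hasSum
    by_contra h
    exact hn (if_neg h)
  have h2 := Real.hasProd_of_hasSum_log hpos (by simpa only [hlog] using hS)
  rw [h2.unique h1]
  refine tsum_congr fun n ↦ ?_
  change (n : ℝ) ^ (-(1 + s)) = _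
  rw [Real.rpow_neg (Nat.cast_nonneg n), one_div]

theorem abs_zetaFactorLog_sub_le {s : ℝ} (hs : 0 ≤ s) (n : ℕ) :
    |zetaFactorLog s n - eulerFactorLog n * Real.exp (-(s * Real.log n))| ≤
      2 * (1 / (n : ℝ) ^ 2) := by
  unfold zetaFactorLog eulerFactorLog
  split_ifs with h
  · have hn : (2 : ℝ) ≤ n := mod_cast h.two_le
    have hx0 : 0 ≤ 1 / (n : ℝ) := by positivity
    have hx : 1 / (n : ℝ) ≤ 1 / 2 := by gcongr
    have hy0 := Real.exp_pos (-(s * Real.log n))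
    have hy := exp_neg_mul_log_le_one hs n
    rw [← one_div_pow]
    set x := 1 / (n : ℝ)
    set y := Real.exp (-(s * Real.log n))
    obtain ⟨h1, h2⟩ := neg_log_one_sub_mem_Icc hx
    obtain ⟨h3, h4⟩ := neg_log_one_sub_mem_Icc (by nlinarith : y * x ≤ 1 / 2)
    have h5 := mul_le_mul_of_nonneg_right h1 hy0.le
    have h6 := mul_le_mul_of_nonneg_right h2 hy0.le
    have h7 : y * x ^ 2 ≤ x ^ 2 := mul_le_of_le_one_left (sq_nonneg x) hy
    have h8 : (y * x) ^ 2 ≤ x ^ 2 := by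
      gcongr
      exact mul_le_of_le_one_left hx0 hy
    rw [abs_le]
    constructor <;> linarith
  · simp only [zero_mul, sub_zero, abs_zero]
    positivity

theorem tendsto_tsum_zetaFactorLog_sub :
    Tendsto (fun s ↦ ∑' n : ℕ, (zetaFactorLog s n -
      eulerFactorLog n * Real.exp (-(s * Real.log n)))) (nhdsWithin 0 (Set.Ioi 0)) (nhds 0) := by
  have key := tendsto_tsum_of_dominated_convergence (𝓕 := nhdsWithin (0 : ℝ) (Set.Ioi 0))
    (f := fun (s : ℝ) (n : ℕ) ↦ zetaFactorLog s n -
      eulerFactorLog n * Real.exp (-(s * Real.log n))) (g := fun _ ↦ 0)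
    (bound := fun n ↦ 2 * (1 / (n : ℝ) ^ 2))
    ((Real.summable_one_div_nat_pow.2 one_lt_two).mul_left 2) (fun n ↦ ?_) ?_
  · simpa using key
  · have hcont : ContinuousAt (fun s : ℝ ↦ zetaFactorLog s n -
        eulerFactorLog n * Real.exp (-(s * Real.log n))) 0 := by
      refine ContinuousAt.sub ?_ (by fun_prop)
      unfold zetaFactorLog
      split_ifs with h
      · refine (ContinuousAt.log (by fun_prop) ?_).neg
        have := exp_neg_mul_log_mul_one_div_le_half le_rfl h.two_le
        linarith
      · exact continuousAt_const
    have := hcont.tendsto.mono_left (nhdsWithin_le_nhds (s := Set.Ioi 0))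
    simpa [zetaFactorLog_zero] using this
  · filter_upwards [self_mem_nhdsWithin] with s hs n
    exact abs_zetaFactorLog_sub_le (Set.mem_Ioi.1 hs).le n

theorem tendsto_tsum_zetaFactorLog_add_log :
    Tendsto (fun s ↦ ∑' n, zetaFactorLog s n + Real.log s)
      (nhdsWithin 0 (Set.Ioi 0)) (nhds 0) := by
  have hshift : Tendsto (fun s : ℝ ↦ 1 + s) (nhdsWithin 0 (Set.Ioi 0))
      (nhdsWithin 1 (Set.Ioi 1)) := by
    refine tendsto_nhdsWithin_of_tendsto_nhds_of_eventually_within _ ?_ ?_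
    · have : ContinuousAt (fun s : ℝ ↦ 1 + s) 0 := by fun_prop
      simpa using this.tendsto.mono_left (nhdsWithin_le_nhds (s := Set.Ioi 0))
    · filter_upwards [self_mem_nhdsWithin] with s hs
      simpa using hs
  have h := (tendsto_sub_mul_tsum_nat_rpow.comp hshift).log one_ne_zero
  rw [Real.log_one] at h
  refine h.congr' ?_
  filter_upwards [self_mem_nhdsWithin] with s hs
  have hs : 0 < s := hs
  rw [Function.comp_apply, add_sub_cancel_left, ← exp_tsum_zetaFactorLog hs,
    Real.log_mul hs.ne' (Real.exp_ne_zero _), Real.log_exp, add_comm]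

theorem tendsto_log_one_sub_exp_neg_sub_log :
    Tendsto (fun s : ℝ ↦ Real.log (1 - Real.exp (-s)) - Real.log s)
      (nhdsWithin 0 (Set.Ioi 0)) (nhds 0) := by
  have hd : HasDerivAt (fun s : ℝ ↦ 1 - Real.exp (-s)) 1 0 := by
    simpa using ((hasDerivAt_neg (0 : ℝ)).exp.const_sub 1)
  have h := (hd.tendsto_slope_zero_right).log one_ne_zero
  rw [Real.log_one] at h
  refine h.congr' ?_
  filter_upwards [self_mem_nhdsWithin] with s hs
  have hs : 0 < s := hs
  have h1 : 0 < 1 - Real.exp (-s) := sub_pos.2 (Real.exp_lt_one_iff.2 (by linarith))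
  rw [zero_add, neg_zero, Real.exp_zero, sub_self, sub_zero, smul_eq_mul,
    Real.log_mul (inv_ne_zero hs.ne') h1.ne', Real.log_inv]
  ring

/-- The sum of `-log (1 - 1 / p)` over primes `p ≤ exp u`, minus the harmonic sum up to `u`. -/
noncomputable def eulerFactorLogSubHarmonic (u : ℝ) : ℝ :=
  ∑ k ∈ Finset.range (⌊Real.exp u⌋₊ + 1), eulerFactorLog k -
    ∑ k ∈ Finset.range ⌊u⌋₊, 1 / ((k : ℝ) + 1)

theorem measurable_eulerFactorLogSubHarmonic : Measurable eulerFactorLogSubHarmonic := by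
  have h1 : Measurable fun n : ℕ ↦ ∑ k ∈ Finset.range (n + 1), eulerFactorLog k :=
    measurable_from_nat
  have h2 : Measurable fun n : ℕ ↦ ∑ k ∈ Finset.range n, 1 / ((k : ℝ) + 1) :=
    measurable_from_nat
  exact (h1.comp (Nat.measurable_floor.comp Real.measurable_exp)).sub
    (h2.comp Nat.measurable_floor)

theorem tendsto_eulerFactorLogSubHarmonic {D : ℝ}
    (hD : Tendsto (fun n : ℕ ↦ ∑ k ∈ Finset.range n, eulerFactorLog k - Real.log (Real.log n))
      atTop (nhds D)) :
    Tendsto eulerFactorLogSubHarmonic atTop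
      (nhds (D - Real.eulerMascheroniConstant)) := by
  have hfl : Tendsto (fun u : ℝ ↦ ⌊Real.exp u⌋₊ + 1) atTop atTop :=
    (tendsto_add_atTop_nat 1).comp (tendsto_nat_floor_atTop.comp Real.tendsto_exp_atTop)
  have h1 := hD.comp hfl
  have h2 : Tendsto (fun u : ℝ ↦ Real.log (⌊Real.exp u⌋₊ + 1 : ℕ) / u) atTop (nhds 1) := by
    refine tendsto_of_tendsto_of_tendsto_of_le_of_le' (g := fun _ ↦ 1) (h := fun u ↦ 1 + 1 / u)
      tendsto_const_nhds ?_ ?_ ?_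
    · simpa using (tendsto_const_nhds (x := (1 : ℝ))).add (tendsto_id.const_div_atTop (1 : ℝ))
    · filter_upwards [eventually_gt_atTop 0] with u hu
      rw [one_le_div hu, Real.le_log_iff_exp_le (by positivity)]
      exact_mod_cast (Nat.lt_floor_add_one (Real.exp u)).le
    · filter_upwards [eventually_gt_atTop 0] with u hu
      rw [one_add_div hu.ne']
      gcongr
      rw [Real.log_le_iff_le_exp (by positivity), Real.exp_add]
      have h3 := Nat.floor_le (Real.exp_nonneg u)
      have h4 := Real.one_le_exp hu.le
      have h5 : (2 : ℝ) ≤ Real.exp 1 := by linarith [Real.exp_one_gt_d9]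
      push_cast
      nlinarith
  have h3 := (Real.tendsto_harmonic_sub_log).comp (tendsto_nat_floor_atTop (α := ℝ))
  have h4 := (tendsto_nat_floor_div_atTop (R := ℝ)).log one_ne_zero
  have h := (h1.add (h2.log one_ne_zero)).sub (h3.add h4)
  rw [Real.log_one, add_zero, add_zero] at h
  refine h.congr' ?_
  filter_upwards [eventually_ge_atTop 1] with u hu
  have hu0 : u ≠ 0 := by linarith
  have hf : (⌊u⌋₊ : ℝ) ≠ 0 := by
    have := Nat.floor_pos.2 hu
    positivity
  have hl : Real.log (⌊Real.exp u⌋₊ + 1 : ℕ) ≠ 0 := by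
    have : 0 < ⌊Real.exp u⌋₊ := Nat.floor_pos.2 (Real.one_le_exp (by linarith))
    exact (Real.log_pos (mod_cast (by omega))).ne'
  rw [Real.log_div hl hu0, Real.log_div hf hu0, eulerFactorLogSubHarmonic]
  simp only [Function.comp_apply, harmonic]
  push_cast
  simp only [one_div]
  ring

theorem exists_abs_eulerFactorLogSubHarmonic_le {E : ℝ}
    (hE : Tendsto eulerFactorLogSubHarmonic atTop (nhds E)) :
    ∃ B, ∀ u, 0 ≤ u → |eulerFactorLogSubHarmonic u| ≤ B := by
  obtain ⟨T, hT⟩ := eventually_atTop.1 (hE.abs.eventually (gt_mem_nhds (lt_add_one |E|)))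
  set X := ∑ k ∈ Finset.range (⌊Real.exp T⌋₊ + 1), eulerFactorLog k
  set Y := ∑ k ∈ Finset.range ⌊T⌋₊, 1 / ((k : ℝ) + 1)
  refine ⟨max (|E| + 1) (X + Y), fun u _ ↦ ?_⟩
  rcases le_total T u with h | h
  · exact (hT u h).le.trans (le_max_left _ _)
  · refine le_trans ?_ (le_max_right _ _)
    have hX : ∑ k ∈ Finset.range (⌊Real.exp u⌋₊ + 1), eulerFactorLog k ≤ X :=
      Finset.sum_le_sum_of_subset_of_nonneg (Finset.range_mono (by gcongr))
        fun _ _ _ ↦ eulerFactorLog_nonneg _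
    have hY : ∑ k ∈ Finset.range ⌊u⌋₊, 1 / ((k : ℝ) + 1) ≤ Y :=
      Finset.sum_le_sum_of_subset_of_nonneg (Finset.range_mono (by gcongr))
        fun _ _ _ ↦ by positivity
    have hX0 : 0 ≤ ∑ k ∈ Finset.range (⌊Real.exp u⌋₊ + 1), eulerFactorLog k :=
      Finset.sum_nonneg fun _ _ ↦ eulerFactorLog_nonneg _
    have hY0 : 0 ≤ ∑ k ∈ Finset.range ⌊u⌋₊, 1 / ((k : ℝ) + 1) :=
      Finset.sum_nonneg fun _ _ ↦ by positivity
    rw [eulerFactorLogSubHarmonic, abs_le]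
    constructor <;> linarith

theorem summable_eulerFactorLog_mul_exp {s : ℝ} (hs : 0 < s) :
    Summable fun n : ℕ ↦ eulerFactorLog n * Real.exp (-(s * Real.log n)) := by
  refine .of_nonneg_of_le (fun n ↦ mul_nonneg (eulerFactorLog_nonneg n) (Real.exp_nonneg _))
    (fun n ↦ ?_) ((summable_exp_neg_mul_log_mul_one_div hs).mul_left 2)
  have h := (zetaFactorLog_mem_Icc le_rfl n).2
  rw [zetaFactorLog_zero, zero_mul, neg_zero, Real.exp_zero, one_mul] at h
  calc _ ≤ 2 * (1 / (n : ℝ)) * Real.exp (-(s * Real.log n)) := by gcongr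
    _ = _ := by ring

theorem hasSum_exp_neg_mul_div {s : ℝ} (hs : 0 < s) :
    HasSum (fun n : ℕ ↦ 1 / ((n : ℝ) + 1) * Real.exp (-(s * (n + 1))))
      (-Real.log (1 - Real.exp (-s))) := by
  have h : |Real.exp (-s)| < 1 := by
    rw [abs_of_pos (Real.exp_pos _)]
    exact Real.exp_lt_one_iff.2 (by linarith)
  refine (Real.hasSum_pow_div_log_of_abs_lt_one h).congr_fun fun n ↦ ?_
  rw [← Real.exp_nat_mul]
  push_cast
  ring_nf

theorem integral_eulerFactorLogSubHarmonic {s : ℝ} (hs : 0 < s) :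
    ∫ v in Set.Ioi 0, eulerFactorLogSubHarmonic (v / s) * Real.exp (-v) =
      ∑' n : ℕ, eulerFactorLog n * Real.exp (-(s * Real.log n)) +
        Real.log (1 - Real.exp (-s)) := by
  have h1 := hasSum_mul_exp_neg_sub (c := eulerFactorLog) (d := fun n ↦ 1 / ((n : ℝ) + 1))
    (l := fun n ↦ s * Real.log n) (m := fun n ↦ s * (n + 1))
    (f := fun v ↦ ∑ k ∈ Finset.range (⌊Real.exp (v / s)⌋₊ + 1), eulerFactorLog k)
    (h := fun v ↦ ∑ k ∈ Finset.range ⌊v / s⌋₊, 1 / ((k : ℝ) + 1))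
    (fun n ↦ mul_nonneg hs.le (Real.log_natCast_nonneg n)) (fun n ↦ by positivity)
    ((summable_eulerFactorLog_mul_exp hs).congr fun n ↦ by
      rw [abs_of_nonneg (eulerFactorLog_nonneg n)])
    ((hasSum_exp_neg_mul_div hs).summable.congr fun n ↦ by
      rw [abs_of_nonneg (by positivity)]) (fun v hv ↦ ?_) fun v hv ↦ ?_
  · have h2 := (summable_eulerFactorLog_mul_exp hs).hasSum.sub (hasSum_exp_neg_mul_div hs)
    rw [sub_neg_eq_add] at h2
    exact h1.unique h2
  · have hmem (n : ℕ) (hn : n ≠ 0) :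
        n ∈ Finset.range (⌊Real.exp (v / s)⌋₊ + 1) ↔ s * Real.log n ≤ v := by
      rw [Finset.mem_range, Nat.lt_succ_iff, Nat.le_floor_iff (Real.exp_nonneg _),
        ← Real.log_le_iff_le_exp (by positivity), le_div_iff₀' hs]
    rw [Finset.sum_congr rfl (g := fun n : ℕ ↦ if s * Real.log n ≤ v then eulerFactorLog n else 0)]
    · refine hasSum_sum_of_ne_finset_zero fun n hn ↦ ?_
      have hn0 : n ≠ 0 := by
        rintro rfl
        exact hn (by simp)
      exact if_neg (mt (hmem n hn0).2 hn)
    · intro n hn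
      rcases eq_or_ne n 0 with rfl | hn0
      · simp [hv.le]
      · rw [if_pos ((hmem n hn0).1 hn)]
  · have hmem (n : ℕ) : n ∈ Finset.range ⌊v / s⌋₊ ↔ s * (n + 1) ≤ v := by
      rw [Finset.mem_range, ← Nat.succ_le_iff, Nat.le_floor_iff (by positivity), le_div_iff₀' hs,
        Nat.succ_eq_add_one]
      push_cast
      rfl
    rw [Finset.sum_congr rfl (g := fun n : ℕ ↦ if s * (n + 1) ≤ v then 1 / ((n : ℝ) + 1) else 0)]
    · exact hasSum_sum_of_ne_finset_zero fun n hn ↦ if_neg (mt (hmem n).2 hn)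
    · exact fun n hn ↦ (if_pos ((hmem n).1 hn)).symm

theorem eq_zero_of_tendsto_eulerFactorLogSubHarmonic {E : ℝ}
    (hE : Tendsto eulerFactorLogSubHarmonic atTop (nhds E)) : E = 0 := by
  obtain ⟨B, hB⟩ := exists_abs_eulerFactorLogSubHarmonic_le hE
  have h1 := tendsto_integral_comp_div_mul_exp_neg measurable_eulerFactorLogSubHarmonic hB hE
  have h2 := (tendsto_tsum_zetaFactorLog_add_log.sub tendsto_tsum_zetaFactorLog_sub).add
    tendsto_log_one_sub_exp_neg_sub_log
  rw [sub_zero, add_zero] at h2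
  refine tendsto_nhds_unique h1 (h2.congr' ?_)
  filter_upwards [self_mem_nhdsWithin] with s hs
  rw [integral_eulerFactorLogSubHarmonic hs,
    (summable_zetaFactorLog hs).tsum_sub (summable_eulerFactorLog_mul_exp hs)]
  ring

/-- Mertens' third theorem, with `log n` replaced by the sum of `log p / (p - 1)`. -/
theorem tendsto_sum_eulerFactorLog_sub_log :
    Tendsto (fun n ↦ ∑ k ∈ Finset.range n, eulerFactorLog k -
      Real.log (∑ k ∈ Finset.range n, primeLogWeight k)) atTop
      (nhds Real.eulerMascheroniConstant) := by
  obtain ⟨D, hD⟩ := exists_tendsto_sum_eulerFactorLog_sub_log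
  have h := eq_zero_of_tendsto_eulerFactorLogSubHarmonic
    (tendsto_eulerFactorLogSubHarmonic (tendsto_sum_eulerFactorLog_sub_log_log hD))
  rwa [← sub_eq_zero.1 h]

theorem gammaP_primesBelow (n : ℕ) :
    gammaP n.primesBelow = Real.exp (-∑ k ∈ Finset.range n, eulerFactorLog k) *
      (Real.eulerMascheroniConstant + ∑ k ∈ Finset.range n, primeLogWeight k) := by
  rw [gammaP, Nat.primesBelow]
  congr 2
  · rw [← Finset.sum_neg_distrib, Real.exp_sum, Finset.prod_filter]
    refine Finset.prod_congr rfl fun k _ ↦ ?_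
    unfold eulerFactorLog
    split_ifs with h
    · have h1 : (1 : ℝ) < k := mod_cast h.one_lt
      have h2 : 1 / (k : ℝ) < 1 := by rwa [div_lt_one (by linarith)]
      rw [neg_neg, Real.exp_log (by linarith)]
    · simp
  · rw [Finset.sum_filter]
    rfl

theorem gammaR_eq (r : ℕ) : gammaR r = gammaP (Nat.nth Nat.Prime r).primesBelow := by
  rw [gammaR]
  congr 1
  ext p
  simp only [Finset.mem_image, Finset.mem_range, Nat.mem_primesBelow]
  constructor
  · rintro ⟨i, hi, rfl⟩
    exact ⟨Nat.nth_strictMono Nat.infinite_setOfPred_prime hi, Nat.prime_nth_prime i⟩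
  · rintro ⟨hp, hp'⟩
    rw [← Nat.nth_count hp'] at hp ⊢
    exact ⟨_, (Nat.nth_strictMono Nat.infinite_setOfPred_prime).lt_iff_lt.1 hp, rfl⟩

theorem tendsto_gammaP_primesBelow :
    Tendsto (fun n : ℕ ↦ gammaP n.primesBelow) atTop
      (nhds (Real.exp (-Real.eulerMascheroniConstant))) := by
  have h1 := (Real.continuous_exp.tendsto _).comp tendsto_sum_eulerFactorLog_sub_log.neg
  have h2 := (tendsto_sum_primeLogWeight.const_div_atTop Real.eulerMascheroniConstant).add_const 1
  have h := h1.mul h2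
  rw [zero_add, mul_one] at h
  refine h.congr' ?_
  filter_upwards [eventually_ge_atTop 3] with n hn
  have hS := sum_primeLogWeight_pos hn
  rw [gammaP_primesBelow, Function.comp_apply, neg_sub, sub_eq_neg_add, Real.exp_add,
    Real.exp_log hS]
  field_simp

/-- `γ_r → e^{-γ}` as `r → ∞`. -/
theorem gammaR_tendsto :
    Filter.Tendsto gammaR Filter.atTop
      (nhds (Real.exp (-Real.eulerMascheroniConstant))) := by
  refine (tendsto_gammaP_primesBelow.comp
    (Nat.nth_strictMono Nat.infinite_setOfPred_prime).tendsto_atTop).congr fun r ↦ ?_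
  rw [gammaR_eq, Function.comp_apply]
end
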